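/- Let R be a right Noetherian ring, C a finitely generated cotilting right R-module, and S = End(C_R) its endomorphism ring, so that C is an (S,R)-bimodule. Assume that S is left coherent, that C is finitely generated as a left S-module, and that C is tensorly faithful. Then for every right R-module M the following are equivalent: (i) M belongs to the Bass class ℬ_C(R); (ii) the Gorenstein injective dimension Gid(M) is finite. -/

import Mathlib

open Function MulOpposite

universe u

noncomputable section

/-! ## Chain conditions -/

/-- A ring is right coherent if every finitely generated right ideal is finitely presented. -/
def IsRightCoherentRing (R : Type u) [Ring R] : Prop :=
  ∀ I : Submodule Rᵐᵒᵖ R, I.FG → Module.FinitePresentation Rᵐᵒᵖ I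

/-- A ring is left coherent if every finitely generated left ideal is finitely presented. -/
def IsLeftCoherentRing (S : Type u) [Ring S] : Prop :=
  ∀ I : Submodule S S, I.FG → Module.FinitePresentation S I

/-- A ring is right Noetherian if every right ideal is finitely generated. -/
def IsRightNoetherianRing (R : Type u) [Ring R] : Prop :=
  ∀ I : Submodule Rᵐᵒᵖ R, I.FG

/-! ## The tensor product `N ⊗_S T` of a right `S`-module `N` with a left `S`-module `T` -/

section MTensor

variable (S : Type u) [Ring S]
variable (N : Type u) [AddCommGroup N] [Module Sᵐᵒᵖ N]
variable (T : Type u) [AddCommGroup T] [Module S T]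

/-- The subgroup of balancing relations defining `N ⊗_S T` as a quotient of `T ⊗_ℤ N`. -/
def mtRel : AddSubgroup (TensorProduct ℤ T N) :=
  AddSubgroup.closure
    {x | ∃ (s : S) (t : T) (n : N), x = (s • t) ⊗ₜ[ℤ] n - t ⊗ₜ[ℤ] (op s • n)}

/-- `MTensor S N T` is the tensor product `N ⊗_S T` of a right `S`-module `N` with a left
`S`-module `T`, realized as a quotient of `T ⊗_ℤ N`. -/
def MTensor : Type u := TensorProduct ℤ T N ⧸ mtRel S N T

instance : AddCommGroup (MTensor S N T) :=
  inferInstanceAs (AddCommGroup (TensorProduct ℤ T N ⧸ mtRel S N T))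

variable {S N T}

/-- `MTensor.mk n t` is the element `n ⊗ t` of `N ⊗_S T`. -/
def MTensor.mk (n : N) (t : T) : MTensor S N T := QuotientAddGroup.mk (t ⊗ₜ[ℤ] n)

section Map

variable {N' : Type u} [AddCommGroup N'] [Module Sᵐᵒᵖ N']

/-- Functoriality of `N ⊗_S T` in the right `S`-module variable `N`. -/
def MTensor.map (g : N →ₗ[Sᵐᵒᵖ] N') : MTensor S N T →+ MTensor S N' T :=
  QuotientAddGroup.map _ _
    (LinearMap.lTensor T g.toAddMonoidHom.toIntLinearMap).toAddMonoidHom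
    (by
      refine (AddSubgroup.closure_le _).2 ?_
      rintro x ⟨s, t, n, rfl⟩
      simp only [SetLike.mem_coe, AddSubgroup.mem_comap, LinearMap.toAddMonoidHom_coe,
        map_sub, LinearMap.lTensor_tmul, AddMonoidHom.coe_toIntLinearMap,
        LinearMap.toAddMonoidHom_coe, map_smul]
      exact AddSubgroup.subset_closure ⟨s, t, g n, rfl⟩)

end Map

section LMap

variable {T' : Type u} [AddCommGroup T'] [Module S T']

/-- Functoriality of `N ⊗_S T` in the left `S`-module variable `T`. -/
def MTensor.lmap (h : T →ₗ[S] T') : MTensor S N T →+ MTensor S N T' :=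
  QuotientAddGroup.map _ _
    (LinearMap.rTensor N h.toAddMonoidHom.toIntLinearMap).toAddMonoidHom
    (by
      refine (AddSubgroup.closure_le _).2 ?_
      rintro x ⟨s, t, n, rfl⟩
      simp only [SetLike.mem_coe, AddSubgroup.mem_comap, LinearMap.toAddMonoidHom_coe,
        map_sub, LinearMap.rTensor_tmul, AddMonoidHom.coe_toIntLinearMap, map_smul]
      exact AddSubgroup.subset_closure ⟨s, h t, n, rfl⟩)

end LMap

section Bimod

variable (R : Type u) [Ring R] [Module Rᵐᵒᵖ T] [SMulCommClass S Rᵐᵒᵖ T]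

instance MTensor.instSMul : SMul Rᵐᵒᵖ (MTensor S N T) :=
  ⟨fun ρ =>
    QuotientAddGroup.map _ _ (DistribMulAction.toAddMonoidHom (TensorProduct ℤ T N) ρ)
      (by
        refine (AddSubgroup.closure_le _).2 ?_
        rintro x ⟨s, t, n, rfl⟩
        simp only [SetLike.mem_coe, AddSubgroup.mem_comap,
          DistribMulAction.toAddMonoidHom_apply, smul_sub, TensorProduct.smul_tmul']
        exact AddSubgroup.subset_closure ⟨s, ρ • t, n, by rw [smul_comm s ρ t]⟩)⟩

instance MTensor.instModule : Module Rᵐᵒᵖ (MTensor S N T) :=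
  Function.Surjective.module Rᵐᵒᵖ (QuotientAddGroup.mk' (mtRel S N T))
    (QuotientAddGroup.mk'_surjective _) (fun _ _ => rfl)

theorem MTensor.smul_mk (ρ : Rᵐᵒᵖ) (n : N) (t : T) :
    ρ • (MTensor.mk n t : MTensor S N T) = MTensor.mk n (ρ • t) := by
  show QuotientAddGroup.mk (ρ • (t ⊗ₜ[ℤ] n)) = QuotientAddGroup.mk ((ρ • t) ⊗ₜ[ℤ] n)
  rw [TensorProduct.smul_tmul']

theorem MTensor.mk_add_right (n : N) (t t' : T) :
    (MTensor.mk n (t + t') : MTensor S N T) = MTensor.mk n t + MTensor.mk n t' := by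
  show QuotientAddGroup.mk _ = _
  rw [TensorProduct.add_tmul]
  rfl

/-- The natural map `θ_N : N → Hom_R(T, N ⊗_S T)`, `n ↦ (t ↦ n ⊗ t)`. -/
def MTensor.theta (n : N) : T →ₗ[Rᵐᵒᵖ] MTensor S N T where
  toFun t := MTensor.mk n t
  map_add' t t' := MTensor.mk_add_right n t t'
  map_smul' ρ t := (MTensor.smul_mk R ρ n t).symm

variable (S T N) in
/-- The natural map `θ_N : N → Hom_R(T, N ⊗_S T)` as a function. -/
def MTensor.thetaFun : N → (T →ₗ[Rᵐᵒᵖ] MTensor S N T) := fun n => MTensor.theta R n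

end Bimod

end MTensor

/-! ## The right `S`-module structure on `Hom_A(T, M)` induced by a left `S`-action on `T` -/

section HomModule

variable {B A : Type u} [Ring B] [Ring A]
variable {T : Type u} [AddCommGroup T] [Module A T] [Module B T] [SMulCommClass B A T]
variable {M : Type u} [AddCommGroup M] [Module A M]

instance homDomSMul : SMul Bᵐᵒᵖ (T →ₗ[A] M) :=
  ⟨fun b f =>
    { toFun := fun t => f (b.unop • t)
      map_add' := fun t t' => by
        show f (b.unop • (t + t')) = f (b.unop • t) + f (b.unop • t')
        rw [smul_add, map_add]
      map_smul' := fun a t => by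
        show f (b.unop • a • t) = a • f (b.unop • t)
        rw [smul_comm b.unop a t, map_smul] }⟩

@[simp] theorem homDomSMul_apply (b : Bᵐᵒᵖ) (f : T →ₗ[A] M) (t : T) :
    (b • f) t = f (b.unop • t) := rfl

instance homDomModule : Module Bᵐᵒᵖ (T →ₗ[A] M) where
  one_smul f := LinearMap.ext fun t => by simp
  mul_smul b b' f := LinearMap.ext fun t => by simp [mul_smul]
  smul_zero b := LinearMap.ext fun t => rfl
  smul_add b f g := LinearMap.ext fun t => rfl
  add_smul b b' f := LinearMap.ext fun t => by simp [add_smul]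
  zero_smul f := LinearMap.ext fun t => by simp

end HomModule

/-! ## The evaluation map `ν_M : Hom_R(T, M) ⊗_S T → M` -/

section Nu

variable (S R : Type u) [Ring S] [Ring R]
variable (T : Type u) [AddCommGroup T] [Module S T] [Module Rᵐᵒᵖ T] [SMulCommClass S Rᵐᵒᵖ T]
variable (M : Type u) [AddCommGroup M] [Module Rᵐᵒᵖ M]

/-- The evaluation map `ν_M : Hom_R(T, M) ⊗_S T → M`, `f ⊗ t ↦ f t`. -/
def MTensor.nuFun : MTensor S (T →ₗ[Rᵐᵒᵖ] M) T →+ M :=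
  QuotientAddGroup.lift _
    (TensorProduct.liftAddHom
      { toFun := fun t =>
          { toFun := fun f : T →ₗ[Rᵐᵒᵖ] M => f t
            map_zero' := rfl
            map_add' := fun f g => rfl }
        map_zero' := AddMonoidHom.ext fun f => f.map_zero
        map_add' := fun t t' => AddMonoidHom.ext fun f => f.map_add t t' }
      (fun z t f => by
        show f (z • t) = (z • f) t
        rw [map_zsmul, LinearMap.smul_apply]))
    (by
      refine (AddSubgroup.closure_le _).2 ?_
      rintro x ⟨s, t, f, rfl⟩
      simp only [SetLike.mem_coe, AddMonoidHom.mem_ker, map_sub,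
        TensorProduct.liftAddHom_tmul, AddMonoidHom.coe_mk, ZeroHom.coe_mk]
      show f (s • t) - (op s • f) t = 0
      rw [homDomSMul_apply]
      simp)

end Nu


/-! ## Resolutions and derived-functor vanishing -/

/-- The data of a nonnegatively graded chain complex `⋯ → P 1 → P 0 → X` of `A`-modules. -/
structure ResolutionData (A : Type u) [Ring A] (X : Type u) [AddCommGroup X] [Module A X] :
    Type (u + 1) where
  P : ℕ → Type u
  [instAdd : ∀ n, AddCommGroup (P n)]
  [instMod : ∀ n, Module A (P n)]
  d : ∀ n, P (n + 1) →ₗ[A] P n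
  ε : P 0 →ₗ[A] X

attribute [instance] ResolutionData.instAdd ResolutionData.instMod

/-- The property of being a projective resolution. -/
structure ResolutionData.IsProjResolution {A : Type u} [Ring A] {X : Type u} [AddCommGroup X]
    [Module A X] (Q : ResolutionData A X) : Prop where
  proj : ∀ n, Module.Projective A (Q.P n)
  surj : Function.Surjective Q.ε
  exact0 : Function.Exact (Q.d 0) Q.ε
  exactSucc : ∀ n, Function.Exact (Q.d (n + 1)) (Q.d n)

/-- `X` has a resolution by finitely generated projective `A`-modules. -/
def HasFGProjResolution (A : Type u) [Ring A] (X : Type u) [AddCommGroup X] [Module A X] : Prop :=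
  ∃ Q : ResolutionData A X, Q.IsProjResolution ∧ ∀ n, Module.Finite A (Q.P n)

/-- `Ext^i_A(X, Y) = 0` for all `i ≥ 1`: some (equivalently, any) projective resolution of `X`
has `Hom_A(-, Y)`-complex exact at all positive degrees. -/
def ExtVanishAll (A : Type u) [Ring A] (X Y : Type u) [AddCommGroup X] [Module A X]
    [AddCommGroup Y] [Module A Y] : Prop :=
  ∃ Q : ResolutionData A X, Q.IsProjResolution ∧
    ∀ j : ℕ, Function.Exact
      (fun f : Q.P j →ₗ[A] Y => f.comp (Q.d j))
      (fun f : Q.P (j + 1) →ₗ[A] Y => f.comp (Q.d (j + 1)))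

/-- `Ext^1_A(X, Y) = 0`: every short exact sequence `0 → Y → E → X → 0` splits. -/
def Ext1Vanishes (A : Type u) [Ring A] (X Y : Type u) [AddCommGroup X] [Module A X]
    [AddCommGroup Y] [Module A Y] : Prop :=
  ∀ (E : Type u) [AddCommGroup E] [Module A E] (i : Y →ₗ[A] E) (p : E →ₗ[A] X),
    Function.Injective i → Function.Surjective p → Function.Exact i p →
      ∃ s : X →ₗ[A] E, p.comp s = LinearMap.id

/-- `Tor^S_i(N, T) = 0` for all `i ≥ 1`: some (equivalently, any) projective resolution of the
right `S`-module `N` stays exact in positive degrees after applying `- ⊗_S T`. -/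
def TorVanishAll (S : Type u) [Ring S] (N : Type u) [AddCommGroup N] [Module Sᵐᵒᵖ N]
    (T : Type u) [AddCommGroup T] [Module S T] : Prop :=
  ∃ Q : ResolutionData Sᵐᵒᵖ N, Q.IsProjResolution ∧
    ∀ j : ℕ, Function.Exact
      (⇑(MTensor.map (T := T) (Q.d (j + 1))))
      (⇑(MTensor.map (T := T) (Q.d j)))

/-! ## Homological dimensions -/

/-- A surjection onto `M` from some module. -/
structure EpiOnto (A : Type u) [Ring A] (M : ModuleCat.{u} A) : Type (u + 1) where
  P : ModuleCat.{u} A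
  f : P →ₗ[A] M
  surj : Function.Surjective f

/-- An injection of `M` into some module. -/
structure MonoInto (A : Type u) [Ring A] (M : ModuleCat.{u} A) : Type (u + 1) where
  E : ModuleCat.{u} A
  f : M →ₗ[A] E
  inj : Function.Injective f

/-- `HasClassResolution A 𝒞 n M` says that there is an exact sequence
`0 → C_n → ⋯ → C_0 → M → 0` with all `C_i` in the class `𝒞`. -/
def HasClassResolution (A : Type u) [Ring A] (C : ModuleCat.{u} A → Prop) :
    ℕ → ModuleCat.{u} A → Prop
  | 0, M => C M
  | n + 1, M => ∃ e : EpiOnto A M, C e.P ∧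
      HasClassResolution A C n (ModuleCat.of A (LinearMap.ker e.f))

/-- `HasClassCoresolution A 𝒞 n M` says that there is an exact sequence
`0 → M → C^0 → ⋯ → C^n → 0` with all `C^i` in the class `𝒞`. -/
def HasClassCoresolution (A : Type u) [Ring A] (C : ModuleCat.{u} A → Prop) :
    ℕ → ModuleCat.{u} A → Prop
  | 0, M => C M
  | n + 1, M => ∃ m : MonoInto A M, C m.E ∧
      HasClassCoresolution A C n (ModuleCat.of A ((↥m.E) ⧸ LinearMap.range m.f))

/-- The projective dimension of `M` is at most `n`. -/
def ProjDimLE (A : Type u) [Ring A] (M : Type u) [AddCommGroup M] [Module A M] (n : ℕ) : Prop :=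
  HasClassResolution A (fun P => Module.Projective A P) n (ModuleCat.of A M)

/-- The injective dimension of `M` is at most `n`. -/
def InjDimLE (A : Type u) [Ring A] (M : Type u) [AddCommGroup M] [Module A M] (n : ℕ) : Prop :=
  HasClassCoresolution A (fun E => Module.Injective A E) n (ModuleCat.of A M)

/-- A right `S`-module `N` is flat if `N ⊗_S -` preserves injections of left `S`-modules. -/
def IsFlatRightModule (S : Type u) [Ring S] (N : Type u) [AddCommGroup N] [Module Sᵐᵒᵖ N] :
    Prop :=
  ∀ (X Y : Type u) [AddCommGroup X] [Module S X] [AddCommGroup Y] [Module S Y]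
    (g : X →ₗ[S] Y), Function.Injective g →
      Function.Injective (MTensor.lmap (N := N) g)

/-- The flat dimension of the right `S`-module `N` is at most `n`. -/
def FlatDimLE (S : Type u) [Ring S] (N : Type u) [AddCommGroup N] [Module Sᵐᵒᵖ N] (n : ℕ) :
    Prop :=
  HasClassResolution Sᵐᵒᵖ (fun P => IsFlatRightModule S P) n (ModuleCat.of Sᵐᵒᵖ N)

/-! ## Gorenstein homological algebra -/

/-- The data of a `ℤ`-indexed complex of `A`-modules. -/
structure ZComplex (A : Type u) [Ring A] : Type (u + 1) where
  P : ℤ → Type u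
  [instAdd : ∀ i, AddCommGroup (P i)]
  [instMod : ∀ i, Module A (P i)]
  d : ∀ i, P i →ₗ[A] P (i + 1)

attribute [instance] ZComplex.instAdd ZComplex.instMod

/-- Exactness of a `ℤ`-indexed complex. -/
def ZComplex.IsExact {A : Type u} [Ring A] (C : ZComplex A) : Prop :=
  ∀ i, Function.Exact (C.d i) (C.d (i + 1))

/-- A module is Gorenstein projective if it is a kernel of a totally acyclic complex of
projective modules. -/
def IsGorensteinProjective (A : Type u) [Ring A] (N : Type u) [AddCommGroup N] [Module A N] :
    Prop :=
  ∃ C : ZComplex A, (∀ i, Module.Projective A (C.P i)) ∧ C.IsExact ∧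
    (∀ (Q : Type u) [AddCommGroup Q] [Module A Q], Module.Projective A Q →
      ∀ i, Function.Exact
        (fun f : C.P (i + 1 + 1) →ₗ[A] Q => f.comp (C.d (i + 1)))
        (fun f : C.P (i + 1) →ₗ[A] Q => f.comp (C.d i))) ∧
    Nonempty (N ≃ₗ[A] LinearMap.ker (C.d 0))

/-- A module is Gorenstein injective if it is a kernel of a totally acyclic complex of
injective modules. -/
def IsGorensteinInjective (A : Type u) [Ring A] (M : Type u) [AddCommGroup M] [Module A M] :
    Prop :=
  ∃ C : ZComplex A, (∀ i, Module.Injective A (C.P i)) ∧ C.IsExact ∧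
    (∀ (I : Type u) [AddCommGroup I] [Module A I], Module.Injective A I →
      ∀ i, Function.Exact
        (fun f : I →ₗ[A] C.P i => (C.d i).comp f)
        (fun f : I →ₗ[A] C.P (i + 1) => (C.d (i + 1)).comp f)) ∧
    Nonempty (M ≃ₗ[A] LinearMap.ker (C.d 0))

/-- A right `S`-module is Gorenstein flat if it is a kernel of a complex of flat right
`S`-modules which stays exact after tensoring with any injective left `S`-module. -/
def IsGorensteinFlat (S : Type u) [Ring S] (N : Type u) [AddCommGroup N] [Module Sᵐᵒᵖ N] :
    Prop :=
  ∃ C : ZComplex Sᵐᵒᵖ, (∀ i, IsFlatRightModule S (C.P i)) ∧ C.IsExact ∧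
    (∀ (I : Type u) [AddCommGroup I] [Module S I], Module.Injective S I →
      ∀ i, Function.Exact
        (⇑(MTensor.map (T := I) (C.d i)))
        (⇑(MTensor.map (T := I) (C.d (i + 1))))) ∧
    Nonempty (N ≃ₗ[Sᵐᵒᵖ] LinearMap.ker (C.d 0))

/-- The Gorenstein projective dimension of `N` is at most `n`. -/
def GpdLE (A : Type u) [Ring A] (N : Type u) [AddCommGroup N] [Module A N] (n : ℕ) : Prop :=
  HasClassResolution A (fun P => IsGorensteinProjective A P) n (ModuleCat.of A N)

/-- The Gorenstein flat dimension of the right `S`-module `N` is at most `n`. -/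
def GfdLE (S : Type u) [Ring S] (N : Type u) [AddCommGroup N] [Module Sᵐᵒᵖ N] (n : ℕ) : Prop :=
  HasClassResolution Sᵐᵒᵖ (fun P => IsGorensteinFlat S P) n (ModuleCat.of Sᵐᵒᵖ N)

/-- The Gorenstein injective dimension of `M` is at most `n`. -/
def GidLE (A : Type u) [Ring A] (M : Type u) [AddCommGroup M] [Module A M] (n : ℕ) : Prop :=
  HasClassCoresolution A (fun E => IsGorensteinInjective A E) n (ModuleCat.of A M)

/-! ## Module classes `Prod(C)`, `Add(C)`, `add(C)` and (co)generators -/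

/-- `M` is a retract (equivalently, a direct summand up to isomorphism) of `P`. -/
def IsRetractOf (A : Type u) [Ring A] (M P : Type u) [AddCommGroup M] [Module A M]
    [AddCommGroup P] [Module A P] : Prop :=
  ∃ (f : M →ₗ[A] P) (g : P →ₗ[A] M), g.comp f = LinearMap.id

/-- `Prod(C)`: direct summands of direct products of copies of `C`. -/
def InProdClass (A : Type u) [Ring A] (C : Type u) [AddCommGroup C] [Module A C]
    (M : ModuleCat.{u} A) : Prop :=
  ∃ I : Type u, IsRetractOf A M (I → C)

/-- `Add(C)`: direct summands of direct sums of copies of `C`. -/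
def InAddClass (A : Type u) [Ring A] (C : Type u) [AddCommGroup C] [Module A C]
    (M : ModuleCat.{u} A) : Prop :=
  ∃ I : Type u, IsRetractOf A M (I →₀ C)

/-- `add(C)`: direct summands of finite direct sums of copies of `C`. -/
def InFinAddClass (A : Type u) [Ring A] (C : Type u) [AddCommGroup C] [Module A C]
    (M : ModuleCat.{u} A) : Prop :=
  ∃ k : ℕ, IsRetractOf A M (Fin k → C)

/-- `Q` is an injective cogenerator: `Q` is injective and every module embeds into a direct
product of copies of `Q`. -/
def IsInjectiveCogenerator (A : Type u) [Ring A] (Q : Type u) [AddCommGroup Q] [Module A Q] :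
    Prop :=
  Module.Injective A Q ∧
    ∀ (M : Type u) [AddCommGroup M] [Module A M],
      ∃ (I : Type u) (f : M →ₗ[A] (I → Q)), Function.Injective f

/-- `E` is the minimal injective cogenerator: it is an injective cogenerator which is a direct
summand of every injective cogenerator. -/
def IsMinimalInjectiveCogenerator (A : Type u) [Ring A] (E : Type u) [AddCommGroup E]
    [Module A E] : Prop :=
  IsInjectiveCogenerator A E ∧
    ∀ (Q : Type u) [AddCommGroup Q] [Module A Q],
      IsInjectiveCogenerator A Q → IsRetractOf A E Q

/-! ## Bimodules, homotheties, Wakamatsu tilting bimodules -/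

section Bimodules

variable (S R : Type u) [Ring S] [Ring R]
variable (T : Type u) [AddCommGroup T] [Module S T] [Module Rᵐᵒᵖ T] [SMulCommClass S Rᵐᵒᵖ T]

/-- The natural map `S → End(T_R)` given by the left `S`-action. -/
def leftHomothety : S → (T →ₗ[Rᵐᵒᵖ] T) := fun s =>
  { toFun := fun t => s • t
    map_add' := fun t t' => smul_add s t t'
    map_smul' := fun ρ t => smul_comm s ρ t }

/-- The natural map `R → End(_S T)` given by the right `R`-action. -/
def rightHomothety : R → (T →ₗ[S] T) := fun r =>
  { toFun := fun t => op r • t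
    map_add' := fun t t' => smul_add (op r) t t'
    map_smul' := fun s t => (smul_comm s (op r) t).symm }

/-- A Wakamatsu tilting `(S, R)`-bimodule: `T` admits resolutions by finitely generated
projectives on both sides, the natural maps `S → End(T_R)` and `R → End(_S T)` are
isomorphisms, and `Ext^i(T, T) = 0` on both sides for all `i ≥ 1`. -/
structure IsWakamatsuTilting : Prop where
  fgProjResR : HasFGProjResolution Rᵐᵒᵖ T
  fgProjResS : HasFGProjResolution S T
  bijS : Function.Bijective (leftHomothety S R T)
  bijR : Function.Bijective (rightHomothety S R T)
  extR : ExtVanishAll Rᵐᵒᵖ T T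
  extS : ExtVanishAll S T T

/-- An `(S, R)`-bimodule `T` is tensorly faithful if `T ⊗_R M = 0` implies `M = 0` and
`N ⊗_S T = 0` implies `N = 0`. -/
def IsTensorlyFaithful : Prop :=
  (∀ (M : Type u) [AddCommGroup M] [Module R M],
      Subsingleton (MTensor R T M) → Subsingleton M) ∧
  (∀ (N : Type u) [AddCommGroup N] [Module Sᵐᵒᵖ N],
      Subsingleton (MTensor S N T) → Subsingleton N)

/-- Membership in the Auslander class `𝒜_T(S)`. -/
structure InAuslanderClass (N : Type u) [AddCommGroup N] [Module Sᵐᵒᵖ N] : Prop where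
  torVanish : TorVanishAll S N T
  extVanish : ExtVanishAll Rᵐᵒᵖ T (MTensor S N T)
  thetaBij : Function.Bijective (MTensor.thetaFun S N T R)

/-- Membership in the Bass class `ℬ_T(R)`. -/
structure InBassClass (M : Type u) [AddCommGroup M] [Module Rᵐᵒᵖ M] : Prop where
  extVanish : ExtVanishAll Rᵐᵒᵖ T M
  torVanish : TorVanishAll S (T →ₗ[Rᵐᵒᵖ] M) T
  nuBij : Function.Bijective (MTensor.nuFun S R T M)

end Bimodules

/-! ## Cotilting and tilting modules -/

/-- A cotilting right `R`-module (Hügel–Coelho): finite injective dimension,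
`Ext^{i≥1}_R(Cᴵ, C) = 0` for every index set `I`, and there is a finite exact sequence
`0 → C_r → ⋯ → C_0 → Q → 0` with all `C_i ∈ Prod(C)` and `Q` an injective cogenerator. -/
structure IsCotilting (R : Type u) [Ring R] (C : Type u) [AddCommGroup C] [Module Rᵐᵒᵖ C] :
    Prop where
  finInjDim : ∃ n, InjDimLE Rᵐᵒᵖ C n
  extProdVanish : ∀ I : Type u, ExtVanishAll Rᵐᵒᵖ (I → C) C
  coresolution : ∃ (Q : ModuleCat.{u} Rᵐᵒᵖ) (r : ℕ),
    IsInjectiveCogenerator Rᵐᵒᵖ Q ∧ HasClassResolution Rᵐᵒᵖ (InProdClass Rᵐᵒᵖ C) r Q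

/-- An `n`-tilting right `R`-module (Miyashita). -/
structure IsNTilting (R : Type u) [Ring R] (T : Type u) [AddCommGroup T] [Module Rᵐᵒᵖ T]
    (n : ℕ) : Prop where
  fgProjRes : HasFGProjResolution Rᵐᵒᵖ T
  projDim : ProjDimLE Rᵐᵒᵖ T n
  extVanish : ExtVanishAll Rᵐᵒᵖ T T
  coresolution : HasClassCoresolution Rᵐᵒᵖ (InFinAddClass Rᵐᵒᵖ T) n (ModuleCat.of Rᵐᵒᵖ R)

/-- The data of a coresolution `0 → R → P 0 → P 1 → ⋯` of right `R`-modules. -/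
structure WakamatsuCoresolutionData (R : Type u) [Ring R] : Type (u + 1) where
  P : ℕ → Type u
  [instAdd : ∀ n, AddCommGroup (P n)]
  [instMod : ∀ n, Module Rᵐᵒᵖ (P n)]
  f0 : R →ₗ[Rᵐᵒᵖ] P 0
  d : ∀ n, P n →ₗ[Rᵐᵒᵖ] P (n + 1)

attribute [instance] WakamatsuCoresolutionData.instAdd WakamatsuCoresolutionData.instMod

/-- A Wakamatsu tilting right `R`-module: it admits a resolution by finitely generated
projective right `R`-modules, `Ext^{i≥1}_R(T, T) = 0`, and there is an exact sequence
`0 → R → T^0 → T^1 → ⋯` with each `T^i ∈ add(T)` and `Ext^1_R(Coker f, T) = 0` for every map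
`f` in this sequence. -/
def IsWakamatsuTiltingModule (R : Type u) [Ring R] (T : Type u) [AddCommGroup T]
    [Module Rᵐᵒᵖ T] : Prop :=
  HasFGProjResolution Rᵐᵒᵖ T ∧ ExtVanishAll Rᵐᵒᵖ T T ∧
    ∃ W : WakamatsuCoresolutionData R,
      Function.Injective W.f0 ∧ Function.Exact W.f0 (W.d 0) ∧
      (∀ n, Function.Exact (W.d n) (W.d (n + 1))) ∧
      (∀ n, InFinAddClass Rᵐᵒᵖ T (ModuleCat.of Rᵐᵒᵖ (W.P n))) ∧
      Ext1Vanishes Rᵐᵒᵖ ((W.P 0) ⧸ LinearMap.range W.f0) T ∧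
      (∀ n, Ext1Vanishes Rᵐᵒᵖ ((W.P (n + 1)) ⧸ LinearMap.range (W.d n)) T)

/-!
Since `S` is left coherent, `C` is finite over `S` and `C ⊗_R -` is faithful, every finitely
generated right `R`-module has a left approximation by a finite power of `C`. Iterating from `R`
yields an exact sequence `0 → R → C^{k₀} → C^{k₁} → ⋯` whose cosyzygies `X_j` satisfy
`Ext^{≥1}(X_j, C) = 0`. Applying `Hom_R(-, C)` turns it into a free resolution of `C` over `S`,
which computes `Tor^S(Hom_R(C, M), C)`; hence `M` lies in the Bass class if and only if
`Ext^{≥1}(C, M) = 0` and `Ext^{≥1}(X_j, M) = 0` for all `j`.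

Gorenstein injective modules satisfy these conditions by dimension shifting, and the Bass class
passes to kernels of surjections because `- ⊗_S C` is faithful. Conversely, a module `M` in the
Bass class is the quotient of a sum of copies of `C`, of injective dimension at most
`n = id(C)`, by a submodule in the Bass class. Therefore the `n`-fold cosyzygies of `M` are cycles
of an exact complex of injectives, all of whose cycles are orthogonal to `C`. This orthogonality
passes to the finite powers of `C`, then to the products of copies of `C`, since maps from finitely
generated modules to such products factor through finite powers of `C`, and finally, along the
cotilting resolution of the injective cogenerator, to all injective modules.
-/

/-! ## Short exact sequences and vanishing of `Ext` -/

section ExtVanishing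

open CategoryTheory CategoryTheory.Abelian

variable {A : Type u} [Ring A]
variable {X Y Z W : Type u} [AddCommGroup X] [Module A X] [AddCommGroup Y] [Module A Y]
  [AddCommGroup Z] [Module A Z] [AddCommGroup W] [Module A W]

/-- `0 → X → Y → Z → 0` is a short exact sequence of modules. -/
structure IsSES {X Y Z : Type*} [AddCommGroup X] [Module A X] [AddCommGroup Y] [Module A Y]
    [AddCommGroup Z] [Module A Z] (f : X →ₗ[A] Y) (g : Y →ₗ[A] Z) : Prop where
  inj : Injective f
  surj : Surjective g
  exact : Exact f g

theorem isSES_subtype_ker {g : Y →ₗ[A] Z} (hg : Surjective g) :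
    IsSES (LinearMap.ker g).subtype g :=
  ⟨Subtype.val_injective, hg, LinearMap.exact_subtype_ker_map g⟩

theorem isSES_mkQ_range {f : X →ₗ[A] Y} (hf : Injective f) :
    IsSES f (LinearMap.range f).mkQ :=
  ⟨hf, Submodule.mkQ_surjective _, LinearMap.exact_map_mkQ_range f⟩

theorem IsSES.compLeft {f : X →ₗ[A] Y} {g : Y →ₗ[A] Z} (h : IsSES f g) (ι : Type*) :
    IsSES (f.compLeft ι) (g.compLeft ι) where
  inj := h.inj.comp_left
  surj := h.surj.comp_left
  exact x := by
    refine ⟨fun hx => ?_, by rintro ⟨y, rfl⟩; exact funext fun l => h.exact.apply_apply_eq_zero _⟩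
    choose y hy using fun l => (h.exact (x l)).1 (congrFun hx l)
    exact ⟨y, funext hy⟩

theorem IsSES.shortExact {f : X →ₗ[A] Y} {g : Y →ₗ[A] Z} (h : IsSES f g) :
    (ShortComplex.mk (ModuleCat.ofHom f) (ModuleCat.ofHom g)
      (by ext x; exact h.exact.apply_apply_eq_zero x)).ShortExact where
  exact := (ShortComplex.ShortExact.moduleCat_exact_iff_function_exact _).2 h.exact
  mono_f := (ModuleCat.mono_iff_injective _).2 h.inj
  epi_g := (ModuleCat.epi_iff_surjective _).2 h.surj

theorem exists_injective_embedding (A : Type u) [Ring A] (X : Type u) [AddCommGroup X]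
    [Module A X] : ∃ (I : ModuleCat.{u} A) (f : X →ₗ[A] I),
      Module.Injective A I ∧ Injective f :=
  ⟨_, (Injective.ι (ModuleCat.of A X)).hom,
    (Module.injective_iff_injective_object A _).2 (Injective.injective_under _),
    (ModuleCat.mono_iff_injective _).1 inferInstance⟩

theorem exists_comp_eq_of_surjective {p : X →ₗ[A] Y} (hp : Surjective p) {f : X →ₗ[A] Z}
    (hf : LinearMap.ker p ≤ LinearMap.ker f) : ∃ φ : Y →ₗ[A] Z, φ ∘ₗ p = f := by
  refine ⟨(LinearMap.ker p).liftQ f hf ∘ₗ (p.quotKerEquivOfSurjective hp).symm,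
    LinearMap.ext fun x => ?_⟩
  have hx : (p.quotKerEquivOfSurjective hp).symm (p x) = Submodule.Quotient.mk x :=
    (LinearEquiv.symm_apply_eq _).2 rfl
  simp [hx]

/-- The vanishing of the single group `Ext^n_A(X, Y)`. -/
def ExtZero (A : Type u) [Ring A] (X Y : Type u) [AddCommGroup X] [Module A X] [AddCommGroup Y]
    [Module A Y] (n : ℕ) : Prop :=
  Subsingleton (Ext.{u} (ModuleCat.of A X) (ModuleCat.of A Y) n)

variable {f : X →ₗ[A] Y} {g : Y →ₗ[A] Z} {n : ℕ}

namespace ExtZero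

theorem of_injective [Module.Injective A Y] : ExtZero A X Y (n + 1) := by
  have := Module.injective_object_of_injective_module A Y
  exact subsingleton_of_forall_eq 0 fun e => e.eq_zero_of_injective

theorem of_projective [Module.Projective A X] : ExtZero A X Y (n + 1) := by
  have := (IsProjective.iff_projective (R := A) X).1 ‹_›
  exact subsingleton_of_forall_eq 0 fun e => e.eq_zero_of_projective

theorem retract_right (h : ExtZero A W Y n) {i : X →ₗ[A] Y} {r : Y →ₗ[A] X}
    (hr : r ∘ₗ i = LinearMap.id) : ExtZero A W X n := by
  refine subsingleton_of_forall_eq 0 fun e => ?_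
  have he : e.comp (Ext.mk₀ (ModuleCat.ofHom i)) (add_zero n) = 0 := h.elim _ _
  have hid : ModuleCat.ofHom i ≫ ModuleCat.ofHom r = 𝟙 (ModuleCat.of A X) := by
    rw [← ModuleCat.ofHom_comp, hr, ModuleCat.ofHom_id]
  rw [← Ext.comp_mk₀_id e, ← hid, ← Ext.mk₀_comp_mk₀, ← Ext.comp_assoc_of_third_deg_zero, he,
    Ext.zero_comp]

theorem retract_left (h : ExtZero A Y W n) {i : X →ₗ[A] Y} {r : Y →ₗ[A] X}
    (hr : r ∘ₗ i = LinearMap.id) : ExtZero A X W n := by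
  refine subsingleton_of_forall_eq 0 fun e => ?_
  have he : (Ext.mk₀ (ModuleCat.ofHom r)).comp e (zero_add n) = 0 := h.elim _ _
  have hid : ModuleCat.ofHom i ≫ ModuleCat.ofHom r = 𝟙 (ModuleCat.of A X) := by
    rw [← ModuleCat.ofHom_comp, hr, ModuleCat.ofHom_id]
  rw [← Ext.mk₀_id_comp e, ← hid, ← Ext.mk₀_comp_mk₀_assoc, he, Ext.comp_zero]

theorem congr_right (h : ExtZero A W X n) (e : X ≃ₗ[A] Y) : ExtZero A W Y n :=
  h.retract_right (i := e.symm) (r := e) e.comp_symm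

theorem congr_left (h : ExtZero A X W n) (e : X ≃ₗ[A] Y) : ExtZero A Y W n :=
  h.retract_left (i := e.symm) (r := e) e.comp_symm

end ExtZero

namespace IsSES

theorem covariant₁ (h : IsSES f g) (h₃ : ExtZero A W Z n) (h₂ : ExtZero A W Y (n + 1)) :
    ExtZero A W X (n + 1) := by
  refine subsingleton_of_forall_eq 0 fun e => ?_
  obtain ⟨x, rfl⟩ := Ext.covariant_sequence_exact₁ _ h.shortExact e (h₂.elim _ _) rfl
  rw [h₃.elim x 0, Ext.zero_comp]

theorem covariant₃ (h : IsSES f g) (h₂ : ExtZero A W Y n) (h₁ : ExtZero A W X (n + 1)) :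
    ExtZero A W Z n := by
  refine subsingleton_of_forall_eq 0 fun e => ?_
  obtain ⟨x, rfl⟩ := Ext.covariant_sequence_exact₃ _ h.shortExact e rfl (h₁.elim _ _)
  rw [h₂.elim x 0, Ext.zero_comp]

theorem contravariant₁ (h : IsSES f g) (h₂ : ExtZero A Y W n) (h₃ : ExtZero A Z W (n + 1)) :
    ExtZero A X W n := by
  refine subsingleton_of_forall_eq 0 fun e => ?_
  obtain ⟨x, rfl⟩ := Ext.contravariant_sequence_exact₁ h.shortExact _ e (add_comm 1 n)
    (h₃.elim _ _)
  rw [h₂.elim x 0, Ext.comp_zero]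

theorem contravariant₃ (h : IsSES f g) (h₁ : ExtZero A X W n) (h₂ : ExtZero A Y W (n + 1)) :
    ExtZero A Z W (n + 1) := by
  refine subsingleton_of_forall_eq 0 fun e => ?_
  obtain ⟨x, rfl⟩ := Ext.contravariant_sequence_exact₃ h.shortExact _ e (h₂.elim _ _)
    (add_comm 1 n)
  rw [h₁.elim x 0, Ext.comp_zero]

theorem exists_lift (h : IsSES f g) (hX : ExtZero A W X 1) (φ : W →ₗ[A] Z) :
    ∃ ψ : W →ₗ[A] Y, g ∘ₗ ψ = φ := by
  obtain ⟨x, hx⟩ := Ext.covariant_sequence_exact₃ _ h.shortExact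
    (Ext.mk₀ (ModuleCat.ofHom φ)) rfl (hX.elim _ _)
  obtain ⟨ψ, rfl⟩ := (Ext.mk₀_bijective _ _).2 x
  rw [Ext.mk₀_comp_mk₀] at hx
  exact ⟨ψ.hom, congrArg ModuleCat.Hom.hom ((Ext.mk₀_bijective _ _).1 hx)⟩

theorem exists_extend (h : IsSES f g) (hZ : ExtZero A Z W 1) (φ : X →ₗ[A] W) :
    ∃ ψ : Y →ₗ[A] W, ψ ∘ₗ f = φ := by
  obtain ⟨x, hx⟩ := Ext.contravariant_sequence_exact₁ h.shortExact _
    (Ext.mk₀ (ModuleCat.ofHom φ)) rfl (hZ.elim _ _)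
  obtain ⟨ψ, rfl⟩ := (Ext.mk₀_bijective _ _).2 x
  rw [Ext.mk₀_comp_mk₀] at hx
  exact ⟨ψ.hom, congrArg ModuleCat.Hom.hom ((Ext.mk₀_bijective _ _).1 hx)⟩

theorem covariant₁_of_exists_lift (h : IsSES f g)
    (hl : ∀ φ : W →ₗ[A] Z, ∃ ψ : W →ₗ[A] Y, g ∘ₗ ψ = φ) (h₂ : ExtZero A W Y 1) :
    ExtZero A W X 1 := by
  refine subsingleton_of_forall_eq 0 fun e => ?_
  obtain ⟨x, rfl⟩ := Ext.covariant_sequence_exact₁ _ h.shortExact e (h₂.elim _ _) rfl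
  obtain ⟨φ, rfl⟩ := (Ext.mk₀_bijective _ _).2 x
  obtain ⟨ψ, hψ⟩ := hl φ.hom
  obtain rfl : ModuleCat.ofHom ψ ≫ ModuleCat.ofHom g = φ := ModuleCat.hom_ext hψ
  rw [← Ext.mk₀_comp_mk₀, Ext.comp_assoc_of_second_deg_zero]
  exact (congrArg (Ext.comp _ · _) h.shortExact.comp_extClass).trans (Ext.comp_zero _ _ _ _ _)

theorem contravariant₃_of_exists_extend (h : IsSES f g)
    (hl : ∀ φ : X →ₗ[A] W, ∃ ψ : Y →ₗ[A] W, ψ ∘ₗ f = φ) (h₂ : ExtZero A Y W 1) :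
    ExtZero A Z W 1 := by
  refine subsingleton_of_forall_eq 0 fun e => ?_
  obtain ⟨x, rfl⟩ := Ext.contravariant_sequence_exact₃ h.shortExact _ e (h₂.elim _ _)
    (add_zero 1)
  obtain ⟨φ, rfl⟩ := (Ext.mk₀_bijective _ _).2 x
  obtain ⟨ψ, hψ⟩ := hl φ.hom
  obtain rfl : ModuleCat.ofHom f ≫ ModuleCat.ofHom ψ = φ := ModuleCat.hom_ext hψ
  rw [← Ext.mk₀_comp_mk₀, ← Ext.comp_assoc_of_second_deg_zero]
  exact (congrArg (Ext.comp · _ _) h.shortExact.extClass_comp).trans (Ext.zero_comp _ _ _ _ _)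

end IsSES

namespace ExtZero

theorem finsupp_left {ι : Type u} (h : ExtZero A X Y (n + 1)) :
    ExtZero A (ι →₀ X) Y (n + 1) := by
  obtain ⟨I, f, hI, hf⟩ := exists_injective_embedding A Y
  have hs := isSES_mkQ_range hf
  induction n generalizing Y I with
  | zero =>
    refine hs.covariant₁_of_exists_lift (fun φ => ?_) of_injective
    choose ψ hψ using fun i => hs.exists_lift h (φ ∘ₗ Finsupp.lsingle i)
    refine ⟨Finsupp.lsum ℕ ψ, Finsupp.lhom_ext fun i x => ?_⟩
    simpa using LinearMap.congr_fun (hψ i) x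
  | succ n ih =>
    obtain ⟨J, g, hJ, hg⟩ := exists_injective_embedding A (I ⧸ LinearMap.range f)
    exact hs.covariant₁ (ih (hs.covariant₃ of_injective h) J g hJ hg (isSES_mkQ_range hg))
      of_injective

theorem pi_right {ι : Type u} (h : ExtZero A X Y (n + 1)) : ExtZero A X (ι → Y) (n + 1) := by
  have hs := isSES_subtype_ker (Finsupp.linearCombination_id_surjective A X)
  induction n generalizing X with
  | zero =>
    refine hs.contravariant₃_of_exists_extend (fun φ => ?_) of_projective
    choose ψ hψ using fun i => hs.exists_extend h (LinearMap.proj i ∘ₗ φ)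
    exact ⟨LinearMap.pi ψ, LinearMap.ext fun x => funext fun i => LinearMap.congr_fun (hψ i) x⟩
  | succ n ih =>
    exact hs.contravariant₃ (ih (hs.contravariant₁ of_projective h)
      (isSES_subtype_ker (Finsupp.linearCombination_id_surjective A _))) of_projective

theorem pi_left {ι : Type} [Finite ι] (h : ExtZero A X Y (n + 1)) :
    ExtZero A (ι → X) Y (n + 1) :=
  (h.finsupp_left (ι := ULift ι)).congr_left <|
    Finsupp.linearEquivFunOnFinite A X _ ≪≫ₗ LinearEquiv.funCongrLeft A X Equiv.ulift.symm

end ExtZero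

theorem exists_finset_range_le_supported [Module.Finite A X] {ι : Type*} (f : X →ₗ[A] (ι →₀ Y)) :
    ∃ s : Finset ι, LinearMap.range f ≤ Finsupp.supported Y A (s : Set ι) := by
  classical
  obtain ⟨t, ht⟩ := Module.Finite.fg_top (R := A) (M := X)
  refine ⟨t.biUnion fun x => (f x).support, ?_⟩
  rw [LinearMap.range_eq_map, ← ht, Submodule.map_span, Submodule.span_le]
  rintro _ ⟨x, hx, rfl⟩
  exact Finset.coe_subset.2 (Finset.subset_biUnion_of_mem (fun x => (f x).support) hx)

theorem IsSES.exists_extend_finsupp [Module.Finite A X] {ι : Type*} (h : IsSES f g)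
    (hZ : ExtZero A Z W 1) (φ : X →ₗ[A] (ι →₀ W)) : ∃ ψ : Y →ₗ[A] (ι →₀ W), ψ ∘ₗ f = φ := by
  obtain ⟨s, hs⟩ := exists_finset_range_le_supported φ
  choose ψ hψ using fun i => h.exists_extend hZ (Finsupp.lapply i ∘ₗ φ)
  refine ⟨∑ i ∈ s, Finsupp.lsingle i ∘ₗ ψ i, LinearMap.ext fun x => ?_⟩
  have hψ' : ∀ i, ψ i (f x) = φ x i := fun i => LinearMap.congr_fun (hψ i) x
  simp only [LinearMap.comp_apply, LinearMap.sum_apply, hψ', Finsupp.lsingle_apply]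
  rw [← Finsupp.sum_of_support_subset (φ x) (hs ⟨x, rfl⟩) _ (by simp), Finsupp.sum_single]

theorem ExtZero.finsupp_right [IsNoetherianRing A] [Module.Finite A X] {ι : Type u}
    (h : ExtZero A X Y (n + 1)) : ExtZero A X (ι →₀ Y) (n + 1) := by
  obtain ⟨k, p, hp⟩ := Module.Finite.exists_fin' A X
  have hs := isSES_subtype_ker hp
  induction n generalizing X k with
  | zero => exact hs.contravariant₃_of_exists_extend (hs.exists_extend_finsupp h) of_projective
  | succ n ih =>
    obtain ⟨l, q, hq⟩ := Module.Finite.exists_fin' A (LinearMap.ker p)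
    exact hs.contravariant₃ (ih (hs.contravariant₁ of_projective h) l q hq (isSES_subtype_ker hq))
      of_projective

end ExtVanishing

/-! ## Projective resolutions -/

section Resolutions

variable {A : Type u} [Ring A]
variable {X Y Z P : Type u} [AddCommGroup X] [Module A X] [AddCommGroup Y] [Module A Y]
  [AddCommGroup Z] [Module A Z] [AddCommGroup P] [Module A P]

/-- The syzygies of the canonical free resolution of `X`. -/
def freeSyzygy (A : Type u) [Ring A] (X : Type u) [AddCommGroup X] [Module A X] :
    ℕ → ModuleCat.{u} A
  | 0 => ModuleCat.of A X
  | n + 1 => ModuleCat.of A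
      (LinearMap.ker (Finsupp.linearCombination A (id : freeSyzygy A X n → freeSyzygy A X n)))

/-- The canonical free resolution of `X`, whose terms are free on the underlying sets of the
syzygies. -/
def freeResolution (A : Type u) [Ring A] (X : Type u) [AddCommGroup X] [Module A X] :
    ResolutionData A X where
  P n := freeSyzygy A X n →₀ A
  d n := (LinearMap.ker (Finsupp.linearCombination A
    (id : freeSyzygy A X n → freeSyzygy A X n))).subtype ∘ₗ
      Finsupp.linearCombination A (id : freeSyzygy A X (n + 1) → freeSyzygy A X (n + 1))
  ε := Finsupp.linearCombination A (id : X → X)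

theorem exact_subtype_ker_comp {p : Y →ₗ[A] Z} {q : P →ₗ[A] LinearMap.ker p}
    (hq : Surjective q) : Exact ((LinearMap.ker p).subtype ∘ₗ q) p :=
  hq.comp_exact_iff_exact.2 (LinearMap.exact_subtype_ker_map p)

theorem freeResolution_isProjResolution (A : Type u) [Ring A] (X : Type u) [AddCommGroup X]
    [Module A X] : (freeResolution A X).IsProjResolution where
  proj n := inferInstanceAs (Module.Projective A (freeSyzygy A X n →₀ A))
  surj := Finsupp.linearCombination_id_surjective A X
  exact0 := exact_subtype_ker_comp (Finsupp.linearCombination_id_surjective A (freeSyzygy A X 1))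
  exactSucc n y := Iff.trans (Submodule.coe_eq_zero (x := Finsupp.linearCombination A
      (id : freeSyzygy A X (n + 1) → freeSyzygy A X (n + 1)) y))
    (exact_subtype_ker_comp (Finsupp.linearCombination_id_surjective A (freeSyzygy A X (n + 2))) y)

/-- The resolution of the first syzygy obtained by deleting the degree zero term. -/
def ResolutionData.truncate (Q : ResolutionData A X) (h : Exact (Q.d 0) Q.ε) :
    ResolutionData A (LinearMap.ker Q.ε) where
  P n := Q.P (n + 1)
  d n := Q.d (n + 1)
  ε := (Q.d 0).codRestrict _ h.apply_apply_eq_zero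

namespace ResolutionData.IsProjResolution

variable {Q : ResolutionData A X}

theorem truncate (h : Q.IsProjResolution) : (Q.truncate h.exact0).IsProjResolution where
  proj n := h.proj (n + 1)
  surj := fun ⟨y, hy⟩ => by
    obtain ⟨x, rfl⟩ := (h.exact0 y).1 hy
    exact ⟨x, rfl⟩
  exact0 y := Subtype.ext_iff.trans (h.exactSucc 0 y)
  exactSucc n := h.exactSucc (n + 1)

theorem extZero_of_exact (h : Q.IsProjResolution)
    (hE : ∀ j, Exact (fun f : Q.P j →ₗ[A] Y => f.comp (Q.d j))
      (fun f : Q.P (j + 1) →ₗ[A] Y => f.comp (Q.d (j + 1)))) (n : ℕ) :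
    ExtZero A X Y (n + 1) := by
  have hP := h.proj 0
  have hs := isSES_subtype_ker h.surj
  induction n generalizing X with
  | zero =>
    refine hs.contravariant₃_of_exists_extend (fun φ => ?_) .of_projective
    obtain ⟨ψ, hψ⟩ := (hE 0 (φ ∘ₗ (Q.truncate h.exact0).ε)).1 <| LinearMap.ext fun x =>
      (congrArg φ (h.truncate.exact0.apply_apply_eq_zero x)).trans (map_zero φ)
    refine ⟨ψ, LinearMap.ext fun x => ?_⟩
    obtain ⟨y, rfl⟩ := h.truncate.surj x
    exact LinearMap.congr_fun hψ y
  | succ n ih =>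
    exact hs.contravariant₃ (ih h.truncate (fun j => hE (j + 1)) (h.proj 1)
      (isSES_subtype_ker h.truncate.surj)) .of_projective

theorem exact_of_extZero (h : Q.IsProjResolution) (hE : ∀ n, ExtZero A X Y (n + 1)) (j : ℕ) :
    Exact (fun f : Q.P j →ₗ[A] Y => f.comp (Q.d j))
      (fun f : Q.P (j + 1) →ₗ[A] Y => f.comp (Q.d (j + 1))) := by
  have hs := isSES_subtype_ker h.surj
  induction j generalizing X with
  | zero =>
    refine fun f => ⟨fun hf => ?_, ?_⟩
    · obtain ⟨φ, hφ⟩ := exists_comp_eq_of_surjective (f := f) h.truncate.surj fun x hx => by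
        obtain ⟨y, rfl⟩ := (h.truncate.exact0 x).1 hx
        exact LinearMap.congr_fun hf y
      obtain ⟨ψ, rfl⟩ := hs.exists_extend (hE 0) φ
      exact ⟨ψ, hφ⟩
    · rintro ⟨ψ, rfl⟩
      exact LinearMap.ext fun x =>
        (congrArg ψ ((h.exactSucc 0).apply_apply_eq_zero x)).trans (map_zero ψ)
  | succ _ ih =>
    have hP := h.proj 0
    exact ih h.truncate (fun n => hs.contravariant₁ .of_projective (hE (n + 1)))
      (isSES_subtype_ker h.truncate.surj)

end ResolutionData.IsProjResolution

theorem extVanishAll_iff : ExtVanishAll A X Y ↔ ∀ n, ExtZero A X Y (n + 1) :=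
  ⟨fun ⟨_, hQ, hE⟩ => hQ.extZero_of_exact hE, fun h =>
    ⟨_, freeResolution_isProjResolution A X,
      (freeResolution_isProjResolution A X).exact_of_extZero h⟩⟩

end Resolutions

/-! ## Tensor products over noncommutative rings -/

namespace MTensor

variable {S : Type u} [Ring S] {N N' : Type u} [AddCommGroup N] [Module Sᵐᵒᵖ N]
  [AddCommGroup N'] [Module Sᵐᵒᵖ N'] {T : Type u} [AddCommGroup T] [Module S T]

theorem mk_add_left (n n' : N) (t : T) :
    (mk (n + n') t : MTensor S N T) = mk n t + mk n' t :=
  congrArg QuotientAddGroup.mk (TensorProduct.tmul_add t n n')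

theorem mk_op_smul (s : S) (n : N) (t : T) :
    (mk (op s • n) t : MTensor S N T) = mk n (s • t) := by
  refine QuotientAddGroup.eq.2 ?_
  rw [neg_add_eq_sub]
  exact AddSubgroup.subset_closure ⟨s, t, n, rfl⟩

variable (S N T) in
/-- The balanced map `(n, t) ↦ n ⊗ t` as a biadditive map. -/
def mkHom : N →+ T →+ MTensor S N T :=
  AddMonoidHom.mk' (fun n => AddMonoidHom.mk' (mk n) (mk_add_right n))
    fun n n' => AddMonoidHom.ext (mk_add_left n n')

@[simp] theorem mkHom_apply (n : N) (t : T) : mkHom S N T n t = mk n t := rfl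

theorem mk_sum_left {ι : Type*} (s : Finset ι) (n : ι → N) (t : T) :
    (mk (∑ i ∈ s, n i) t : MTensor S N T) = ∑ i ∈ s, mk (n i) t := by
  simp only [← mkHom_apply, map_sum, AddMonoidHom.finsetSum_apply]

theorem mk_sum_right {ι : Type*} (s : Finset ι) (n : N) (t : ι → T) :
    (mk n (∑ i ∈ s, t i) : MTensor S N T) = ∑ i ∈ s, mk n (t i) := by
  simp only [← mkHom_apply, map_sum]

@[simp] theorem mk_zero_left (t : T) : (mk (0 : N) t : MTensor S N T) = 0 := by
  rw [← mkHom_apply, map_zero, AddMonoidHom.zero_apply]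

@[elab_as_elim]
theorem induction_on {p : MTensor S N T → Prop} (x : MTensor S N T) (zero : p 0)
    (mk : ∀ n t, p (mk n t)) (add : ∀ x y, p x → p y → p (x + y)) : p x := by
  obtain ⟨y, rfl⟩ := QuotientAddGroup.mk_surjective x
  induction y using TensorProduct.induction_on with
  | zero => exact zero
  | tmul t n => exact mk n t
  | add y z hy hz => exact add _ _ hy hz

theorem subsingleton_of_mk_eq_zero (h : ∀ (n : N) (t : T), (mk n t : MTensor S N T) = 0) :
    Subsingleton (MTensor S N T) :=
  subsingleton_of_forall_eq 0 fun z => by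
    induction z using induction_on with
    | zero => rfl
    | mk n t => exact h n t
    | add x y hx hy => rw [hx, hy, add_zero]

theorem hom_ext {G : Type*} [AddCommGroup G] {f g : MTensor S N T →+ G}
    (h : ∀ n t, f (mk n t) = g (mk n t)) : f = g := by
  ext x
  induction x using induction_on with
  | zero => rw [map_zero, map_zero]
  | mk n t => exact h n t
  | add x y hx hy => rw [map_add, map_add, hx, hy]

/-- The map out of the tensor product induced by a balanced biadditive map. -/
def lift {G : Type*} [AddCommGroup G] (f : N →+ T →+ G)
    (hf : ∀ (s : S) n t, f (op s • n) t = f n (s • t)) : MTensor S N T →+ G :=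
  QuotientAddGroup.lift _ (TensorProduct.liftAddHom f.flip (fun z t n => by simp)) <| by
    refine (AddSubgroup.closure_le _).2 ?_
    rintro x ⟨s, t, n, rfl⟩
    simp [hf]

@[simp] theorem lift_mk {G : Type*} [AddCommGroup G] (f : N →+ T →+ G)
    (hf : ∀ (s : S) n t, f (op s • n) t = f n (s • t)) (n : N) (t : T) :
    lift f hf (mk n t) = f n t := rfl

@[simp] theorem map_mk (g : N →ₗ[Sᵐᵒᵖ] N') (n : N) (t : T) : map g (mk n t) = mk (g n) t := rfl

end MTensor

section HomFaithful

variable {R : Type u} [Ring R]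

theorem exists_finite_presentation {A : Type*} [Ring A] [IsNoetherianRing A] (X : Type*)
    [AddCommGroup X] [Module A X] [Module.Finite A X] :
    ∃ (n m : ℕ) (c : Fin n → X) (r : Fin m → Fin n → A),
      Surjective (Fintype.linearCombination A c) ∧
        Submodule.span A (Set.range r) = LinearMap.ker (Fintype.linearCombination A c) := by
  obtain ⟨n, c, hc⟩ := Module.Finite.exists_fin (R := A) (M := X)
  obtain ⟨m, r, hr⟩ := Submodule.fg_iff_exists_fin_generating_family.1
    (IsNoetherian.noetherian (LinearMap.ker (Fintype.linearCombination A c)))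
  refine ⟨n, m, c, r, LinearMap.range_eq_top.1 ?_, hr⟩
  rw [Fintype.range_linearCombination, hc]

theorem eq_zero_of_relations_eq_zero {A : Type u} [Ring A] {C L : Type u} [AddCommGroup C]
    [Module A C] [AddCommGroup L] [Module A L] (h : ∀ f : C →ₗ[A] L, f = 0) {n m : ℕ}
    {c : Fin n → C} {r : Fin m → Fin n → A} (hc : Surjective (Fintype.linearCombination A c))
    (hr : LinearMap.ker (Fintype.linearCombination A c) ≤ Submodule.span A (Set.range r))
    {l : Fin n → L} (hl : ∀ k, ∑ i, r k i • l i = 0) : l = 0 := by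
  classical
  obtain ⟨φ, hφ⟩ := exists_comp_eq_of_surjective (f := Fintype.linearCombination A l) hc <|
    hr.trans (Submodule.span_le.2 (Set.range_subset_iff.2 hl))
  ext i
  rw [h φ, LinearMap.zero_comp] at hφ
  simpa [Fintype.linearCombination_apply_single] using
    (LinearMap.congr_fun hφ (Pi.single i 1)).symm

/-- The left `R`-module structure on the character group of a right `R`-module. -/
@[reducible] def charDualModule (R : Type u) [Ring R] (L : Type u) [AddCommGroup L]
    [Module Rᵐᵒᵖ L] : Module R (CharacterModule L) :=
  @Module.compHom (Rᵐᵒᵖ)ᵈᵐᵃ R (L →+ AddCircle (1 : ℚ)) _ _ AddMonoidHom.instDomMulActModule _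
    (RingEquiv.opOp R).toRingHom

attribute [local instance] charDualModule

theorem character_sum_apply {L : Type*} [AddCommGroup L] {ι : Type*} (s : Finset ι)
    (χ : ι → CharacterModule L) (x : L) : (∑ k ∈ s, χ k) x = ∑ k ∈ s, χ k x :=
  AddMonoidHom.finsetSum_apply χ s x

theorem exists_sum_smul_character_eq {L : Type u} [AddCommGroup L] [Module Rᵐᵒᵖ L] {n m : ℕ}
    {r : Fin m → Fin n → Rᵐᵒᵖ} (hr : ∀ l : Fin n → L, (∀ k, ∑ i, r k i • l i = 0) → l = 0)
    (φ : Fin n → CharacterModule L) :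
    ∃ ψ : Fin m → CharacterModule L, ∀ i, φ i = ∑ k, unop (r k i) • ψ k := by
  classical
  let D : (Fin n → L) →ₗ[ℤ] (Fin m → L) :=
    (AddMonoidHom.mk' (fun l k => ∑ i, r k i • l i) fun l l' => by
      ext k; simp [Finset.sum_add_distrib]).toIntLinearMap
  have hD : Injective D := (injective_iff_map_eq_zero D).2 fun l hl => hr l (congrFun hl)
  obtain ⟨Ψ, hΨ⟩ := CharacterModule.dual_surjective_of_injective (R := ℤ) D hD
    (∑ i, CharacterModule.dual (LinearMap.proj i : (Fin n → L) →ₗ[ℤ] L) (φ i))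
  refine ⟨fun k => CharacterModule.dual (LinearMap.single ℤ (fun _ => L) k) Ψ, fun i => ?_⟩
  ext x
  have hD' : D (Pi.single i x) = ∑ k, Pi.single k (r k i • x) := by
    ext k
    simp [D, Pi.single_apply]
  calc φ i x = ∑ j, φ j ((Pi.single i x : Fin n → L) j) := by
        rw [Finset.sum_eq_single i (fun j _ hj => by rw [Pi.single_eq_of_ne hj, map_zero])
          (by simp), Pi.single_eq_same]
    _ = Ψ (D (Pi.single i x)) := (character_sum_apply ..).symm.trans (DFunLike.congr_fun hΨ _).symm
    _ = ∑ k, Ψ (Pi.single k (r k i • x)) := by rw [hD', map_sum]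
    _ = (∑ k, unop (r k i) • CharacterModule.dual (LinearMap.single ℤ (fun _ => L) k) Ψ) x :=
        (character_sum_apply _ (fun k => unop (r k i) •
          CharacterModule.dual (LinearMap.single ℤ (fun _ => L) k) Ψ) x).symm

theorem subsingleton_of_hom_eq_zero [IsNoetherianRing Rᵐᵒᵖ] {C : Type u} [AddCommGroup C]
    [Module Rᵐᵒᵖ C] [Module.Finite Rᵐᵒᵖ C]
    (hC : ∀ (M : Type u) [AddCommGroup M] [Module R M],
      Subsingleton (MTensor R C M) → Subsingleton M)
    {L : Type u} [AddCommGroup L] [Module Rᵐᵒᵖ L] (h : ∀ f : C →ₗ[Rᵐᵒᵖ] L, f = 0) :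
    Subsingleton L := by
  obtain ⟨n, m, c, r, hc, hr⟩ := exists_finite_presentation (A := Rᵐᵒᵖ) C
  have hrc : ∀ k, ∑ i, r k i • c i = 0 := fun k =>
    hr.le (Submodule.subset_span (Set.mem_range_self k))
  have := hC (CharacterModule L) <| MTensor.subsingleton_of_mk_eq_zero fun y φ => by
    obtain ⟨x, rfl⟩ := hc y
    obtain ⟨ψ, hψ⟩ := exists_sum_smul_character_eq
      (fun l => eq_zero_of_relations_eq_zero h hc hr.ge) fun i => unop (x i) • φ
    calc (MTensor.mk (∑ i, x i • c i) φ : MTensor R C (CharacterModule L))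
        = ∑ i, MTensor.mk (c i) (unop (x i) • φ) := by
          simp only [MTensor.mk_sum_left, ← MTensor.mk_op_smul, op_unop]
      _ = ∑ i, ∑ k, MTensor.mk (r k i • c i) (ψ k) := by
          simp only [hψ, MTensor.mk_sum_right, ← MTensor.mk_op_smul, op_unop]
      _ = ∑ k, MTensor.mk (∑ i, r k i • c i) (ψ k) := by
          rw [Finset.sum_comm]
          simp only [MTensor.mk_sum_left]
      _ = 0 := by simp only [hrc, MTensor.mk_zero_left, Finset.sum_const_zero]
  exact subsingleton_of_forall_eq 0 fun x =>
    CharacterModule.eq_zero_of_character_apply fun φ => by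
      rw [Subsingleton.elim φ 0]; rfl

end HomFaithful

/-! ## Approximation by finite powers of `C` -/

section HomVanishing

variable {S R : Type u} [Ring S] [Ring R]
  {C : Type u} [AddCommGroup C] [Module Rᵐᵒᵖ C] [Module S C] [SMulCommClass S Rᵐᵒᵖ C]
  {Y : Type u} [AddCommGroup Y] [Module Rᵐᵒᵖ Y]

attribute [local instance] SMulCommClass.symm

variable (S C) in
/-- The `S`-module of linear maps into `C` vanishing on a submodule `T`. -/
def homVanishingOn (T : Submodule Rᵐᵒᵖ Y) : Submodule S (Y →ₗ[Rᵐᵒᵖ] C) where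
  carrier := {f | T ≤ LinearMap.ker f}
  add_mem' hf hg x hx := by
    rw [LinearMap.mem_ker, LinearMap.add_apply, hf hx, hg hx, add_zero]
  zero_mem' := by simp
  smul_mem' s f hf x hx := by rw [LinearMap.mem_ker, LinearMap.smul_apply, hf hx, smul_zero]

/-- The identification of `S` with the endomorphism ring of `C`, as left `S`-modules. -/
def homothetyEquiv (hEnd : Bijective (leftHomothety S R C)) : S ≃ₗ[S] (C →ₗ[Rᵐᵒᵖ] C) :=
  .ofBijective
    { toFun := leftHomothety S R C
      map_add' := fun s t => LinearMap.ext fun c => add_smul s t c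
      map_smul' := fun s t => by ext c; exact mul_smul s t c } hEnd

variable (S C) in
/-- The descent to `Y ⧸ T` of linear maps vanishing on `T`. -/
def homVanishingOnLift (T : Submodule Rᵐᵒᵖ Y) :
    homVanishingOn S C T →ₗ[S] (Y ⧸ T →ₗ[Rᵐᵒᵖ] C) where
  toFun f := T.liftQ f.1 f.2
  map_add' _ _ := T.linearMap_qext (LinearMap.ext fun _ => rfl)
  map_smul' _ _ := T.linearMap_qext (LinearMap.ext fun _ => rfl)

theorem homVanishingOnLift_comp_eq_zero_iff {T : Submodule Rᵐᵒᵖ Y} (f : homVanishingOn S C T)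
    (β : C →ₗ[Rᵐᵒᵖ] Y ⧸ T) :
    homVanishingOnLift S C T f ∘ₗ β = 0 ↔
      f.1 ∈ homVanishingOn S C ((LinearMap.range β).comap T.mkQ) := by
  refine ⟨fun h x ⟨c, hc⟩ => ?_, fun h => LinearMap.ext fun c => ?_⟩
  · have hx := LinearMap.congr_fun h c
    rwa [LinearMap.comp_apply, hc] at hx
  · obtain ⟨y, hy⟩ := T.mkQ_surjective (β c)
    rw [LinearMap.comp_apply, ← hy]
    exact h ⟨c, hy.symm⟩

theorem fg_homVanishingOn_comap_range (hEnd : Bijective (leftHomothety S R C))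
    (hS : IsLeftCoherentRing S) {T : Submodule Rᵐᵒᵖ Y} (hT : (homVanishingOn S C T).FG)
    (β : C →ₗ[Rᵐᵒᵖ] Y ⧸ T) :
    (homVanishingOn S C ((LinearMap.range β).comap T.mkQ)).FG := by
  have : Module.Finite S (homVanishingOn S C T) := Module.Finite.iff_fg.2 hT
  let l : homVanishingOn S C T →ₗ[S] S := (homothetyEquiv hEnd).symm.toLinearMap ∘ₗ
    LinearMap.lcomp S C β ∘ₗ homVanishingOnLift S C T
  have hrange : Module.FinitePresentation S (LinearMap.range l) :=
    hS _ (LinearMap.range_eq_map l ▸ Module.Finite.fg_top.map l)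
  have hker : (LinearMap.ker l).FG := by
    rw [← LinearMap.ker_rangeRestrict]
    exact Module.FinitePresentation.fg_ker _ l.surjective_rangeRestrict
  convert hker.map (homVanishingOn S C T).subtype using 1
  have hl : ∀ f, l f = 0 ↔ f.1 ∈ homVanishingOn S C ((LinearMap.range β).comap T.mkQ) :=
    fun f => (homothetyEquiv hEnd).symm.map_eq_zero_iff.trans
      (homVanishingOnLift_comp_eq_zero_iff f β)
  ext f
  refine ⟨fun hf => ⟨⟨f, T.le_comap_mkQ _ |>.trans hf⟩, (hl _).2 hf, rfl⟩, ?_⟩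
  rintro ⟨f, hf, rfl⟩
  exact (hl f).1 hf

theorem exists_lt_comap_range_le
    (hC : ∀ (L : Type u) [AddCommGroup L] [Module Rᵐᵒᵖ L],
      (∀ f : C →ₗ[Rᵐᵒᵖ] L, f = 0) → Subsingleton L)
    {T₀ T : Submodule Rᵐᵒᵖ Y} (hT : T₀ < T) :
    ∃ β : C →ₗ[Rᵐᵒᵖ] Y ⧸ T₀, T₀ < (LinearMap.range β).comap T₀.mkQ ∧
      (LinearMap.range β).comap T₀.mkQ ≤ T := by
  obtain ⟨α, hα⟩ : ∃ α : C →ₗ[Rᵐᵒᵖ] T.map T₀.mkQ, α ≠ 0 := by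
    by_contra! h
    have := hC _ h
    exact hT.not_ge <| T₀.ker_mkQ ▸ Submodule.map_le_iff_le_comap.1
      (Submodule.eq_bot_of_subsingleton (p := T.map T₀.mkQ)).le
  refine ⟨(T.map T₀.mkQ).subtype ∘ₗ α, (T₀.le_comap_mkQ _).lt_of_not_ge fun h => hα ?_, ?_⟩
  · ext c
    obtain ⟨x, -, hx⟩ := (α c).2
    rw [← hx]
    exact (Submodule.Quotient.mk_eq_zero _).2 (h ⟨c, hx.symm⟩)
  · refine (Submodule.comap_mono ?_).trans_eq
      ((Submodule.comap_map_mkQ T₀ T).trans (sup_eq_right.2 hT.le))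
    exact (LinearMap.range_comp_le_range _ _).trans_eq (Submodule.range_subtype _)

theorem fg_homVanishingOn [IsNoetherian Rᵐᵒᵖ Y] [Module.Finite S (Y →ₗ[Rᵐᵒᵖ] C)]
    (hEnd : Bijective (leftHomothety S R C)) (hS : IsLeftCoherentRing S)
    (hC : ∀ (L : Type u) [AddCommGroup L] [Module Rᵐᵒᵖ L],
      (∀ f : C →ₗ[Rᵐᵒᵖ] L, f = 0) → Subsingleton L)
    (T : Submodule Rᵐᵒᵖ Y) : (homVanishingOn S C T).FG := by
  have hbot : homVanishingOn S C (⊥ : Submodule Rᵐᵒᵖ Y) = ⊤ :=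
    eq_top_iff.2 fun f _ => (bot_le : ⊥ ≤ LinearMap.ker f)
  obtain ⟨T₀, ⟨hT₀, hfg⟩, hmax⟩ := set_has_maximal_iff_noetherian.2 ‹IsNoetherian Rᵐᵒᵖ Y›
    {T' | T' ≤ T ∧ (homVanishingOn S C T').FG} ⟨⊥, bot_le, hbot ▸ Module.Finite.fg_top⟩
  rcases hT₀.eq_or_lt with rfl | hlt
  · exact hfg
  · obtain ⟨β, hβ, hβT⟩ := exists_lt_comap_range_le hC hlt
    exact absurd hβ (hmax _ ⟨hβT, fg_homVanishingOn_comap_range hEnd hS hfg β⟩)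

theorem finite_hom [IsNoetherianRing Rᵐᵒᵖ] [Module.Finite Rᵐᵒᵖ Y] [Module.Finite S C]
    (hEnd : Bijective (leftHomothety S R C)) (hS : IsLeftCoherentRing S)
    (hC : ∀ (L : Type u) [AddCommGroup L] [Module Rᵐᵒᵖ L],
      (∀ f : C →ₗ[Rᵐᵒᵖ] L, f = 0) → Subsingleton L) :
    Module.Finite S (Y →ₗ[Rᵐᵒᵖ] C) := by
  obtain ⟨m, p, hp⟩ := Module.Finite.exists_fin' Rᵐᵒᵖ Y
  have : Module.Finite S ((Fin m → Rᵐᵒᵖ) →ₗ[Rᵐᵒᵖ] C) :=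
    Module.Finite.equiv ((Pi.basisFun Rᵐᵒᵖ (Fin m)).constr S)
  have hrange : LinearMap.range (LinearMap.lcomp S C p) = homVanishingOn S C (LinearMap.ker p) := by
    ext f
    refine ⟨?_, fun hf => exists_comp_eq_of_surjective hp hf⟩
    rintro ⟨g, rfl⟩ x hx
    exact (congrArg g hx).trans (map_zero g)
  have hinj : Injective (LinearMap.lcomp S C p) := fun f g h => by
    ext y
    obtain ⟨x, rfl⟩ := hp y
    exact LinearMap.congr_fun h x
  refine ⟨Submodule.fg_of_fg_map_injective _ hinj ?_⟩
  rw [← LinearMap.range_eq_map, hrange]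
  exact fg_homVanishingOn hEnd hS hC _

/-- Every finitely generated module has a left approximation by a finite power of `C`. -/
def HasFinitePowerPreenvelopes (A C : Type u) [Ring A] [AddCommGroup C] [Module A C] : Prop :=
  ∀ (Y : Type u) [AddCommGroup Y] [Module A Y] [Module.Finite A Y],
    ∃ (k : ℕ) (φ : Y →ₗ[A] (Fin k → C)), ∀ f : Y →ₗ[A] C, ∃ ψ : (Fin k → C) →ₗ[A] C, ψ ∘ₗ φ = f

theorem hasFinitePowerPreenvelopes [IsNoetherianRing Rᵐᵒᵖ] [Module.Finite S C]
    (hEnd : Bijective (leftHomothety S R C)) (hS : IsLeftCoherentRing S)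
    (hC : ∀ (L : Type u) [AddCommGroup L] [Module Rᵐᵒᵖ L],
      (∀ f : C →ₗ[Rᵐᵒᵖ] L, f = 0) → Subsingleton L) :
    HasFinitePowerPreenvelopes Rᵐᵒᵖ C := fun Y _ _ _ => by
  have := finite_hom (Y := Y) hEnd hS hC
  obtain ⟨k, g, hg⟩ := Module.Finite.exists_fin (R := S) (M := Y →ₗ[Rᵐᵒᵖ] C)
  refine ⟨k, LinearMap.pi g, fun f => ?_⟩
  obtain ⟨s, rfl⟩ := (Submodule.mem_span_range_iff_exists_fun S).1 (hg ▸ Submodule.mem_top (x := f))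
  exact ⟨∑ i, s i • LinearMap.proj i, LinearMap.ext fun y => by simp⟩

end HomVanishing

section Coresolution

variable {A : Type u} [Ring A] {C Y : Type u} [AddCommGroup C] [Module A C] [AddCommGroup Y]
  [Module A Y]

/-- Every map from a finitely generated module to `D` factors through a finite power of `C`. -/
def FactorsThroughFinitePowers (A C D : Type u) [Ring A] [AddCommGroup C] [Module A C]
    [AddCommGroup D] [Module A D] : Prop :=
  ∀ (Y : Type u) [AddCommGroup Y] [Module A Y] [Module.Finite A Y] (f : Y →ₗ[A] D),
    ∃ (k : ℕ) (a : Y →ₗ[A] (Fin k → C)) (b : (Fin k → C) →ₗ[A] D), b ∘ₗ a = f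

theorem HasFinitePowerPreenvelopes.factorsThrough_pi (h : HasFinitePowerPreenvelopes A C)
    (ι : Type u) : FactorsThroughFinitePowers A C (ι → C) := fun Y _ _ _ f => by
  obtain ⟨k, φ, hφ⟩ := h Y
  choose ψ hψ using fun i => hφ (LinearMap.proj i ∘ₗ f)
  exact ⟨k, φ, LinearMap.pi ψ, LinearMap.ext fun y => funext fun i => LinearMap.congr_fun (hψ i) y⟩

theorem HasClassResolution.extZero_of_inProdClass (hY : ∀ n, ExtZero A Y C (n + 1)) {r : ℕ}
    {Q : ModuleCat.{u} A} (h : HasClassResolution A (InProdClass A C) r Q) (n : ℕ) :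
    ExtZero A Y Q (n + 1) := by
  induction r generalizing Q n with
  | zero =>
    obtain ⟨I, i, ρ, hρ⟩ := h
    exact (hY n).pi_right.retract_right hρ
  | succ r ih =>
    obtain ⟨e, ⟨I, i, ρ, hρ⟩, hK⟩ := h
    exact (isSES_subtype_ker e.surj).covariant₃ ((hY n).pi_right.retract_right hρ) (ih hK (n + 1))

theorem HasClassResolution.exists_factor_pi (hY : ∀ n, ExtZero A Y C (n + 1)) {r : ℕ}
    {Q : ModuleCat.{u} A} (h : HasClassResolution A (InProdClass A C) r Q) (φ : Y →ₗ[A] Q) :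
    ∃ (I : Type u) (ψ : Y →ₗ[A] (I → C)) (g : (I → C) →ₗ[A] Q), g ∘ₗ ψ = φ := by
  cases r with
  | zero =>
    obtain ⟨I, i, ρ, hρ⟩ := h
    exact ⟨I, i ∘ₗ φ, ρ, by rw [← LinearMap.comp_assoc, hρ, LinearMap.id_comp]⟩
  | succ r =>
    obtain ⟨e, ⟨I, i, ρ, hρ⟩, hK⟩ := h
    obtain ⟨ψ, rfl⟩ :=
      (isSES_subtype_ker e.surj).exists_lift (hK.extZero_of_inProdClass hY 0) φ
    refine ⟨I, i ∘ₗ ψ, e.f ∘ₗ ρ, ?_⟩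
    rw [LinearMap.comp_assoc, ← LinearMap.comp_assoc ψ, hρ, LinearMap.id_comp]

/-- An exact sequence `0 → C_r → ⋯ → C_0 → Q → 0` with `C_i ∈ Prod(C)` and `Q` an injective
cogenerator, the third condition on a cotilting module. -/
def ProdResolvesCogenerator (A C : Type u) [Ring A] [AddCommGroup C] [Module A C] : Prop :=
  ∃ (Q : ModuleCat.{u} A) (r : ℕ),
    IsInjectiveCogenerator A Q ∧ HasClassResolution A (InProdClass A C) r Q

theorem ProdResolvesCogenerator.eq_zero_of_forall_hom (h : ProdResolvesCogenerator A C)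
    (hY : ∀ n, ExtZero A Y C (n + 1)) {y : Y} (hy : ∀ f : Y →ₗ[A] C, f y = 0) : y = 0 := by
  obtain ⟨Q, r, ⟨-, hQ⟩, hr⟩ := h
  obtain ⟨I, f, hf⟩ := hQ Y
  refine hf (funext fun i => ?_)
  obtain ⟨J, ψ, g, hg⟩ := hr.exists_factor_pi hY (LinearMap.proj i ∘ₗ f)
  have hψ : ψ y = 0 := funext fun j => hy (LinearMap.proj j ∘ₗ ψ)
  have hfy : g (ψ y) = f y i := LinearMap.congr_fun hg y
  rw [← hfy, hψ, map_zero, map_zero, Pi.zero_apply]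

variable (A C) in
/-- A coresolution `0 → A → C^{k 0} → C^{k 1} → ⋯` whose cosyzygies `X j` are left orthogonal
to `C`. -/
structure FinCoresolution where
  X : ℕ → ModuleCat.{u} A
  k : ℕ → ℕ
  φ : ∀ j, X j →ₗ[A] (Fin (k j) → C)
  π : ∀ j, (Fin (k j) → C) →ₗ[A] X (j + 1)
  ses : ∀ j, IsSES (φ j) (π j)
  perp : ∀ j n, ExtZero A (X j) C (n + 1)
  unit : A ≃ₗ[A] X 0

theorem exists_isSES_pi_of_perp [Module.Finite A Y] (hpre : HasFinitePowerPreenvelopes A C)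
    (hCC : ∀ n, ExtZero A C C (n + 1)) (hcog : ProdResolvesCogenerator A C)
    (hY : ∀ n, ExtZero A Y C (n + 1)) :
    ∃ (X : ModuleCat.{u} A) (k : ℕ) (φ : Y →ₗ[A] (Fin k → C)) (π : (Fin k → C) →ₗ[A] X),
      IsSES φ π ∧ ∀ n, ExtZero A X C (n + 1) := by
  obtain ⟨k, φ, hφ⟩ := hpre Y
  have hs : IsSES φ (LinearMap.range φ).mkQ := isSES_mkQ_range <|
    (injective_iff_map_eq_zero φ).2 fun y hy => hcog.eq_zero_of_forall_hom hY fun f => by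
      obtain ⟨ψ, rfl⟩ := hφ f
      exact (congrArg ψ hy).trans (map_zero ψ)
  refine ⟨ModuleCat.of A _, k, φ, _, hs, fun n => ?_⟩
  cases n with
  | zero => exact hs.contravariant₃_of_exists_extend hφ (hCC 0).pi_left
  | succ n => exact hs.contravariant₃ (hY n) (hCC (n + 1)).pi_left

theorem nonempty_finCoresolution [Module.Finite A C] (hpre : HasFinitePowerPreenvelopes A C)
    (hCC : ∀ n, ExtZero A C C (n + 1)) (hcog : ProdResolvesCogenerator A C) :
    Nonempty (FinCoresolution A C) := by
  let Stage := {X : ModuleCat.{u} A // Module.Finite A X ∧ ∀ n, ExtZero A X C (n + 1)}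
  have step : ∀ X : Stage, ∃ (X' : Stage) (k : ℕ) (φ : X.1 →ₗ[A] (Fin k → C))
      (π : (Fin k → C) →ₗ[A] X'.1), IsSES φ π := fun ⟨X, _, hX⟩ => by
    obtain ⟨X', k, φ, π, hs, hX'⟩ := exists_isSES_pi_of_perp hpre hCC hcog hX
    exact ⟨⟨X', .of_surjective π hs.surj, hX'⟩, k, φ, π, hs⟩
  choose next k φ π hs using step
  let stage : ℕ → Stage := fun j => j.rec
    ⟨ModuleCat.of A A, Module.Finite.self A, fun n => .of_projective⟩ fun _ X => next X
  exact ⟨{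
    X := fun j => (stage j).1
    k := fun j => k (stage j)
    φ := fun j => φ (stage j)
    π := fun j => π (stage j)
    ses := fun j => hs (stage j)
    perp := fun j => (stage j).2.2
    unit := LinearEquiv.refl A A }⟩

end Coresolution

/-! ## Computing `Tor` from a free resolution of the left module -/

namespace MTensor

variable {S : Type u} [Ring S] {L P N N' : Type u} [AddCommGroup L] [Module Sᵐᵒᵖ L]
  [AddCommGroup P] [Module Sᵐᵒᵖ P] [AddCommGroup N] [Module Sᵐᵒᵖ N] [AddCommGroup N']
  [Module Sᵐᵒᵖ N'] {T : Type u} [AddCommGroup T] [Module S T]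

theorem map_comp (f : P →ₗ[Sᵐᵒᵖ] N) (g : N →ₗ[Sᵐᵒᵖ] N') :
    map (T := T) (g ∘ₗ f) = (map g).comp (map f) :=
  hom_ext fun _ _ => rfl

theorem map_zero' : map (T := T) (0 : N →ₗ[Sᵐᵒᵖ] N') = 0 :=
  hom_ext fun _ t => mk_zero_left t

variable {d : L →ₗ[Sᵐᵒᵖ] P} {p : P →ₗ[Sᵐᵒᵖ] N}

variable (T) in
theorem map_surjective (hp : Surjective p) : Surjective (map (T := T) p) := by
  intro z
  induction z using MTensor.induction_on with
  | zero => exact ⟨0, map_zero _⟩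
  | mk n t =>
    obtain ⟨y, rfl⟩ := hp n
    exact ⟨mk y t, rfl⟩
  | add x y hx hy =>
    obtain ⟨a, rfl⟩ := hx
    obtain ⟨b, rfl⟩ := hy
    exact ⟨a + b, map_add _ _ _⟩

theorem exists_comp_map_eq {G : Type*} [AddCommGroup G] (hp : Surjective p) (h : Exact d p)
    (q : MTensor S P T →+ G) (hq : ∀ w, q (map d w) = 0) :
    ∃ f : MTensor S N T →+ G, ∀ z, f (map p z) = q z := by
  let qt (t : T) : P →+ G := q.comp ((mkHom S P T).flip t)
  have hker (t : T) : p.toAddMonoidHom.ker ≤ (qt t).ker := fun y hy => by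
    obtain ⟨w, rfl⟩ := (h y).1 hy
    exact hq (mk w t)
  let f (t : T) : N →+ G := p.toAddMonoidHom.liftOfSurjective hp ⟨qt t, hker t⟩
  have hf (t : T) (y : P) : f t (p y) = q (mk y t) :=
    p.toAddMonoidHom.liftOfRightInverse_comp_apply _ _ ⟨qt t, hker t⟩ y
  let F : T →+ N →+ G := AddMonoidHom.mk' f fun t t' => AddMonoidHom.ext <| hp.forall.2 fun y => by
    rw [AddMonoidHom.add_apply, hf, hf, hf, mk_add_right, map_add]
  have hF (s : S) (n : N) (t : T) : F.flip (op s • n) t = F.flip n (s • t) := by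
    obtain ⟨y, rfl⟩ := hp n
    rw [← map_smul]
    exact (hf t _).trans ((congrArg q (mk_op_smul s y t)).trans (hf _ y).symm)
  have hcomp : (lift F.flip hF).comp (map p) = q := hom_ext fun y t => hf t y
  exact ⟨lift F.flip hF, DFunLike.congr_fun hcomp⟩

variable (T) in
theorem exact_map (hp : Surjective p) (h : Exact d p) :
    Exact (map (T := T) d) (map (T := T) p) := by
  refine fun z => ⟨fun hz => ?_, ?_⟩
  · obtain ⟨f, hf⟩ := exists_comp_map_eq hp h (QuotientAddGroup.mk' (map (T := T) d).range)
      fun w => (QuotientAddGroup.eq_zero_iff _).2 ⟨w, rfl⟩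
    refine (QuotientAddGroup.eq_zero_iff (N := (map (T := T) d).range) z).1 ?_
    rw [← QuotientAddGroup.mk'_apply, ← hf, hz, map_zero]
  · rintro ⟨w, rfl⟩
    rw [← AddMonoidHom.comp_apply, ← map_comp, h.linearMap_comp_eq_zero, map_zero',
      AddMonoidHom.zero_apply]

theorem exact_map_comp_iff (hp : Surjective p) (h : Exact d p) (g : N →ₗ[Sᵐᵒᵖ] N') :
    Exact (map (T := T) d) (map (T := T) (g ∘ₗ p)) ↔ Injective (map (T := T) g) := by
  have hexact := exact_map T hp h
  rw [injective_iff_map_eq_zero, (map_surjective T hp).forall, map_comp]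
  refine forall_congr' fun z => ?_
  rw [← hexact z]
  exact ⟨Iff.mp, fun hz => ⟨hz, fun h => (congrArg _ h).trans (map_zero _)⟩⟩

end MTensor

section RowMul

variable {S : Type u} [Ring S] {ι κ : Type} [Fintype ι]
variable {N N' : Type u} [AddCommGroup N] [Module Sᵐᵒᵖ N] [AddCommGroup N'] [Module Sᵐᵒᵖ N']

variable (N) in
/-- Right multiplication of row vectors over a right `S`-module by a matrix over `S`. -/
def rowMul (m : Matrix ι κ S) : (ι → N) →+ (κ → N) where
  toFun n i := ∑ p, op (m p i) • n p
  map_zero' := by ext; simp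
  map_add' x y := by ext; simp [Finset.sum_add_distrib]

theorem rowMul_apply (m : Matrix ι κ S) (n : ι → N) (i : κ) :
    rowMul N m n i = ∑ p, op (m p i) • n p := rfl

theorem rowMul_compLeft (m : Matrix ι κ S) (f : N →ₗ[Sᵐᵒᵖ] N') (n : ι → N) :
    rowMul N' m (f.compLeft ι n) = f.compLeft κ (rowMul N m n) := by
  ext i
  simp [rowMul_apply]

theorem rowMul_eq_zero_iff_of_injective {f : N →ₗ[Sᵐᵒᵖ] N'} (hf : Injective f)
    {m : Matrix ι κ S} {n : ι → N} : rowMul N' m (f.compLeft ι n) = 0 ↔ rowMul N m n = 0 := by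
  rw [rowMul_compLeft, ← map_zero (f.compLeft κ)]
  exact hf.comp_left.eq_iff

theorem rowMul_exact_of_bijective {G : Type*} [Zero G] (f : N →ₗ[Sᵐᵒᵖ] N') (hf : Bijective f)
    {m : Matrix ι κ S} {g : (κ → N) → G}
    (h : ∀ x, g x = 0 ↔ ∃ y, rowMul N' m y = f.compLeft κ x) : Exact (rowMul N m) g := by
  refine fun x => (h x).trans ?_
  rw [(hf.2.comp_left : Surjective (f.compLeft ι)).exists]
  refine exists_congr fun y => ?_
  have hy := rowMul_compLeft m f y
  exact ⟨fun e => hf.1.comp_left (hy.symm.trans e), fun e => hy.trans (congrArg _ e)⟩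

variable (S) in
/-- The map `s ↦ n s` from `S` to a right `S`-module. -/
def rightSpan (n : N) : S →ₗ[Sᵐᵒᵖ] N where
  toFun s := op s • n
  map_add' s t := add_smul (op s) (op t) n
  map_smul' s t := mul_smul s (op t) n

@[simp] theorem rightSpan_apply (n : N) (s : S) : rightSpan S n s = op s • n := rfl

theorem sum_rightSpan_single [DecidableEq ι] (n : ι → N) :
    ∑ p, (rightSpan S (n p)).compLeft ι (Pi.single p 1) = n := by
  ext i
  simp [Pi.single_apply, apply_ite op, ite_smul]

end RowMul

section ExactMatrixSequences

variable {S : Type u} [Ring S] {C : Type u} [AddCommGroup C] [Module S C]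

variable (S C) in
/-- A resolution of the left `S`-module `C` by finitely generated free modules, with
differentials given by matrices acting on row vectors. -/
structure MatrixResolution where
  k : ℕ → ℕ
  m : ∀ j, Matrix (Fin (k (j + 1))) (Fin (k j)) S
  e : Fin (k 0) → C
  surj : Surjective (Fintype.linearCombination S e)
  exact₀ : Exact (rowMul S (m 0)) (Fintype.linearCombination S e)
  exact : ∀ j, Exact (rowMul S (m (j + 1))) (rowMul S (m j))

namespace MatrixResolution

variable (K : MatrixResolution S C)

section Row

variable {N N' : Type u} [AddCommGroup N] [Module Sᵐᵒᵖ N] [AddCommGroup N'] [Module Sᵐᵒᵖ N']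

theorem rowMul_rowMul (j : ℕ) (n) : rowMul N (K.m j) (rowMul N (K.m (j + 1)) n) = 0 := by
  rw [← sum_rightSpan_single (S := S) n, map_sum, map_sum]
  refine Finset.sum_eq_zero fun p _ => ?_
  rw [rowMul_compLeft, rowMul_compLeft, (K.exact j).apply_apply_eq_zero, map_zero]

variable (N) in
/-- The vanishing of the homology in degree `j + 1` of the complex `N ⊗_S K`. -/
def ExactAt (j : ℕ) : Prop :=
  ∀ x, rowMul N (K.m j) x = 0 → ∃ y, rowMul N (K.m (j + 1)) y = x

theorem exactAt_of_projective [Module.Projective Sᵐᵒᵖ N] (j : ℕ) : K.ExactAt N j := by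
  classical
  intro x hx
  obtain ⟨σ, hσ⟩ := Module.projective_def.1 ‹Module.Projective Sᵐᵒᵖ N›
  let coord (v : N) : N →ₗ[Sᵐᵒᵖ] S :=
    { toFun := fun n => unop (σ n v)
      map_add' := fun a b => by simp
      map_smul' := fun s a => by simp }
  have hcoord (v : N) : ∃ t, rowMul S (K.m (j + 1)) t = (coord v).compLeft _ x :=
    (K.exact j _).1 <| by rw [rowMul_compLeft, hx, map_zero]
  choose t ht using hcoord
  let U : Finset N := Finset.univ.biUnion fun l => (σ (x l)).support
  refine ⟨∑ v ∈ U, (rightSpan S v).compLeft _ (t v), ?_⟩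
  rw [map_sum]
  simp only [rowMul_compLeft, ht]
  ext l
  rw [Finset.sum_apply]
  have hU : (σ (x l)).support ⊆ U :=
    Finset.subset_biUnion_of_mem (fun l => (σ (x l)).support) (Finset.mem_univ l)
  calc ∑ v ∈ U, σ (x l) v • v = Finsupp.linearCombination Sᵐᵒᵖ id (σ (x l)) :=
        (Finsupp.sum_of_support_subset _ hU (fun v a => a • v) fun v _ => zero_smul _ v).symm
    _ = x l := hσ (x l)

variable (N) in
/-- The augmentation `N ⊗_S S^k → N ⊗_S C`. -/
def aug : (Fin (K.k 0) → N) →+ MTensor S N C where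
  toFun n := ∑ i, MTensor.mk (n i) (K.e i)
  map_zero' := by simp
  map_add' x y := by simp [MTensor.mk_add_left, Finset.sum_add_distrib]

theorem aug_apply (n : Fin (K.k 0) → N) : K.aug N n = ∑ i, MTensor.mk (n i) (K.e i) := rfl

theorem map_aug (f : N →ₗ[Sᵐᵒᵖ] N') (n : Fin (K.k 0) → N) :
    MTensor.map f (K.aug N n) = K.aug N' (f.compLeft _ n) := by
  simp [aug_apply]

theorem aug_rightSpan (n : N) (s : Fin (K.k 0) → S) :
    K.aug N ((rightSpan S n).compLeft _ s) = MTensor.mk n (Fintype.linearCombination S K.e s) := by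
  simp [aug_apply, MTensor.mk_op_smul, Fintype.linearCombination_apply, MTensor.mk_sum_right]

theorem aug_surjective : Surjective (K.aug N) := by
  intro z
  induction z using MTensor.induction_on with
  | zero => exact ⟨0, map_zero _⟩
  | mk n c =>
    obtain ⟨s, rfl⟩ := K.surj c
    exact ⟨_, K.aug_rightSpan n s⟩
  | add x y hx hy =>
    obtain ⟨a, rfl⟩ := hx
    obtain ⟨b, rfl⟩ := hy
    exact ⟨a + b, map_add _ _ _⟩

theorem aug_rowMul (n) : K.aug N (rowMul N (K.m 0) n) = 0 := by
  rw [← sum_rightSpan_single (S := S) n, map_sum, map_sum]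
  refine Finset.sum_eq_zero fun p _ => ?_
  rw [rowMul_compLeft, aug_rightSpan, K.exact₀.apply_apply_eq_zero, ← MTensor.mkHom_apply,
    map_zero]

theorem exists_comp_aug_eq {G : Type*} [AddCommGroup G] (q : (Fin (K.k 0) → N) →+ G)
    (hq : ∀ n, q (rowMul N (K.m 0) n) = 0) :
    ∃ f : MTensor S N C →+ G, ∀ x, f (K.aug N x) = q x := by
  classical
  let qs (n : N) : (Fin (K.k 0) → S) →+ G := q.comp ((rightSpan S n).compLeft _).toAddMonoidHom
  let gen := (Fintype.linearCombination S K.e).toAddMonoidHom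
  have hker (n : N) : gen.ker ≤ (qs n).ker := fun s hs => by
    obtain ⟨t, rfl⟩ := (K.exact₀ s).1 hs
    exact (congrArg q (rowMul_compLeft _ (rightSpan S n) t).symm).trans (hq _)
  let f (n : N) : C →+ G := gen.liftOfSurjective K.surj ⟨qs n, hker n⟩
  have hf (n : N) (s : Fin (K.k 0) → S) : f n (gen s) = qs n s :=
    gen.liftOfRightInverse_comp_apply _ _ ⟨qs n, hker n⟩ s
  let F : N →+ C →+ G := AddMonoidHom.mk' f fun n n' => AddMonoidHom.ext fun c => by
    obtain ⟨s, rfl⟩ := K.surj c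
    rw [AddMonoidHom.add_apply]
    refine (hf _ s).trans (.trans ?_ (congrArg₂ _ (hf n s) (hf n' s)).symm)
    exact (congrArg q (funext fun i => smul_add _ n n')).trans (map_add q _ _)
  have hF (s : S) (n : N) (c : C) : F (op s • n) c = F n (s • c) := by
    obtain ⟨t, rfl⟩ := K.surj c
    rw [← map_smul]
    refine (hf _ t).trans (.trans ?_ (hf n _).symm)
    exact congrArg q (funext fun i => (mul_smul (op (t i)) (op s) n).symm)
  refine ⟨MTensor.lift F hF, fun x => ?_⟩
  conv_rhs => rw [← sum_rightSpan_single (S := S) x, map_sum]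
  rw [aug_apply, map_sum]
  refine Finset.sum_congr rfl fun i _ => ?_
  rw [MTensor.lift_mk, ← one_smul S (K.e i), ← Fintype.linearCombination_apply_single]
  exact hf (x i) _

theorem exact_rowMul_aug : Exact (rowMul N (K.m 0)) (K.aug N) := by
  refine fun x => ⟨fun hx => ?_, by rintro ⟨y, rfl⟩; exact K.aug_rowMul y⟩
  obtain ⟨f, hf⟩ := K.exists_comp_aug_eq (QuotientAddGroup.mk' (rowMul N (K.m 0)).range)
    fun n => (QuotientAddGroup.eq_zero_iff _).2 ⟨n, rfl⟩
  refine (QuotientAddGroup.eq_zero_iff (N := (rowMul N (K.m 0)).range) x).1 ?_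
  rw [← QuotientAddGroup.mk'_apply, ← hf, hx, map_zero]

end Row

section DimensionShift

variable {L P N : Type u} [AddCommGroup N] [Module Sᵐᵒᵖ N] [AddCommGroup P] [Module Sᵐᵒᵖ P]
  [AddCommGroup L] [Module Sᵐᵒᵖ L] {i : L →ₗ[Sᵐᵒᵖ] P} {p : P →ₗ[Sᵐᵒᵖ] N}

theorem exactAt_iff_of_isSES (h : IsSES i p) [Module.Projective Sᵐᵒᵖ P] (j : ℕ) :
    K.ExactAt N j ↔ ∀ x : Fin (K.k j) → L, (∃ y, rowMul P (K.m j) y = i.compLeft _ x) →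
      ∃ v, rowMul L (K.m j) v = x := by
  constructor
  · rintro hN x ⟨y, hy⟩
    obtain ⟨w, hw⟩ := hN (p.compLeft _ y) <| by
      rw [rowMul_compLeft, hy, (h.compLeft _).exact.apply_apply_eq_zero]
    obtain ⟨w', rfl⟩ := (h.compLeft _).surj w
    obtain ⟨v, hv⟩ := ((h.compLeft _).exact (y - rowMul P (K.m (j + 1)) w')).1 <| by
      rw [map_sub, ← hw, rowMul_compLeft, sub_self]
    refine ⟨v, (h.compLeft _).inj ?_⟩
    rw [← rowMul_compLeft, hv, map_sub, K.rowMul_rowMul, sub_zero, hy]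
  · intro hL n hn
    obtain ⟨y, rfl⟩ := (h.compLeft _).surj n
    obtain ⟨x, hx⟩ := ((h.compLeft _).exact (rowMul P (K.m j) y)).1 <| by
      rw [← rowMul_compLeft, hn]
    obtain ⟨v, rfl⟩ := hL x ⟨y, hx.symm⟩
    obtain ⟨w, hw⟩ := K.exactAt_of_projective (N := P) j (y - i.compLeft _ v) <| by
      rw [map_sub, rowMul_compLeft, hx, sub_self]
    refine ⟨p.compLeft _ w, ?_⟩
    rw [rowMul_compLeft, hw, map_sub, (h.compLeft _).exact.apply_apply_eq_zero, sub_zero]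

theorem exactAt_zero_iff (h : IsSES i p) [Module.Projective Sᵐᵒᵖ P] :
    K.ExactAt N 0 ↔ Injective (MTensor.map (T := C) i) := by
  rw [K.exactAt_iff_of_isSES h, injective_iff_map_eq_zero, K.aug_surjective.forall]
  simp only [map_aug, K.exact_rowMul_aug _, Set.mem_range]

theorem exactAt_succ_iff (h : IsSES i p) [Module.Projective Sᵐᵒᵖ P] (j : ℕ) :
    K.ExactAt N (j + 1) ↔ K.ExactAt L j := by
  rw [K.exactAt_iff_of_isSES h]
  refine forall_congr' fun x => imp_congr_left ⟨?_, fun hx => ?_⟩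
  · rintro ⟨y, hy⟩
    refine (h.compLeft _).inj ?_
    rw [← rowMul_compLeft, ← hy, K.rowMul_rowMul, map_zero]
  · refine K.exactAt_of_projective (N := P) j _ ?_
    rw [rowMul_compLeft, hx, map_zero]

end DimensionShift

variable {N : Type u} [AddCommGroup N] [Module Sᵐᵒᵖ N]

theorem exact_map_iff (Q : ResolutionData Sᵐᵒᵖ N) (hQ : Q.IsProjResolution) (j : ℕ) :
    Exact (MTensor.map (T := C) (Q.d (j + 1))) (MTensor.map (T := C) (Q.d j)) ↔
      K.ExactAt N j := by
  have := hQ.proj 0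
  have hses := isSES_subtype_ker hQ.surj
  induction j generalizing N with
  | zero =>
    rw [K.exactAt_zero_iff hses]
    exact MTensor.exact_map_comp_iff hQ.truncate.surj hQ.truncate.exact0 (LinearMap.ker Q.ε).subtype
  | succ j ih =>
    rw [K.exactAt_succ_iff hses]
    exact ih (Q.truncate hQ.exact0) hQ.truncate (hQ.proj 1)
      (isSES_subtype_ker hQ.truncate.surj)

theorem torVanishAll_iff : TorVanishAll S N C ↔ ∀ j, K.ExactAt N j := by
  constructor
  · rintro ⟨Q, hQ, h⟩ j
    exact (K.exact_map_iff Q hQ j).1 (h j)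
  · intro h
    have hQ := freeResolution_isProjResolution Sᵐᵒᵖ N
    exact ⟨_, hQ, fun j => (K.exact_map_iff _ hQ j).2 (h j)⟩

end MatrixResolution

end ExactMatrixSequences

/-! ## The Bass class in terms of the coresolution -/

section BassClass

variable {S R : Type u} [Ring S] [Ring R]
  {C : Type u} [AddCommGroup C] [Module Rᵐᵒᵖ C] [Module S C] [SMulCommClass S Rᵐᵒᵖ C]
  {M : Type u} [AddCommGroup M] [Module Rᵐᵒᵖ M]

/-- Row vectors of maps `C → M`, viewed as maps from a finite power of `C` to `M`. -/
abbrev rowHom {A C M : Type u} [Ring A] [AddCommGroup C] [Module A C] [AddCommGroup M]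
    [Module A M] {k : ℕ} : (Fin k → C →ₗ[A] M) ≃ₗ[ℕ] ((Fin k → C) →ₗ[A] M) :=
  LinearMap.lsum A (fun _ => C) ℕ

variable (S R C) in
/-- The left homothety `S → End(C)` as a map of right `S`-modules. -/
def homothetyHom : S →ₗ[Sᵐᵒᵖ] (C →ₗ[Rᵐᵒᵖ] C) where
  toFun := leftHomothety S R C
  map_add' s t := LinearMap.ext (add_smul s t)
  map_smul' s t := LinearMap.ext (mul_smul t s.unop)

namespace FinCoresolution

variable (K : FinCoresolution Rᵐᵒᵖ C) (hEnd : Bijective (leftHomothety S R C))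

/-- The matrices over `S` of the differentials `C^{k j} → C^{k (j + 1)}`. -/
def mat (j : ℕ) : Matrix (Fin (K.k (j + 1))) (Fin (K.k j)) S := fun l i =>
  (homothetyEquiv hEnd).symm
    (LinearMap.proj l ∘ₗ K.φ (j + 1) ∘ₗ K.π j ∘ₗ LinearMap.single Rᵐᵒᵖ (fun _ => C) i)

theorem mat_smul (j : ℕ) (l i) (c : C) :
    K.mat hEnd j l i • c = K.φ (j + 1) (K.π j (Pi.single i c)) l :=
  LinearMap.congr_fun ((homothetyEquiv hEnd).apply_symm_apply
    ((LinearMap.proj l : (Fin (K.k (j + 1)) → C) →ₗ[Rᵐᵒᵖ] C) ∘ₗ K.φ (j + 1) ∘ₗ K.π j ∘ₗ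
      LinearMap.single Rᵐᵒᵖ (fun _ => C) i)) c

theorem rowHom_rowMul_mat (j : ℕ) (n : Fin (K.k (j + 1)) → C →ₗ[Rᵐᵒᵖ] M) :
    rowHom (rowMul _ (K.mat hEnd j) n) = rowHom n ∘ₗ K.φ (j + 1) ∘ₗ K.π j := by
  refine LinearMap.pi_ext fun i c => (LinearMap.lsum_piSingle ..).trans ?_
  simp [rowMul_apply, mat_smul]

theorem rowMul_mat_eq_zero_iff (j : ℕ) (n : Fin (K.k (j + 1)) → C →ₗ[Rᵐᵒᵖ] M) :
    rowMul _ (K.mat hEnd j) n = 0 ↔ rowHom n ∘ₗ K.φ (j + 1) = 0 := by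
  rw [← (rowHom (A := Rᵐᵒᵖ)).map_eq_zero_iff, rowHom_rowMul_mat, ← LinearMap.comp_assoc]
  refine ⟨fun h => (LinearMap.cancel_right (K.ses j).surj).1 (h.trans ?_), fun h => ?_⟩
  · rw [LinearMap.zero_comp]
  · rw [h, LinearMap.zero_comp]

theorem rowHom_rowMul_mat_comp (j : ℕ) (n : Fin (K.k (j + 1)) → C →ₗ[Rᵐᵒᵖ] M) :
    rowHom (rowMul _ (K.mat hEnd j) n) ∘ₗ K.φ j = 0 := by
  rw [rowHom_rowMul_mat, LinearMap.comp_assoc, LinearMap.comp_assoc,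
    (K.ses j).exact.linearMap_comp_eq_zero, LinearMap.comp_zero, LinearMap.comp_zero]

variable (M) in
/-- Every map from the `j`-th cosyzygy to `M` extends to `C^{k j}`. -/
def ExtendsTo (j : ℕ) : Prop :=
  ∀ f : K.X j →ₗ[Rᵐᵒᵖ] M, ∃ g, g ∘ₗ K.φ j = f

theorem extendsTo_of_extZero {j : ℕ} (h : ExtZero Rᵐᵒᵖ (K.X (j + 1)) M 1) :
    K.ExtendsTo M j :=
  fun f => (K.ses j).exists_extend h f

theorem extendsTo_succ_iff (j : ℕ) :
    K.ExtendsTo M (j + 1) ↔ ∀ n : Fin (K.k j) → C →ₗ[Rᵐᵒᵖ] M, rowHom n ∘ₗ K.φ j = 0 →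
      ∃ n', rowMul _ (K.mat hEnd j) n' = n := by
  constructor
  · intro h n hn
    obtain ⟨f, hf⟩ := exists_comp_eq_of_surjective (K.ses j).surj (f := rowHom n) <| by
      rw [(K.ses j).exact.linearMap_ker_eq]
      exact LinearMap.range_le_ker_iff.2 hn
    obtain ⟨g, rfl⟩ := h f
    obtain ⟨n', rfl⟩ := rowHom.surjective g
    exact ⟨n', rowHom.injective ((K.rowHom_rowMul_mat hEnd j n').trans hf)⟩
  · intro h f
    obtain ⟨n, hn⟩ := rowHom.surjective (f ∘ₗ K.π j)
    obtain ⟨n', rfl⟩ := h n <| by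
      rw [hn, LinearMap.comp_assoc, (K.ses j).exact.linearMap_comp_eq_zero, LinearMap.comp_zero]
    exact ⟨rowHom n', (LinearMap.cancel_right (K.ses j).surj).1
      ((K.rowHom_rowMul_mat hEnd j n').symm.trans hn)⟩

theorem extendsTo_add_two_iff (j : ℕ) :
    K.ExtendsTo M (j + 1 + 1) ↔ ∀ n : Fin (K.k (j + 1)) → C →ₗ[Rᵐᵒᵖ] M,
      rowMul _ (K.mat hEnd j) n = 0 → ∃ n', rowMul _ (K.mat hEnd (j + 1)) n' = n := by
  simp only [K.extendsTo_succ_iff hEnd (j + 1), K.rowMul_mat_eq_zero_iff hEnd]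

/-- The generators of `C` over `S` given by the image of `1` in `C^{k 0}`. -/
def gens : Fin (K.k 0) → C := K.φ 0 (K.unit 1)

theorem hom_ext_unit {f g : K.X 0 →ₗ[Rᵐᵒᵖ] M} (h : f (K.unit 1) = g (K.unit 1)) : f = g := by
  refine (LinearMap.cancel_right K.unit.surjective).1 (LinearMap.ext_ring ?_)
  exact h

theorem rowHom_gens_eq_zero_iff (n : Fin (K.k 0) → C →ₗ[Rᵐᵒᵖ] M) :
    rowHom n K.gens = 0 ↔ rowHom n ∘ₗ K.φ 0 = 0 :=
  ⟨fun h => K.hom_ext_unit h, fun h => LinearMap.congr_fun h (K.unit 1)⟩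

theorem extendsTo_zero_iff :
    K.ExtendsTo M 0 ↔ ∀ x : M, ∃ n : Fin (K.k 0) → C →ₗ[Rᵐᵒᵖ] M, rowHom n K.gens = x := by
  constructor
  · intro h x
    obtain ⟨g, hg⟩ := h (LinearMap.toSpanSingleton Rᵐᵒᵖ M x ∘ₗ K.unit.symm.toLinearMap)
    obtain ⟨n, rfl⟩ := rowHom.surjective g
    exact ⟨n, (LinearMap.congr_fun hg (K.unit 1)).trans (by simp)⟩
  · intro h f
    obtain ⟨n, hn⟩ := h (f (K.unit 1))
    exact ⟨rowHom n, K.hom_ext_unit hn⟩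

theorem linearCombination_gens (s : Fin (K.k 0) → S) :
    Fintype.linearCombination S K.gens s =
      rowHom ((homothetyHom S R C).compLeft _ s) K.gens := by
  simp [Fintype.linearCombination_apply, homothetyHom, leftHomothety]

/-- The resolution of the left `S`-module `C` obtained by applying `Hom_R(-, C)`. -/
def toMatrixResolution : MatrixResolution S C where
  k := K.k
  m := K.mat hEnd
  e := K.gens
  surj c := by
    obtain ⟨n, rfl⟩ := K.extendsTo_zero_iff.1 (K.extendsTo_of_extZero (K.perp 1 0)) c
    obtain ⟨s, rfl⟩ := (hEnd.2.comp_left : Surjective ((homothetyHom S R C).compLeft _)) n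
    exact ⟨s, K.linearCombination_gens s⟩
  exact₀ := by
    have hE := (K.extendsTo_succ_iff hEnd 0).1 (K.extendsTo_of_extZero (K.perp 2 0))
    refine rowMul_exact_of_bijective (homothetyHom S R C) hEnd fun s => ?_
    rw [K.linearCombination_gens, K.rowHom_gens_eq_zero_iff]
    exact ⟨hE _, by rintro ⟨t, ht⟩; rw [← ht]; exact K.rowHom_rowMul_mat_comp hEnd 0 t⟩
  exact j := by
    have hE := (K.extendsTo_add_two_iff hEnd j).1 (K.extendsTo_of_extZero (K.perp (j + 3) 0))
    refine rowMul_exact_of_bijective (homothetyHom S R C) hEnd fun s => ?_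
    rw [← rowMul_eq_zero_iff_of_injective (f := homothetyHom S R C) hEnd.1]
    refine ⟨hE _, ?_⟩
    rintro ⟨t, ht⟩
    rw [← ht, rowMul_mat_eq_zero_iff]
    exact K.rowHom_rowMul_mat_comp hEnd (j + 1) t

theorem nuFun_aug (n : Fin (K.k 0) → C →ₗ[Rᵐᵒᵖ] M) :
    MTensor.nuFun S R C M ((K.toMatrixResolution hEnd).aug _ n) = rowHom n K.gens := by
  rw [LinearMap.lsum_apply, LinearMap.sum_apply]
  exact map_sum (MTensor.nuFun S R C M) (fun i => MTensor.mk (n i) (K.gens i)) Finset.univ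

theorem extendsTo_zero_iff_surjective_nuFun (hEnd : Bijective (leftHomothety S R C)) :
    K.ExtendsTo M 0 ↔ Surjective (MTensor.nuFun S R C M) := by
  simp only [extendsTo_zero_iff, Surjective, ← K.nuFun_aug hEnd,
    (K.toMatrixResolution hEnd).aug_surjective.exists]
  rfl

theorem extendsTo_one_iff_injective_nuFun (hEnd : Bijective (leftHomothety S R C)) :
    K.ExtendsTo M 1 ↔ Injective (MTensor.nuFun S R C M) := by
  rw [injective_iff_map_eq_zero, K.extendsTo_succ_iff hEnd 0,
    (K.toMatrixResolution hEnd).aug_surjective.forall]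
  refine forall_congr' fun n => ?_
  rw [← K.rowHom_gens_eq_zero_iff, K.nuFun_aug hEnd,
    (K.toMatrixResolution hEnd).exact_rowMul_aug n]
  rfl

theorem forall_extendsTo_iff (h : ∀ n, ExtZero Rᵐᵒᵖ C M (n + 1)) :
    (∀ j, K.ExtendsTo M j) ↔ ∀ j n, ExtZero Rᵐᵒᵖ (K.X j) M (n + 1) := by
  refine ⟨fun hE j => ?_, fun hX j => K.extendsTo_of_extZero (hX (j + 1) 0)⟩
  induction j with
  | zero =>
    have : Module.Projective Rᵐᵒᵖ (K.X 0) := Module.Projective.of_equiv K.unit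
    exact fun n => .of_projective
  | succ j ih =>
    rintro (_ | n)
    · exact (K.ses j).contravariant₃_of_exists_extend (hE j) (h 0).pi_left
    · exact (K.ses j).contravariant₃ (ih n) (h (n + 1)).pi_left

theorem inBassClass_iff (hEnd : Bijective (leftHomothety S R C)) : InBassClass S R C M ↔
    (∀ n, ExtZero Rᵐᵒᵖ C M (n + 1)) ∧ ∀ j n, ExtZero Rᵐᵒᵖ (K.X j) M (n + 1) := by
  let F := K.toMatrixResolution hEnd
  constructor
  · intro h
    have hCM := extVanishAll_iff.1 h.extVanish
    refine ⟨hCM, (K.forall_extendsTo_iff hCM).1 ?_⟩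
    rintro (_ | _ | j)
    · exact (K.extendsTo_zero_iff_surjective_nuFun hEnd).2 h.nuBij.2
    · exact (K.extendsTo_one_iff_injective_nuFun hEnd).2 h.nuBij.1
    · exact (K.extendsTo_add_two_iff hEnd j).2 (F.torVanishAll_iff.1 h.torVanish j)
  · rintro ⟨hCM, hXM⟩
    have hE := (K.forall_extendsTo_iff hCM).2 hXM
    exact {
      extVanish := extVanishAll_iff.2 hCM
      torVanish := F.torVanishAll_iff.2 fun j => (K.extendsTo_add_two_iff hEnd j).1 (hE _)
      nuBij := ⟨(K.extendsTo_one_iff_injective_nuFun hEnd).1 (hE 1),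
        (K.extendsTo_zero_iff_surjective_nuFun hEnd).1 (hE 0)⟩ }

end FinCoresolution

end BassClass

/-! ## Lifting through exact complexes of injectives -/

section Lifting

variable {A : Type u} [Ring A] {G G' X Y I : Type u}
  [AddCommGroup G] [Module A G] [AddCommGroup G'] [Module A G'] [AddCommGroup X] [Module A X]
  [AddCommGroup Y] [Module A Y] [AddCommGroup I] [Module A I]
  {θ : G →ₗ[A] G'} {U V W : Submodule A G} {U' V' : Submodule A G'}

theorem exists_comp_eq_of_ker_le [Module.Injective A I] {f : X →ₗ[A] Y} {g : X →ₗ[A] I}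
    (h : LinearMap.ker f ≤ LinearMap.ker g) : ∃ g' : Y →ₗ[A] I, g' ∘ₗ f = g := by
  obtain ⟨k, rfl⟩ := exists_comp_eq_of_surjective f.surjective_rangeRestrict
    (f.ker_rangeRestrict.trans_le h)
  obtain ⟨g', rfl⟩ := Module.Injective.extension_property A _ _ _ _
    (LinearMap.range f).injective_subtype k
  exact ⟨g', rfl⟩

/-- `θ` induces an isomorphism from the subquotient `U ⧸ V` to the subquotient `U' ⧸ V'`. -/
structure InducesIso (θ : G →ₗ[A] G') (U V : Submodule A G) (U' V' : Submodule A G') : Prop where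
  le : V ≤ U
  map_mem : ∀ x ∈ U, θ x ∈ U'
  map_mem_iff : ∀ x ∈ U, θ x ∈ V' ↔ x ∈ V
  exists_sub_mem : ∀ y ∈ U', ∃ x ∈ U, y - θ x ∈ V'

namespace InducesIso

theorem of_surjective (hθ : Surjective θ) : InducesIso θ ⊤ (LinearMap.ker θ) ⊤ ⊥ where
  le := le_top
  map_mem _ _ := trivial
  map_mem_iff _ _ := Iff.rfl
  exists_sub_mem y _ := by
    obtain ⟨x, rfl⟩ := hθ y
    exact ⟨x, trivial, (sub_self _ : _ = (0 : G'))⟩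

theorem of_disjoint_range (hθ : Injective θ) (h : Disjoint U' (LinearMap.range θ))
    (a : U' →ₗ[A] G) : InducesIso θ ⊤ ⊥ (U' ⊔ LinearMap.range θ)
      (LinearMap.range (U'.subtype - θ ∘ₗ a)) where
  le := bot_le
  map_mem x _ := Submodule.mem_sup_right ⟨x, rfl⟩
  map_mem_iff x _ := by
    constructor
    · rintro ⟨u, hu : (u : G') - θ (a u) = θ x⟩
      have hu₀ : u = 0 := Subtype.ext <| Submodule.disjoint_def.1 h u u.2
        ⟨x + a u, by rw [map_add, ← hu, sub_add_cancel]⟩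
      rw [hu₀, map_zero, map_zero, Submodule.coe_zero, sub_zero] at hu
      exact hθ (hu.symm.trans (map_zero θ).symm)
    · rintro rfl
      simp
  exists_sub_mem y hy := by
    obtain ⟨u, hu, _, ⟨x, rfl⟩, rfl⟩ := Submodule.mem_sup.1 hy
    exact ⟨a ⟨u, hu⟩ + x, trivial, ⟨u, hu⟩, by simp⟩

variable (h : InducesIso θ U V U' V')
include h

theorem exists_extension [Module.Injective A I] (f : G →ₗ[A] I) (hf : ∀ x ∈ V, f x = 0) :
    ∃ f' : G' →ₗ[A] I, (∀ x ∈ U, f' (θ x) = f x) ∧ ∀ y ∈ V', f' y = 0 := by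
  obtain ⟨f', hf'⟩ := exists_comp_eq_of_ker_le (f := V'.mkQ ∘ₗ θ ∘ₗ U.subtype)
    (g := f ∘ₗ U.subtype) fun x hx => hf x <| (h.map_mem_iff x x.2).1 <| by simpa using hx
  exact ⟨f' ∘ₗ V'.mkQ, fun x hx => LinearMap.congr_fun hf' ⟨x, hx⟩, fun y hy => by
    simp [(Submodule.Quotient.mk_eq_zero V').2 hy]⟩

theorem exists_apply_eq {f : G' →ₗ[A] X} (hf : ∀ y ∈ V', f y = 0) {y : G'} (hy : y ∈ U') :
    ∃ x ∈ U, y - θ x ∈ V' ∧ f y = f (θ x) := by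
  obtain ⟨x, hx, hxy⟩ := h.exists_sub_mem y hy
  exact ⟨x, hx, hxy, sub_eq_zero.1 ((map_sub f y _).symm.trans (hf _ hxy))⟩

end InducesIso

theorem single_mem_finsuppSubmodule {ι : Type*} {U : ι → Submodule A G} {i : ι} {x : G}
    (hx : x ∈ U i) : Finsupp.single i x ∈ Finsupp.submodule U := fun j => by
  rcases eq_or_ne i j with rfl | h
  · rwa [Finsupp.single_eq_same]
  · rw [Finsupp.single_eq_of_ne' h]
    exact (U j).zero_mem

namespace ZComplex

variable {E : ZComplex A}

/-- Every map from the subquotient `U ⧸ V` to the cycles of `E` lifts to the preceding term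
of `E`. Maps from `U ⧸ V` are encoded as maps from `G` which vanish on `V`; this is harmless when
the terms of `E` are injective. -/
def LiftsOn (E : ZComplex A) (U V : Submodule A G) : Prop :=
  ∀ (i : ℤ) (g : G →ₗ[A] E.P (i + 1)), (∀ x ∈ U, E.d (i + 1) (g x) = 0) → (∀ x ∈ V, g x = 0) →
    ∃ h : G →ₗ[A] E.P i, (∀ x ∈ U, E.d i (h x) = g x) ∧ ∀ x ∈ V, h x = 0

theorem liftsOn_iff_of_inducesIso (hE : ∀ i, Module.Injective A (E.P i))
    (hθ : InducesIso θ U V U' V') : E.LiftsOn U V ↔ E.LiftsOn U' V' := by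
  constructor
  · intro H i g' hg hg'
    obtain ⟨h, hh, hh'⟩ := H i (g' ∘ₗ θ) (fun x hx => hg _ (hθ.map_mem x hx))
      fun x hx => hg' _ ((hθ.map_mem_iff x (hθ.le hx)).2 hx)
    obtain ⟨h', hh₁, hh₂⟩ := hθ.exists_extension h hh'
    refine ⟨h', fun y hy => ?_, hh₂⟩
    obtain ⟨x, hx, hxy, e⟩ := hθ.exists_apply_eq hh₂ hy
    rw [e, hh₁ x hx, hh x hx, ← sub_eq_zero, LinearMap.comp_apply, ← map_sub, ← neg_sub y,
      map_neg, hg' _ hxy, neg_zero]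
  · intro H i g hg hg'
    obtain ⟨g', e₁, e₂⟩ := hθ.exists_extension g hg'
    obtain ⟨h', hh, hh'⟩ := H i g' (fun y hy => by
      obtain ⟨x, hx, -, e⟩ := hθ.exists_apply_eq e₂ hy
      rw [e, e₁ x hx, hg x hx]) e₂
    exact ⟨h' ∘ₗ θ, fun x hx => (hh _ (hθ.map_mem x hx)).trans (e₁ x hx), fun x hx =>
      hh' _ ((hθ.map_mem_iff x (hθ.le hx)).2 hx)⟩

theorem LiftsOn.of_sub (hex : E.IsExact) (hVW : V ≤ W) (hWU : W ≤ U) (hU : E.LiftsOn U V)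
    (hW : E.LiftsOn W V) : E.LiftsOn U W := by
  intro i g hg hg'
  obtain ⟨j, rfl⟩ : ∃ j, i = j + 1 := ⟨i - 1, by ring⟩
  obtain ⟨h, hh, hh'⟩ := hU _ g hg fun x hx => hg' x (hVW hx)
  obtain ⟨k, hk, -⟩ := hW j h (fun x hx => by rw [hh x (hWU hx), hg' x hx]) hh'
  refine ⟨h - E.d j ∘ₗ k, fun x hx => ?_, fun x hx => by simp [hk x hx]⟩
  rw [LinearMap.sub_apply, LinearMap.comp_apply, map_sub, (hex j).apply_apply_eq_zero, sub_zero,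
    hh x hx]

theorem LiftsOn.finsupp {ι : Type u} {U V : ι → Submodule A G}
    (H : ∀ i, E.LiftsOn (U i) (V i)) :
    E.LiftsOn (Finsupp.submodule U) (Finsupp.submodule V) := by
  intro i g hg hg'
  choose h hh hh' using fun j => H j i (g ∘ₗ Finsupp.lsingle j)
    (fun x hx => hg _ (single_mem_finsuppSubmodule hx))
    (fun x hx => hg' _ (single_mem_finsuppSubmodule hx))
  refine ⟨Finsupp.lsum ℕ h, fun x hx => ?_, fun x hx => ?_⟩
  · conv_rhs => rw [← Finsupp.sum_single x]
    rw [Finsupp.lsum_apply, map_finsuppSum, map_finsuppSum]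
    exact Finsupp.sum_congr fun j _ => hh j _ (hx j)
  · exact Finset.sum_eq_zero fun j _ => hh' j _ (hx j)

end ZComplex

end Lifting

section Filtration

variable {A : Type u} [Ring A] {G : Type u} [AddCommGroup G] [Module A G]
  {ι : Type*} [LinearOrder ι]

namespace ZComplex

variable {E : ZComplex A} {i : ℤ} {g : G →ₗ[A] E.P (i + 1)} {F : LowerSet ι → Submodule A G}

/-- A lift of `g`, vanishing on `F ⊥`, which is defined on one of the members of the
filtration `F`. -/
structure IsPartialLift (g : G →ₗ[A] E.P (i + 1)) (F : LowerSet ι → Submodule A G)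
    (f : G →ₗ.[A] E.P i) : Prop where
  exists_domain_eq : ∃ s, f.domain = F s
  eq_zero : ∀ x : f.domain, (x : G) ∈ F ⊥ → f x = 0
  d_apply : ∀ x : f.domain, E.d i (f x) = g x

namespace IsPartialLift

theorem bot_le_domain {f : G →ₗ.[A] E.P i} (hF : Monotone F) (hf : IsPartialLift g F f) :
    F ⊥ ≤ f.domain := by
  obtain ⟨s, hs⟩ := hf.exists_domain_eq
  exact hs ▸ hF bot_le

theorem sSup {c : Set (G →ₗ.[A] E.P i)} (hF : Monotone F)
    (hcont : ∀ s, F s ≤ (⨆ β ∈ s, F (.Iic β)) ⊔ F ⊥) (hne : c.Nonempty)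
    (hdir : DirectedOn (· ≤ ·) c) (hc : ∀ f ∈ c, IsPartialLift g F f) :
    IsPartialLift g F (LinearPMap.sSup c hdir) := by
  have hmem : ∀ x : (LinearPMap.sSup c hdir).domain, ∃ f ∈ c, ∃ y : f.domain,
      (y : G) = x ∧ LinearPMap.sSup c hdir x = f y := by
    rintro ⟨x, hx⟩
    obtain ⟨f, hf, hfx⟩ := (LinearPMap.mem_domain_sSup_iff hne hdir).1 hx
    exact ⟨f, hf, ⟨x, hfx⟩, rfl, LinearPMap.sSup_apply hdir hf ⟨x, hfx⟩⟩
  have hle : ∀ f ∈ c, f.domain ≤ (LinearPMap.sSup c hdir).domain := fun f hf =>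
    (LinearPMap.le_sSup hdir hf).1
  refine ⟨⟨SupSet.sSup {s | F s ≤ (LinearPMap.sSup c hdir).domain}, le_antisymm ?_ ?_⟩,
    fun x hx => ?_, fun x => ?_⟩
  · intro x hx
    obtain ⟨f, hf, hfx⟩ := (LinearPMap.mem_domain_sSup_iff hne hdir).1 hx
    obtain ⟨s, hs⟩ := (hc f hf).exists_domain_eq
    rw [hs] at hfx
    exact hF (le_sSup (hs.symm.trans_le (hle f hf))) hfx
  · obtain ⟨f, hf⟩ := hne
    refine (hcont _).trans (sup_le (iSup₂_le fun β hβ => ?_)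
      (((hc f hf).bot_le_domain hF).trans (hle f hf)))
    obtain ⟨s, hs, hβs⟩ := LowerSet.mem_sSup_iff.1 hβ
    exact (hF (LowerSet.Iic_le.2 hβs)).trans hs
  · obtain ⟨f, hf, y, hyx, e⟩ := hmem x
    rw [e, (hc f hf).eq_zero y (hyx ▸ hx)]
  · obtain ⟨f, hf, y, hyx, e⟩ := hmem x
    rw [e, (hc f hf).d_apply y, hyx]

theorem exists_le (hE : Module.Injective A (E.P i)) (hex : E.IsExact) (hF : Monotone F)
    {β : ι} (H : E.LiftsOn (F (.Iic β)) (F (.Iio β))) (hg : ∀ x ∈ F (.Iic β), E.d (i + 1) (g x) = 0)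
    {f : G →ₗ.[A] E.P i} (hf : IsPartialLift g F f) (hβ : f.domain = F (.Iio β)) :
    ∃ f', IsPartialLift g F f' ∧ f ≤ f' ∧ f'.domain = F (.Iic β) := by
  obtain ⟨h, hh⟩ := Module.Injective.extension_property A _ _ _ f.domain.subtype
    f.domain.injective_subtype f.toFun
  replace hh : ∀ x : f.domain, h x = f x := LinearMap.congr_fun hh
  obtain ⟨k, hk, hk₀⟩ := H i (g - E.d i ∘ₗ h)
    (fun x hx => by simp [hg x hx, (hex i).apply_apply_eq_zero])
    fun x hx => by
      rw [← hβ] at hx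
      simp [hh ⟨x, hx⟩, hf.d_apply ⟨x, hx⟩]
  rw [← hβ] at hk₀
  have heq : ∀ x : f.domain, (h + k) x = f x := fun x => by simp [hh, hk₀ x x.2]
  refine ⟨(h + k).toPMap (F (.Iic β)), ⟨⟨_, rfl⟩, fun x hx => ?_, fun x => ?_⟩, ⟨?_, ?_⟩, rfl⟩
  · have hxf := hf.bot_le_domain hF hx
    exact (heq ⟨x, hxf⟩).trans (hf.eq_zero ⟨x, hxf⟩ hx)
  · change E.d i (h x + k x) = g x
    rw [map_add, hk x x.2]
    simp
  · exact hβ.trans_le (hF fun γ hγ => le_of_lt hγ)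
  · intro x y hxy
    change f x = (h + k) y
    rw [← hxy, heq]

end IsPartialLift

theorem LiftsOn.of_filtration [WellFoundedLT ι] (hE : ∀ i, Module.Injective A (E.P i))
    (hex : E.IsExact) (hF : Monotone F) (hcont : ∀ s, F s ≤ (⨆ β ∈ s, F (.Iic β)) ⊔ F ⊥)
    (H : ∀ β, E.LiftsOn (F (.Iic β)) (F (.Iio β))) : E.LiftsOn (F ⊤) (F ⊥) := by
  intro i g hg hg₀
  have hbot : IsPartialLift g F ((0 : G →ₗ[A] E.P i).toPMap (F ⊥)) :=
    ⟨⟨⊥, rfl⟩, fun _ _ => rfl, fun x => (map_zero _).trans (hg₀ x x.2).symm⟩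
  obtain ⟨f, -, hf⟩ := zorn_le_nonempty₀ {f | IsPartialLift g F f}
    (fun c hc hchain f hfc => ⟨_, .sSup hF hcont ⟨f, hfc⟩ hchain.directedOn hc, fun _ hfc' =>
      LinearPMap.le_sSup hchain.directedOn hfc'⟩) _ hbot
  have hbot_le := hf.prop.bot_le_domain hF
  have hall : ∀ β, F (.Iic β) ≤ f.domain := fun β => by
    induction β using WellFoundedLT.induction with
    | ind β ih =>
      obtain ⟨s, hs⟩ := hf.prop.exists_domain_eq
      by_cases hβs : β ∈ s
      · exact hs ▸ hF (LowerSet.Iic_le.2 hβs)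
      · have hs_le : s ≤ .Iio β := fun γ hγ => lt_of_not_ge fun h => hβs (s.lower h hγ)
        have hdom : f.domain = F (.Iio β) := le_antisymm (hs.trans_le (hF hs_le))
          ((hcont _).trans (sup_le (iSup₂_le ih) hbot_le))
        obtain ⟨f', hf', hle, hdom'⟩ := hf.prop.exists_le (hE i) hex hF (H β)
          (fun x hx => hg x (hF le_top hx)) hdom
        exact hdom' ▸ (hf.le_of_ge hf' hle).1
  have htop : F ⊤ ≤ f.domain := (hcont ⊤).trans (sup_le (iSup₂_le fun β _ => hall β) hbot_le)
  obtain ⟨h, hh⟩ := Module.Injective.extension_property A _ _ _ f.domain.subtype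
    f.domain.injective_subtype f.toFun
  replace hh : ∀ x : f.domain, h x = f x := LinearMap.congr_fun hh
  exact ⟨h, fun x hx => (congrArg (E.d i) (hh ⟨x, htop hx⟩)).trans (hf.prop.d_apply ⟨x, htop hx⟩),
    fun x hx => (hh ⟨x, hbot_le hx⟩).trans (hf.prop.eq_zero ⟨x, hbot_le hx⟩ hx)⟩

end ZComplex

end Filtration

section Chain

variable {A : Type u} [Ring A] {G : Type u} [AddCommGroup G] [Module A G]

theorem mem_biSup_of_monotone {ι : Type*} [LinearOrder ι] {U : ι → Submodule A G}
    (hU : Monotone U) {s : Set ι} {y : G} (hy : y ∈ ⨆ i ∈ s, U i) : y = 0 ∨ ∃ i ∈ s, y ∈ U i := by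
  rw [iSup_subtype'] at hy
  rcases isEmpty_or_nonempty s with h | h
  · left
    rwa [iSup_of_empty, Submodule.mem_bot] at hy
  · right
    obtain ⟨i, hi⟩ := (Submodule.mem_iSup_of_directed _
      ((hU.comp (Subtype.mono_coe _)).directed_le)).1 hy
    exact ⟨i, i.2, hi⟩

section PartialSum

variable {ι : Type*} {s t : Set ι} {v : ι →₀ G} {W : Submodule A G}

open Classical in
/-- The sum of the values of a finitely supported function over the indices in `s`. -/
def partialSum (A : Type u) [Ring A] {G : Type u} [AddCommGroup G] [Module A G] {ι : Type*}
    (s : Set ι) : (ι →₀ G) →ₗ[A] G :=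
  Finsupp.lsum ℕ fun i => if i ∈ s then LinearMap.id else 0

open Classical in
theorem partialSum_apply (s : Set ι) (v : ι →₀ G) :
    partialSum A s v = ∑ i ∈ v.support with i ∈ s, v i := by
  rw [partialSum, Finsupp.lsum_apply, Finsupp.sum, Finset.sum_filter]
  exact Finset.sum_congr rfl fun i _ => by split_ifs <;> rfl

theorem partialSum_single_of_mem {i : ι} (h : i ∈ s) (x : G) :
    partialSum A s (Finsupp.single i x) = x := by
  simp [partialSum, h]

theorem partialSum_single_of_notMem {i : ι} (h : i ∉ s) (x : G) :
    partialSum A s (Finsupp.single i x) = 0 := by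
  simp [partialSum, h]

theorem partialSum_singleton (i : ι) (v : ι →₀ G) : partialSum A {i} v = v i := by
  classical
  rw [partialSum_apply, Finset.sum_filter]
  simp [eq_comm]

theorem partialSum_mem (h : ∀ i ∈ s, v i ∈ W) : partialSum A s v ∈ W := by
  classical
  rw [partialSum_apply]
  exact W.sum_mem fun i hi => h i (Finset.mem_filter.1 hi).2

theorem partialSum_add_sdiff (h : s ⊆ t) (v : ι →₀ G) :
    partialSum A s v + partialSum A (t \ s) v = partialSum A t v := by
  classical
  simp only [partialSum_apply, Finset.sum_filter, ← Finset.sum_add_distrib]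
  refine Finset.sum_congr rfl fun i _ => ?_
  by_cases hs : i ∈ s
  · simp [hs, h hs]
  · simp [hs]

end PartialSum

variable {ι : Type u} [LinearOrder ι] {U V : ι → Submodule A G}

/-- The finitely supported families in `U` which lie in `V` outside of `s`, and whose sum over `s`
lies in the union of the `V i` for `i ∈ s`. This filters the submodule of the families in `U` with
sum in `⨆ i, V i`, and its successive subquotients are those of the unions of initial segments
of the chains `U` and `V`. -/
def chainFiltration (U V : ι → Submodule A G) (s : LowerSet ι) : Submodule A (ι →₀ G) where
  carrier := {v | (∀ i, v i ∈ U i) ∧ (∀ i ∉ s, v i ∈ V i) ∧ partialSum A s v ∈ ⨆ i ∈ s, V i}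
  add_mem' ha hb := ⟨fun i => add_mem (ha.1 i) (hb.1 i),
    fun i hi => add_mem (ha.2.1 i hi) (hb.2.1 i hi), by
      rw [map_add]
      exact add_mem ha.2.2 hb.2.2⟩
  zero_mem' := ⟨fun _ => zero_mem _, fun _ _ => zero_mem _, by
    rw [map_zero]
    exact zero_mem _⟩
  smul_mem' r _ ha := ⟨fun i => Submodule.smul_mem _ r (ha.1 i),
    fun i hi => Submodule.smul_mem _ r (ha.2.1 i hi), by
      rw [map_smul]
      exact Submodule.smul_mem _ r ha.2.2⟩

theorem chainFiltration_bot (hVU : V ≤ U) : chainFiltration U V ⊥ = Finsupp.submodule V :=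
  le_antisymm (fun _ hv i => hv.2.1 i id) fun _ hv =>
    ⟨fun i => hVU i (hv i), fun i _ => hv i, partialSum_mem fun _ hi => absurd hi id⟩

theorem chainFiltration_top : chainFiltration U V ⊤ =
    Finsupp.submodule U ⊓ (⨆ i, V i).comap (partialSum A .univ) := by
  have hV : ⨆ i ∈ (⊤ : LowerSet ι), V i = ⨆ i, V i := iSup_congr fun i => iSup_pos trivial
  refine le_antisymm (fun v hv => ⟨hv.1, hV ▸ hv.2.2⟩) fun v hv =>
    ⟨hv.1, fun i hi => absurd trivial hi, hV.symm ▸ hv.2⟩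

theorem chainFiltration_monotone : Monotone (chainFiltration U V) := by
  refine fun s t hst v hv => ⟨hv.1, fun i hi => hv.2.1 i fun h => hi (hst h), ?_⟩
  rw [← partialSum_add_sdiff (LowerSet.coe_subset_coe.2 hst)]
  refine add_mem ((biSup_mono fun _ h => hst h : ⨆ i ∈ s, V i ≤ ⨆ i ∈ t, V i) hv.2.2)
    (partialSum_mem fun i hi => ?_)
  exact Submodule.mem_iSup_of_mem i (Submodule.mem_iSup_of_mem hi.1 (hv.2.1 i hi.2))

theorem chainFiltration_le_biSup (hV : Monotone V) (s : LowerSet ι) :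
    chainFiltration U V s ≤
      (⨆ β ∈ s, chainFiltration U V (.Iic β)) ⊔ chainFiltration U V ⊥ := by
  classical
  intro v hv
  rcases s.carrier.eq_empty_or_nonempty with hs | ⟨γ₀, hγ₀⟩
  · obtain rfl : s = ⊥ := SetLike.coe_injective hs
    exact Submodule.mem_sup_right hv
  obtain ⟨γ, hγ, hγv⟩ : ∃ γ ∈ s, partialSum A s v ∈ V γ := by
    rcases mem_biSup_of_monotone hV (s := s) hv.2.2 with h | h
    · exact ⟨γ₀, hγ₀, h ▸ zero_mem _⟩
    · exact h
  let T := insert γ {i ∈ v.support | i ∈ s}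
  have hT : T.Nonempty := Finset.insert_nonempty _ _
  have hβ : T.max' hT ∈ s := by
    rcases Finset.mem_insert.1 (T.max'_mem hT) with h | h
    · exact h ▸ hγ
    · exact (Finset.mem_filter.1 h).2
  have hzero : ∀ i ∈ s, i ∉ LowerSet.Iic (T.max' hT) → v i = 0 := by
    intro i hi hi'
    by_contra h
    exact hi' (T.le_max' i (Finset.mem_insert_of_mem
      (Finset.mem_filter.2 ⟨Finsupp.mem_support_iff.2 h, hi⟩)))
  refine Submodule.mem_sup_left (Submodule.mem_iSup_of_mem _ (Submodule.mem_iSup_of_mem hβ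
    ⟨hv.1, fun i hi => ?_, ?_⟩))
  · by_cases his : i ∈ s
    · exact hzero i his hi ▸ zero_mem _
    · exact hv.2.1 i his
  · have hdiff : partialSum A (s \ LowerSet.Iic (T.max' hT)) v = 0 :=
      (Submodule.mem_bot A).1 (partialSum_mem fun i hi => hzero i hi.1 hi.2)
    rw [← partialSum_add_sdiff (LowerSet.Iic_le.2 hβ), hdiff, add_zero] at hγv
    exact Submodule.mem_iSup_of_mem γ (Submodule.mem_iSup_of_mem
      (T.le_max' γ (Finset.mem_insert_self _ _)) hγv)

theorem inducesIso_chainFiltration (hU : Monotone U) (hV : Monotone V) (β : ι) :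
    InducesIso (partialSum A (LowerSet.Iio β : Set ι)) (chainFiltration U V (.Iic β))
      (chainFiltration U V (.Iio β)) (⨆ γ < β, U γ) (⨆ γ < β, V γ) where
  le := chainFiltration_monotone (LowerSet.Ioi_le_Ici β)
  map_mem v hv := partialSum_mem fun i hi =>
    Submodule.mem_iSup_of_mem i (Submodule.mem_iSup_of_mem hi (hv.1 i))
  map_mem_iff v hv := by
    refine ⟨fun h => ⟨hv.1, fun i hi => ?_, h⟩, fun h => h.2.2⟩
    rcases (not_lt.1 hi).eq_or_lt with rfl | hlt
    · have key := partialSum_add_sdiff (A := A) (Set.Iio_subset_Iic_self (a := β)) v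
      rw [Set.Iic_sdiff_Iio_same, partialSum_singleton] at key
      rw [eq_sub_iff_add_eq'.2 key]
      have hle : ⨆ γ ∈ LowerSet.Iic β, V γ ≤ V β := iSup₂_le fun γ hγ => hV hγ
      have hlt : ⨆ γ < β, V γ ≤ V β := iSup₂_le fun γ hγ => hV (le_of_lt hγ)
      exact sub_mem (hle hv.2.2) (hlt h)
    · exact hv.2.1 i (not_le.2 hlt)
  exists_sub_mem y hy := by
    rcases mem_biSup_of_monotone hU (s := Set.Iio β) hy with rfl | ⟨i, hi, hy⟩
    · exact ⟨0, zero_mem _, by simp⟩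
    refine ⟨Finsupp.single i y - Finsupp.single β y, ⟨?_, fun j hj => ?_, ?_⟩, ?_⟩
    · exact (Finsupp.submodule U).sub_mem (single_mem_finsuppSubmodule hy)
        (single_mem_finsuppSubmodule (hU hi.le hy))
    · have hj : β < j := not_le.1 hj
      rw [Finsupp.sub_apply, Finsupp.single_eq_of_ne (lt_trans hi hj).ne',
        Finsupp.single_eq_of_ne hj.ne', sub_self]
      exact zero_mem _
    · rw [map_sub, partialSum_single_of_mem (s := (LowerSet.Iic β : Set ι)) (i := i) (le_of_lt hi),
        partialSum_single_of_mem (s := (LowerSet.Iic β : Set ι)) le_rfl, sub_self]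
      exact zero_mem _
    · rw [map_sub, partialSum_single_of_mem (s := (LowerSet.Iio β : Set ι)) (i := i) hi,
        partialSum_single_of_notMem (s := (LowerSet.Iio β : Set ι)) (lt_irrefl β), sub_zero,
        sub_self]
      exact zero_mem _

theorem inducesIso_partialSum_univ (hU : Monotone U) :
    InducesIso (partialSum A .univ) (Finsupp.submodule U) (chainFiltration U V ⊤)
      (⨆ i, U i) (⨆ i, V i) := by
  rw [chainFiltration_top]
  refine ⟨inf_le_left, fun v hv => partialSum_mem fun i _ => Submodule.mem_iSup_of_mem i (hv i),
    fun v hv => ⟨fun h => ⟨hv, h⟩, fun h => h.2⟩, fun y hy => ?_⟩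
  rw [← iSup_univ] at hy
  rcases mem_biSup_of_monotone hU (s := .univ) hy with rfl | ⟨i, -, hy⟩
  · exact ⟨0, zero_mem _, by simp⟩
  · refine ⟨Finsupp.single i y, single_mem_finsuppSubmodule hy, ?_⟩
    rw [partialSum_single_of_mem (Set.mem_univ i), sub_self]
    exact zero_mem _

namespace ZComplex

variable {E : ZComplex A}

variable [WellFoundedLT ι] (hE : ∀ i, Module.Injective A (E.P i)) (hex : E.IsExact)
  (hU : Monotone U) (hV : Monotone V) (hVU : V ≤ U) (H : ∀ i, E.LiftsOn (U i) (V i))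
include hE hex hU hV hVU H

theorem LiftsOn.iSup_of_initial (Hlt : ∀ i, E.LiftsOn (⨆ j < i, U j) (⨆ j < i, V j)) :
    E.LiftsOn (⨆ i, U i) (⨆ i, V i) := by
  have hF := LiftsOn.of_filtration hE hex chainFiltration_monotone (chainFiltration_le_biSup hV)
    fun β => (liftsOn_iff_of_inducesIso hE (inducesIso_chainFiltration hU hV β)).2 (Hlt β)
  rw [chainFiltration_bot hVU] at hF
  refine (liftsOn_iff_of_inducesIso hE (inducesIso_partialSum_univ hU)).1
    (LiftsOn.of_sub hex ?_ ?_ (LiftsOn.finsupp H) hF)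
  · exact (chainFiltration_bot hVU).symm.trans_le (chainFiltration_monotone bot_le)
  · exact fun v hv => hv.1

theorem LiftsOn.iSup_wellOrder : E.LiftsOn (⨆ i, U i) (⨆ i, V i) := by
  refine LiftsOn.iSup_of_initial hE hex hU hV hVU H fun i => ?_
  induction i using WellFoundedLT.induction with
  | ind i ih =>
    have hiSup : ∀ (W : ι → Submodule A G) (k : Set.Iio i),
        (⨆ j < k, W j) = ⨆ j < (k : ι), W j := fun W k => le_antisymm
      (iSup₂_le fun j hj => le_iSup₂_of_le (f := fun j (_ : j < (k : ι)) => W j) (j : ι) hj le_rfl)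
      (iSup₂_le fun j hj => le_iSup₂_of_le (f := fun (j : Set.Iio i) (_ : j < k) => W j)
        ⟨j, hj.trans k.2⟩ hj le_rfl)
    rw [iSup_subtype' (f := fun j _ => U j), iSup_subtype' (f := fun j _ => V j)]
    refine LiftsOn.iSup_of_initial hE hex (ι := Set.Iio i) (fun _ _ h => hU h)
      (fun _ _ h => hV h) (fun a => hVU a) (fun a => H a) fun k => ?_
    rw [hiSup U k, hiSup V k]
    exact ih k k.2

end ZComplex

end Chain

section Directed

theorem exists_monotone_finset_bound (α : Type*) [Preorder α] [IsDirectedOrder α] [Nonempty α] :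
    ∃ φ : Finset α → α, Monotone φ ∧ ∀ F, ∀ x ∈ F, x ≤ φ F := by
  classical
  have hex : ∀ (F : Finset α) (ih : ∀ F' ⊂ F, α), ∃ M, (∀ x ∈ F, x ≤ M) ∧
      ∀ F' (h : F' ⊂ F), ih F' h ≤ M := by
    intro F ih
    obtain ⟨M, hM⟩ := Finset.exists_le (F ∪ F.ssubsets.attach.image
      fun F' : {x // x ∈ F.ssubsets} => ih F'.1 (Finset.mem_ssubsets.1 F'.2))
    exact ⟨M, fun x hx => hM x (Finset.mem_union_left _ hx), fun F' h =>
      hM _ (Finset.mem_union_right _ (Finset.mem_image.2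
        ⟨⟨F', Finset.mem_ssubsets.2 h⟩, Finset.mem_attach _ _, rfl⟩))⟩
  choose step hstep₁ hstep₂ using hex
  refine ⟨Finset.strongInduction step, fun F' F h => ?_, fun F x hx => ?_⟩
  · rcases eq_or_ne F' F with rfl | hne
    · exact le_rfl
    · rw [Finset.strongInduction_eq step F]
      exact hstep₂ F (fun t _ => Finset.strongInduction step t) F'
        (Finset.ssubset_iff_subset_ne.2 ⟨h, hne⟩)
  · rw [Finset.strongInduction_eq]
    exact hstep₁ _ _ _ hx

theorem exists_wellOrder_chain_of_infinite {α : Type u} {t : Set α} (ht : t.Infinite) :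
    ∃ (ι : Type u) (_ : LinearOrder ι) (_ : WellFoundedLT ι) (T : ι → Set α), Monotone T ∧
      (∀ i, T i ⊆ t) ∧ (∀ i, Cardinal.mk (T i) < Cardinal.mk t) ∧
      ∀ F : Finset α, ↑F ⊆ t → ∃ i, ↑F ⊆ T i := by
  classical
  have hc : Cardinal.aleph0 ≤ Cardinal.mk t := Cardinal.infinite_iff.1 ht.to_subtype
  let ι := (Cardinal.mk t).ord.ToType
  obtain ⟨e⟩ : Nonempty (ι ≃ t) := Cardinal.eq.1 (Cardinal.mk_ord_toType _)
  have hlt : ∀ i : ι, Cardinal.mk (Set.Iic i) < Cardinal.mk t := by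
    intro i
    have h := Cardinal.mk_Iio_lt i (by rw [Cardinal.mk_ord_toType, Ordinal.type_toType])
    rw [Cardinal.mk_ord_toType] at h
    rw [← Set.Iio_insert]
    exact Cardinal.mk_insert_le.trans_lt
      (Cardinal.add_lt_of_lt hc h (Cardinal.one_lt_aleph0.trans_le hc))
  have hne : Nonempty ι := ⟨e.symm ⟨_, ht.nonempty.some_mem⟩⟩
  refine ⟨ι, inferInstance, inferInstance, fun i => (fun j => (e j : α)) '' Set.Iic i,
    fun i j h => Set.image_mono (Set.Iic_subset_Iic.2 h), ?_,
    fun i => Cardinal.mk_image_le.trans_lt (hlt i), fun F hF => ?_⟩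
  · rintro i _ ⟨j, -, rfl⟩
    exact (e j).2
  · obtain ⟨M, hM⟩ := Finset.exists_le (F.attach.image fun x : {x // x ∈ F} => e.symm ⟨x, hF x.2⟩)
    exact ⟨M, fun x hx => ⟨e.symm ⟨x, hF hx⟩,
      hM _ (Finset.mem_image.2 ⟨⟨x, hx⟩, Finset.mem_attach _ _, rfl⟩), by simp⟩⟩

variable {L : Type u} [CompleteLattice L] {Q : L → Prop}
  (hQ : ∀ (ι : Type u) [LinearOrder ι] [WellFoundedLT ι] (F : ι → L), Monotone F →
    (∀ i, Q (F i)) → Q (⨆ i, F i))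
include hQ

theorem iSup_finset_of_iSup_wellOrder {α : Type u} {φ : Finset α → L} (hφ : Monotone φ)
    (hφQ : ∀ F, Q (φ F)) (t : Set α) : Q (⨆ F : {F : Finset α // ↑F ⊆ t}, φ F) := by
  let Ψ : Set α → L := fun t => ⨆ F : {F : Finset α // ↑F ⊆ t}, φ F
  have hle : ∀ {t : Set α} {F : Finset α}, ↑F ⊆ t → φ F ≤ Ψ t := fun {t F} h =>
    le_iSup (fun F : {F : Finset α // ↑F ⊆ t} => φ F) ⟨F, h⟩
  have hΨ : Monotone Ψ := fun _ _ h => iSup_le fun F => hle (F.2.trans h)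
  change Q (Ψ t)
  induction hc : Cardinal.mk t using WellFoundedLT.induction generalizing t with
  | ind c ih =>
    rcases t.finite_or_infinite with ht | ht
    · have e : Ψ t = φ ht.toFinset := le_antisymm
        (iSup_le fun F => hφ fun x hx => ht.mem_toFinset.2 (F.2 hx)) (hle (by simp))
      exact e ▸ hφQ _
    · obtain ⟨ι, _, _, T, hT, hTt, hlt, hF⟩ := exists_wellOrder_chain_of_infinite ht
      have e : Ψ t = ⨆ i, Ψ (T i) := by
        refine le_antisymm (iSup_le fun F => ?_) (iSup_le fun i => hΨ (hTt i))
        obtain ⟨i, hi⟩ := hF F F.2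
        exact (hle hi).trans (le_iSup (fun i => Ψ (T i)) i)
      exact e ▸ hQ ι _ (hΨ.comp hT) fun i => ih _ (hc ▸ hlt i) _ rfl

theorem sSup_of_directedOn_of_iSup_wellOrder {s : Set L} (hne : s.Nonempty)
    (hs : DirectedOn (· ≤ ·) s) (hsQ : ∀ x ∈ s, Q x) : Q (sSup s) := by
  have : Nonempty s := hne.to_subtype
  have : IsDirectedOrder s := ⟨fun x y => by
    obtain ⟨z, hz, hx, hy⟩ := hs x x.2 y y.2
    exact ⟨⟨z, hz⟩, hx, hy⟩⟩
  obtain ⟨φ, hmono, hφ⟩ := exists_monotone_finset_bound s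
  have h := iSup_finset_of_iSup_wellOrder hQ (φ := fun F => (φ F : L)) (fun _ _ h => hmono h)
    (fun F => hsQ _ (φ F).2) .univ
  convert h
  refine le_antisymm (sSup_le fun x hx => ?_) (iSup_le fun F => le_sSup (φ F).2)
  exact (Subtype.coe_le_coe.2 (hφ {⟨x, hx⟩} ⟨x, hx⟩ (by simp))).trans
    (le_iSup (fun F : {F : Finset s // (F : Set s) ⊆ .univ} => ((φ F : s) : L))
      ⟨_, Set.subset_univ _⟩)

end Directed

namespace ZComplex

theorem LiftsOn.sSup {A : Type u} [Ring A] {G : Type u} [AddCommGroup G] [Module A G]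
    {E : ZComplex A} (hE : ∀ i, Module.Injective A (E.P i)) (hex : E.IsExact)
    {s : Set (Submodule A G × Submodule A G)} (hne : s.Nonempty) (hs : DirectedOn (· ≤ ·) s)
    (H : ∀ P ∈ s, P.2 ≤ P.1 ∧ E.LiftsOn P.1 P.2) :
    E.LiftsOn (sSup s).1 (sSup s).2 := by
  have key := sSup_of_directedOn_of_iSup_wellOrder
    (Q := fun P : Submodule A G × Submodule A G => P.2 ≤ P.1 ∧ E.LiftsOn P.1 P.2)
    (fun ι _ _ F hF hFQ => ?_) hne hs H
  · exact key.2
  rw [Prod.fst_iSup, Prod.snd_iSup]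
  exact ⟨iSup_mono fun i => (hFQ i).1, LiftsOn.iSup_wellOrder hE hex (fun i j h => (hF h).1)
    (fun i j h => (hF h).2) (fun i => (hFQ i).1) fun i => (hFQ i).2⟩

end ZComplex

section Lazard

variable {A : Type u} [Ring A] {C D G : Type u} [AddCommGroup C] [Module A C]
  [AddCommGroup D] [Module A D] [AddCommGroup G] [Module A G]

/-- A map `p : G → D` through which every map `b : C ^ k → D` factors by a split inclusion avoiding
any prescribed finitely generated submodule. -/
def IsAmple (C : Type u) [AddCommGroup C] [Module A C] (p : G →ₗ[A] D) : Prop :=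
  ∀ U : Submodule A G, U.FG → ∀ (k : ℕ) (b : (Fin k → C) →ₗ[A] D),
    ∃ e : (Fin k → C) →ₗ[A] G, Injective e ∧ p ∘ₗ e = b ∧ Disjoint U (LinearMap.range e)

variable (A C D) in
theorem exists_isAmple : ∃ (G : Type u) (_ : AddCommGroup G) (_ : Module A G) (p : G →ₗ[A] D),
    IsAmple C p := by
  classical
  let J := Σ k : ℕ, ((Fin k → C) →ₗ[A] D) × ℕ
  refine ⟨Π₀ j : J, Fin j.1 → C, inferInstance, inferInstance,
    DFinsupp.lsum ℕ fun j => j.2.1, fun U ⟨s, hs⟩ k b => ?_⟩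
  let T : Finset J := s.biUnion DFinsupp.support
  let n := T.sup (fun j => j.2.2) + 1
  have hn : (⟨k, b, n⟩ : J) ∉ T := fun h =>
    (Nat.lt_succ_self n).not_ge ((Nat.succ_le_succ (Finset.le_sup (f := fun j : J => j.2.2) h)))
  have hU : ∀ x ∈ U, x ⟨k, b, n⟩ = 0 := by
    suffices h : U ≤ LinearMap.ker (DFinsupp.lapply (R := A) (⟨k, b, n⟩ : J)) from h
    rw [← hs, Submodule.span_le]
    intro x hx
    by_contra h
    exact hn (Finset.mem_biUnion.2 ⟨x, hx, DFinsupp.mem_support_iff.2 h⟩)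
  refine ⟨DFinsupp.lsingle (M := fun j : J => Fin j.1 → C) ⟨k, b, n⟩,
    fun _ _ h => DFinsupp.single_injective h, LinearMap.ext fun x => by simp,
    Submodule.disjoint_def.2 ?_⟩
  rintro _ hx ⟨y, rfl⟩
  have hy := hU _ hx
  rw [DFinsupp.lsingle_apply, DFinsupp.single_eq_same] at hy
  rw [hy, map_zero]

namespace IsAmple

variable {p : G →ₗ[A] D} (hp : IsAmple C p) (hD : FactorsThroughFinitePowers A C D)
include hp hD

theorem surjective : Surjective p := by
  intro d
  obtain ⟨k, a, b, hab⟩ := hD (Submodule.span A {d}) (Submodule.span A {d}).subtype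
  obtain ⟨e, -, rfl, -⟩ := hp ⊥ Submodule.fg_bot k b
  exact ⟨e (a ⟨d, Submodule.mem_span_singleton_self d⟩), LinearMap.congr_fun hab _⟩

variable {E : ZComplex A} (hE : ∀ i, Module.Injective A (E.P i))
  (hC : ∀ k, E.LiftsOn (⊤ : Submodule A (Fin k → C)) ⊥)
include hE hC

theorem exists_liftsOn [Module.Finite A C] {U V : Submodule A G} (hU : U.FG)
    (hV : V ≤ LinearMap.ker p) : ∃ U' V' : Submodule A G, U'.FG ∧ V' ≤ U' ∧ V' ≤ LinearMap.ker p ∧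
      E.LiftsOn U' V' ∧ U ≤ U' ∧ U ⊓ V ≤ V' := by
  have : Module.Finite A U := Module.Finite.iff_fg.2 hU
  obtain ⟨k, a, b, hab⟩ := hD (U ⧸ V.submoduleOf U)
    ((V.submoduleOf U).liftQ (p ∘ₗ U.subtype) fun x hx => hV hx)
  obtain ⟨e, he, rfl, hdisj⟩ := hp U hU k b
  have hiso := InducesIso.of_disjoint_range he hdisj (a ∘ₗ (V.submoduleOf U).mkQ)
  refine ⟨_, _, hU.sup (Module.Finite.iff_fg.1 inferInstance), ?_, ?_,
    (ZComplex.liftsOn_iff_of_inducesIso hE hiso).1 (hC k), le_sup_left, fun x hx => ?_⟩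
  · rintro _ ⟨u, rfl⟩
    exact sub_mem (Submodule.mem_sup_left u.2) (Submodule.mem_sup_right ⟨_, rfl⟩)
  · rintro _ ⟨u, rfl⟩
    have h : p (e (a ((V.submoduleOf U).mkQ u))) = p u := LinearMap.congr_fun hab _
    simp [← h]
  · have hx' : (V.submoduleOf U).mkQ ⟨x, hx.1⟩ = 0 :=
      (Submodule.Quotient.mk_eq_zero _).2 (show (⟨x, hx.1⟩ : U) ∈ V.submoduleOf U from hx.2)
    exact ⟨⟨x, hx.1⟩, by simp [hx']⟩

end IsAmple

/-- As in Lazard's theorem, `D` is a directed colimit of powers `C ^ k`; the directed system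
consists of subquotients of an ample presentation of `D`. -/
theorem liftsOn_of_factorsThroughFinitePowers [Module.Finite A C] {E : ZComplex A}
    (hE : ∀ i, Module.Injective A (E.P i)) (hex : E.IsExact)
    (hC : ∀ k, E.LiftsOn (⊤ : Submodule A (Fin k → C)) ⊥)
    (hD : FactorsThroughFinitePowers A C D) : E.LiftsOn (⊤ : Submodule A D) ⊥ := by
  obtain ⟨G, _, _, p, hp⟩ := exists_isAmple A C D
  let S : Set (Submodule A G × Submodule A G) := {P | P.1.FG ∧ P.2 ≤ P.1 ∧
    P.2 ≤ LinearMap.ker p ∧ E.LiftsOn P.1 P.2}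
  have hS : ∀ {U V : Submodule A G}, U.FG → V ≤ U → V ≤ LinearMap.ker p → ∃ P ∈ S, (U, V) ≤ P := by
    intro U V hU hVU hV
    obtain ⟨U', V', h₁, h₂, h₃, h₄, h₅, h₆⟩ := hp.exists_liftsOn hD hE hC hU hV
    exact ⟨(U', V'), ⟨h₁, h₂, h₃, h₄⟩, h₅, (le_inf hVU le_rfl).trans h₆⟩
  have hdir : DirectedOn (· ≤ ·) S := by
    intro P hP Q hQ
    obtain ⟨P', hP', hle⟩ := hS (hP.1.sup hQ.1) (sup_le_sup hP.2.1 hQ.2.1)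
      (sup_le hP.2.2.1 hQ.2.2.1)
    exact ⟨P', hP', (show P ≤ (P.1 ⊔ Q.1, P.2 ⊔ Q.2) from ⟨le_sup_left, le_sup_left⟩).trans hle,
      (show Q ≤ (P.1 ⊔ Q.1, P.2 ⊔ Q.2) from ⟨le_sup_right, le_sup_right⟩).trans hle⟩
  obtain ⟨P₀, hP₀, -⟩ := hS Submodule.fg_bot le_rfl bot_le
  have hsup : sSup S = (⊤, LinearMap.ker p) := by
    refine le_antisymm (sSup_le fun P hP => ⟨le_top, hP.2.2.1⟩) ⟨fun x _ => ?_, fun x hx => ?_⟩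
    · obtain ⟨P, hP, hle⟩ := hS (Submodule.fg_span_singleton x) bot_le bot_le
      exact (le_sSup hP).1 (hle.1 (Submodule.mem_span_singleton_self x))
    · obtain ⟨P, hP, hle⟩ := hS (Submodule.fg_span_singleton x) le_rfl
        ((Submodule.span_singleton_le_iff_mem x _).2 hx)
      exact (le_sSup hP).2 (hle.2 (Submodule.mem_span_singleton_self x))
  have h := ZComplex.LiftsOn.sSup hE hex ⟨P₀, hP₀⟩ hdir fun P hP => ⟨hP.2.1, hP.2.2.2⟩
  rw [hsup] at h
  exact (ZComplex.liftsOn_iff_of_inducesIso hE (InducesIso.of_surjective (hp.surjective hD))).1 h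

end Lazard

/-! ## Modules orthogonal to cycles -/

section CycleOrthogonality

variable {A : Type u} [Ring A] {X Y Z D : Type u} [AddCommGroup X] [Module A X] [AddCommGroup Y]
  [Module A Y] [AddCommGroup Z] [Module A Z] [AddCommGroup D] [Module A D]

namespace ZComplex

variable {E : ZComplex A}

/-- The differential of an exact complex, with values in the next module of cycles. -/
def toCycles (hex : E.IsExact) (i : ℤ) : E.P i →ₗ[A] LinearMap.ker (E.d (i + 1)) :=
  (E.d i).codRestrict _ fun x => (hex i).apply_apply_eq_zero x

theorem isSES_cycles (hex : E.IsExact) (i : ℤ) :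
    IsSES (LinearMap.ker (E.d i)).subtype (toCycles hex i) where
  inj := Subtype.val_injective
  surj := fun ⟨y, hy⟩ => by
    obtain ⟨x, rfl⟩ := (hex i y).1 hy
    exact ⟨x, rfl⟩
  exact := by
    rw [LinearMap.exact_iff, Submodule.range_subtype]
    exact LinearMap.ker_codRestrict _ _ _

/-- `D` is left orthogonal to all modules of cycles of `E`. -/
def OrthogonalToCycles (E : ZComplex A) (D : Type u) [AddCommGroup D] [Module A D] : Prop :=
  ∀ (i : ℤ) (n : ℕ), ExtZero A D (LinearMap.ker (E.d i)) (n + 1)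

section Characterizations

variable (hE : ∀ i, Module.Injective A (E.P i)) (hex : E.IsExact)
include hE hex

theorem orthogonalToCycles_iff_extZero_one :
    E.OrthogonalToCycles D ↔ ∀ i, ExtZero A D (LinearMap.ker (E.d i)) 1 := by
  refine ⟨fun h i => h i 0, fun h i n => ?_⟩
  induction n generalizing i with
  | zero => exact h i
  | succ n ih =>
    have := hE i
    exact (isSES_cycles hex i).covariant₁ (ih (i + 1)) .of_injective

theorem orthogonalToCycles_iff_exact : E.OrthogonalToCycles D ↔ ∀ i,
    Exact (fun f : D →ₗ[A] E.P i => E.d i ∘ₗ f)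
      (fun f : D →ₗ[A] E.P (i + 1) => E.d (i + 1) ∘ₗ f) := by
  rw [orthogonalToCycles_iff_extZero_one hE hex]
  refine forall_congr' fun i => ⟨fun h f => ⟨fun hf => ?_, ?_⟩, fun h => ?_⟩
  · obtain ⟨g, hg⟩ := (isSES_cycles hex i).exists_lift h (f.codRestrict _ (LinearMap.congr_fun hf))
    exact ⟨g, LinearMap.ext fun x => congrArg Subtype.val (LinearMap.congr_fun hg x)⟩
  · rintro ⟨g, rfl⟩
    exact LinearMap.ext fun x => (hex i).apply_apply_eq_zero (g x)
  · have := hE i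
    refine (isSES_cycles hex i).covariant₁_of_exists_lift (fun f => ?_) .of_injective
    obtain ⟨g, hg⟩ := (h ((LinearMap.ker (E.d (i + 1))).subtype ∘ₗ f)).1
      (LinearMap.ext fun x => (f x).2)
    exact ⟨g, LinearMap.ext fun x => Subtype.ext (LinearMap.congr_fun hg x)⟩

theorem orthogonalToCycles_iff_liftsOn :
    E.OrthogonalToCycles D ↔ E.LiftsOn (⊤ : Submodule A D) ⊥ := by
  rw [orthogonalToCycles_iff_exact hE hex]
  refine forall_congr' fun i => ⟨fun h g hg _ => ?_, fun h g => ⟨fun hg => ?_, ?_⟩⟩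
  · obtain ⟨f, rfl⟩ := (h g).1 (LinearMap.ext fun x => hg x trivial)
    exact ⟨f, fun _ _ => rfl, by simp⟩
  · obtain ⟨f, hf, -⟩ := h g (fun x _ => LinearMap.congr_fun hg x) (by simp)
    exact ⟨f, LinearMap.ext fun x => hf x trivial⟩
  · rintro ⟨f, rfl⟩
    exact LinearMap.ext fun x => (hex i).apply_apply_eq_zero (f x)

end Characterizations

namespace OrthogonalToCycles

theorem of_isSES_right {f : X →ₗ[A] Y} {g : Y →ₗ[A] Z} (h : IsSES f g)
    (hE : ∀ i, Module.Injective A (E.P i)) (hex : E.IsExact) (hX : E.OrthogonalToCycles X)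
    (hY : E.OrthogonalToCycles Y) : E.OrthogonalToCycles Z := by
  intro i n
  obtain ⟨j, rfl⟩ : ∃ j, i = j + 1 := ⟨i - 1, by ring⟩
  have := hE j
  exact (isSES_cycles hex j).covariant₃ .of_injective (h.contravariant₃ (hX j n) (hY j (n + 1)))

theorem of_hasClassCoresolution {P : ModuleCat.{u} A → Prop}
    (hP : ∀ N : ModuleCat.{u} A, P N → E.OrthogonalToCycles N) {n : ℕ} {M : ModuleCat.{u} A}
    (h : HasClassCoresolution A P n M) : E.OrthogonalToCycles M := by
  induction n generalizing M with
  | zero => exact hP M h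
  | succ n ih =>
    obtain ⟨m, hm, hcoker⟩ := h
    exact fun i n => (isSES_mkQ_range m.inj).contravariant₁ (hP _ hm i n) (ih hcoker i (n + 1))

theorem of_hasClassResolution (hE : ∀ i, Module.Injective A (E.P i)) (hex : E.IsExact) {C : Type u}
    [AddCommGroup C] [Module A C] (hC : ∀ ι : Type u, E.OrthogonalToCycles (ι → C)) {r : ℕ}
    {Q : ModuleCat.{u} A} (h : HasClassResolution A (InProdClass A C) r Q) (ι : Type u) :
    E.OrthogonalToCycles (ι → Q) := by
  have hProd : ∀ P : ModuleCat.{u} A, InProdClass A C P → E.OrthogonalToCycles (ι → P) := by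
    rintro P ⟨κ, f, r, hr⟩ i n
    refine ((hC (ι × κ) i n).congr_left (LinearEquiv.curry A C ι κ)).retract_left
      (i := f.compLeft ι) (r := r.compLeft ι) ?_
    exact LinearMap.ext fun p => funext fun x => LinearMap.congr_fun hr (p x)
  induction r generalizing Q with
  | zero => exact hProd Q h
  | succ r ih =>
    obtain ⟨e, he, hker⟩ := h
    exact .of_isSES_right ((isSES_subtype_ker e.surj).compLeft ι) hE hex (ih hker) (hProd _ he)

end OrthogonalToCycles

end ZComplex

theorem ProdResolvesCogenerator.orthogonalToCycles {E : ZComplex A}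
    (hE : ∀ i, Module.Injective A (E.P i)) (hex : E.IsExact) {C I : Type u} [AddCommGroup C]
    [Module A C] [AddCommGroup I] [Module A I] [Module.Injective A I]
    (hcog : ProdResolvesCogenerator A C) (hC : ∀ ι : Type u, E.OrthogonalToCycles (ι → C)) :
    E.OrthogonalToCycles I := by
  obtain ⟨Q, r, ⟨-, hQ⟩, hr⟩ := hcog
  obtain ⟨ι, f, hf⟩ := hQ I
  obtain ⟨g, hg⟩ := Module.Injective.extension_property A _ _ _ f hf LinearMap.id
  have h := ZComplex.OrthogonalToCycles.of_hasClassResolution hE hex hC hr ι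
  exact fun i n => (h i n).retract_left hg

end CycleOrthogonality

/-! ## Modules of finite Gorenstein injective dimension lie in the Bass class -/

section FiniteGid

variable {R S : Type u} [Ring R] [Ring S]
  {C : Type u} [AddCommGroup C] [Module Rᵐᵒᵖ C] [Module S C] [SMulCommClass S Rᵐᵒᵖ C]
  {M B N : Type u} [AddCommGroup M] [Module Rᵐᵒᵖ M] [AddCommGroup B] [Module Rᵐᵒᵖ B]
  [AddCommGroup N] [Module Rᵐᵒᵖ N]

variable (S C) in
/-- Postcomposition `Hom(C, g) : Hom(C, B) → Hom(C, N)` as a map of right `S`-modules. -/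
def homPostcomp (g : B →ₗ[Rᵐᵒᵖ] N) : (C →ₗ[Rᵐᵒᵖ] B) →ₗ[Sᵐᵒᵖ] (C →ₗ[Rᵐᵒᵖ] N) where
  toFun f := g ∘ₗ f
  map_add' f f' := LinearMap.comp_add f f' g
  map_smul' _ _ := rfl

theorem MTensor.nuFun_comp_map_homPostcomp (g : B →ₗ[Rᵐᵒᵖ] N) :
    (nuFun S R C N).comp (map (homPostcomp S C g)) = g.toAddMonoidHom.comp (nuFun S R C B) :=
  hom_ext fun _ _ => rfl

/-- The cokernel of `Hom(C, g)` is annihilated by `- ⊗ C`. -/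
theorem exists_lift_of_bijective_nuFun
    (htf : ∀ (L : Type u) [AddCommGroup L] [Module Sᵐᵒᵖ L],
      Subsingleton (MTensor S L C) → Subsingleton L)
    {g : B →ₗ[Rᵐᵒᵖ] N} (hg : Surjective g) (hB : Surjective (MTensor.nuFun S R C B))
    (hN : Injective (MTensor.nuFun S R C N)) (φ : C →ₗ[Rᵐᵒᵖ] N) :
    ∃ ψ : C →ₗ[Rᵐᵒᵖ] B, g ∘ₗ ψ = φ := by
  let q := (LinearMap.range (homPostcomp S C g)).mkQ
  have hq : (MTensor.map (T := C) q).comp (MTensor.map (homPostcomp S C g)) = 0 := by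
    rw [← MTensor.map_comp, LinearMap.range_mkQ_comp, MTensor.map_zero']
  have hcoker := htf (_ ⧸ LinearMap.range (homPostcomp S C g)) <|
    MTensor.subsingleton_of_mk_eq_zero fun l c => by
      obtain ⟨f, rfl⟩ := Submodule.mkQ_surjective _ l
      obtain ⟨b, hb⟩ := hg (f c)
      obtain ⟨y, rfl⟩ := hB b
      have hy : MTensor.map (homPostcomp S C g) y = MTensor.mk f c :=
        hN ((DFunLike.congr_fun (MTensor.nuFun_comp_map_homPostcomp g) y).trans hb)
      calc MTensor.mk (q f) c = MTensor.map q (MTensor.map (homPostcomp S C g) y) := by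
            rw [hy, MTensor.map_mk]
        _ = 0 := DFunLike.congr_fun hq y
  exact (Submodule.Quotient.mk_eq_zero _).1 (Subsingleton.elim (q φ) 0)

namespace FinCoresolution

theorem orthogonalToCycles {A C : Type u} [Ring A] [AddCommGroup C] [Module A C]
    (K : FinCoresolution A C) {E : ZComplex A} (hE : ∀ i, Module.Injective A (E.P i))
    (hex : E.IsExact) (hC : E.OrthogonalToCycles C) (j : ℕ) : E.OrthogonalToCycles (K.X j) := by
  induction j with
  | zero =>
    have : Module.Projective A (K.X 0) := Module.Projective.of_equiv K.unit
    exact fun _ _ => .of_projective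
  | succ j ih => exact .of_isSES_right (K.ses j) hE hex ih fun i n => (hC i n).pi_left

variable (K : FinCoresolution Rᵐᵒᵖ C) (hEnd : Bijective (leftHomothety S R C))
include K hEnd

theorem inBassClass_of_isGorensteinInjective (hC : ∃ n, InjDimLE Rᵐᵒᵖ C n)
    (hM : IsGorensteinInjective Rᵐᵒᵖ M) : InBassClass S R C M := by
  obtain ⟨E, hE, hex, hI, ⟨e⟩⟩ := hM
  obtain ⟨n, hn⟩ := hC
  have hEC : E.OrthogonalToCycles C := .of_hasClassCoresolution
    (fun I hI' => (ZComplex.orthogonalToCycles_iff_exact hE hex).2 (hI I hI')) hn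
  exact (K.inBassClass_iff hEnd).2 ⟨fun n => (hEC 0 n).congr_right e.symm,
    fun j n => (K.orthogonalToCycles hE hex hEC j 0 n).congr_right e.symm⟩

theorem inBassClass_of_isSES_left {f : M →ₗ[Rᵐᵒᵖ] B} {g : B →ₗ[Rᵐᵒᵖ] N} (h : IsSES f g)
    (hl : ∀ φ : C →ₗ[Rᵐᵒᵖ] N, ∃ ψ : C →ₗ[Rᵐᵒᵖ] B, g ∘ₗ ψ = φ) (hB : InBassClass S R C B)
    (hN : InBassClass S R C N) : InBassClass S R C M := by
  obtain ⟨hCB, hXB⟩ := (K.inBassClass_iff hEnd).1 hB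
  obtain ⟨hCN, hXN⟩ := (K.inBassClass_iff hEnd).1 hN
  have hCM : ∀ n, ExtZero Rᵐᵒᵖ C M (n + 1)
    | 0 => h.covariant₁_of_exists_lift hl (hCB 0)
    | n + 1 => h.covariant₁ (hCN n) (hCB (n + 1))
  exact (K.inBassClass_iff hEnd).2 ⟨hCM, fun j n => (K.ses j).contravariant₁ (hCM n).pi_left
    (h.covariant₁ (hXN (j + 1) n) (hXB (j + 1) (n + 1)))⟩

theorem inBassClass_of_gidLE (htf : ∀ (L : Type u) [AddCommGroup L] [Module Sᵐᵒᵖ L],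
      Subsingleton (MTensor S L C) → Subsingleton L) (hC : ∃ n, InjDimLE Rᵐᵒᵖ C n) {n : ℕ}
    {M : ModuleCat.{u} Rᵐᵒᵖ}
    (h : HasClassCoresolution Rᵐᵒᵖ (fun E => IsGorensteinInjective Rᵐᵒᵖ E) n M) :
    InBassClass S R C M := by
  induction n generalizing M with
  | zero => exact K.inBassClass_of_isGorensteinInjective hEnd hC h
  | succ n ih =>
    obtain ⟨m, hE, hcoker⟩ := h
    have hE' := K.inBassClass_of_isGorensteinInjective hEnd hC hE
    exact K.inBassClass_of_isSES_left hEnd (isSES_mkQ_range m.inj) (exists_lift_of_bijective_nuFun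
      htf (Submodule.mkQ_surjective _) hE'.nuBij.2 (ih hcoker).nuBij.1) hE' (ih hcoker)

end FinCoresolution

end FiniteGid

/-! ## Injective dimension and cosyzygies -/

section Cosyzygies

open CategoryTheory

variable {A : Type u} [Ring A] {X Y Z : Type u} [AddCommGroup X] [Module A X] [AddCommGroup Y]
  [Module A Y] [AddCommGroup Z] [Module A Z]

theorem injective_prod [Module.Injective A X] [Module.Injective A Y] :
    Module.Injective A (X × Y) where
  out _ _ _ _ _ _ f hf g := by
    obtain ⟨h₁, e₁⟩ := Module.Injective.out f hf (LinearMap.fst A X Y ∘ₗ g)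
    obtain ⟨h₂, e₂⟩ := Module.Injective.out f hf (LinearMap.snd A X Y ∘ₗ g)
    exact ⟨h₁.prod h₂, fun x => Prod.ext (e₁ x) (e₂ x)⟩

theorem injective_of_forall_finite_extZero
    (h : ∀ (W : Type u) [AddCommGroup W] [Module A W] [Module.Finite A W], ExtZero A W X 1) :
    Module.Injective A X := by
  refine Module.Baer.injective fun J g => ?_
  obtain ⟨ψ, hψ⟩ := IsSES.exists_extend ⟨J.injective_subtype, J.mkQ_surjective,
    LinearMap.exact_subtype_mkQ J⟩ (h (A ⧸ J)) g
  exact ⟨ψ, fun x hx => LinearMap.congr_fun hψ ⟨x, hx⟩⟩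

theorem injective_finsupp [IsNoetherianRing A] (J : Type u) [Module.Injective A X] :
    Module.Injective A (J →₀ X) :=
  injective_of_forall_finite_extZero fun _ => ExtZero.of_injective.finsupp_right

theorem IsSES.finsupp {f : X →ₗ[A] Y} {g : Y →ₗ[A] Z} (h : IsSES f g) (J : Type*) :
    IsSES (Finsupp.mapRange.linearMap (α := J) f) (Finsupp.mapRange.linearMap (α := J) g) where
  inj := Finsupp.mapRange_injective _ (map_zero f) h.inj
  surj := Finsupp.mapRange_surjective _ (map_zero g) h.surj
  exact := by
    rw [LinearMap.exact_iff, Finsupp.ker_mapRange, Finsupp.range_mapRange_linearMap,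
      LinearMap.exact_iff.1 h.exact]
    exact LinearMap.ker_eq_bot.2 h.inj

theorem hasInjectiveDimensionLE_zero_iff :
    HasInjectiveDimensionLE (ModuleCat.of A X) 0 ↔ Module.Injective A X :=
  injective_iff_hasInjectiveDimensionLT_one.symm.trans
    (Module.injective_iff_injective_object A X).symm

theorem HasClassCoresolution.hasInjectiveDimensionLE_finsupp [IsNoetherianRing A] (J : Type u)
    {n : ℕ} {M : ModuleCat.{u} A}
    (h : HasClassCoresolution A (fun I => Module.Injective A I) n M) :
    HasInjectiveDimensionLE (ModuleCat.of A (J →₀ M)) n := by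
  induction n generalizing M with
  | zero =>
    have : Module.Injective A M := h
    exact hasInjectiveDimensionLE_zero_iff.2 (injective_finsupp J)
  | succ n ih =>
    obtain ⟨m, hE, hcoker⟩ := h
    have : Module.Injective A m.E := hE
    have := Module.injective_object_of_injective_module A (J →₀ m.E) (inj := injective_finsupp J)
    exact ((isSES_mkQ_range m.inj).finsupp J).shortExact.hasInjectiveDimensionLT_X₁ (n + 1)
      (ih hcoker) inferInstance

variable (A) in
/-- `N` is a cosyzygy of `M`: the cokernel of an embedding of `M` into an injective module. -/
def IsCosyzygy (M N : ModuleCat.{u} A) : Prop :=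
  ∃ (I : ModuleCat.{u} A) (f : M →ₗ[A] I) (g : I →ₗ[A] N), Module.Injective A I ∧ IsSES f g

theorem isCosyzygy_mkQ_range {M I : ModuleCat.{u} A} {f : M →ₗ[A] I} (hI : Module.Injective A I)
    (hf : Injective f) : IsCosyzygy A M (ModuleCat.of A (I ⧸ LinearMap.range f)) :=
  ⟨I, f, _, hI, isSES_mkQ_range hf⟩

theorem isCosyzygy_punit {I : ModuleCat.{u} A} (hI : Module.Injective A I) :
    IsCosyzygy A (ModuleCat.of A PUnit) I :=
  ⟨I, 0, LinearMap.id, hI, injective_of_subsingleton _, surjective_id, fun _ =>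
    ⟨fun h => ⟨0, h.symm⟩, fun ⟨_, h⟩ => h.symm⟩⟩

variable (A) in
/-- The class of `k`-fold cosyzygies of modules in the class `B`. -/
def CosyzygyClass (B : ModuleCat.{u} A → Prop) : ℕ → ModuleCat.{u} A → Prop
  | 0, M => B M
  | k + 1, M => ∃ N, CosyzygyClass B k N ∧ IsCosyzygy A N M

namespace CosyzygyClass

variable {B : ModuleCat.{u} A → Prop} {M N : ModuleCat.{u} A} {k : ℕ}

theorem of_injective (hB : ∀ I : ModuleCat.{u} A, Module.Injective A I → B I)
    (hM : Module.Injective A M) : CosyzygyClass A B k M := by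
  induction k generalizing M with
  | zero => exact hB M hM
  | succ k ih => exact ⟨_, ih ⟨fun _ _ _ _ _ _ _ _ _ => ⟨0, fun _ => rfl⟩⟩, isCosyzygy_punit hM⟩

theorem of_succ (hB : ∀ M N, B M → IsCosyzygy A M N → B N)
    (h : CosyzygyClass A B (k + 1) M) : CosyzygyClass A B k M := by
  induction k generalizing M with
  | zero => exact h.elim fun N hN => hB N M hN.1 hN.2
  | succ k ih => exact h.imp fun _ => And.imp_left ih

theorem mem (hB : ∀ M N, B M → IsCosyzygy A M N → B N) (h : CosyzygyClass A B k M) : B M := by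
  induction k with
  | zero => exact h
  | succ k ih => exact ih (h.of_succ hB)

theorem hasClassCoresolution (hB : ∀ I : ModuleCat.{u} A, Module.Injective A I → B I)
    {P : ModuleCat.{u} A → Prop} {j : ℕ} (hP : ∀ M, CosyzygyClass A B (k + j) M → P M)
    (hM : CosyzygyClass A B k M) : HasClassCoresolution A P j M := by
  induction j generalizing k M with
  | zero => exact hP M hM
  | succ j ih =>
    obtain ⟨I, f, hI, hf⟩ := exists_injective_embedding A M
    refine ⟨⟨I, f, hf⟩, hP I (of_injective hB hI), ih (k := k + 1) (fun N hN => hP N ?_)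
      ⟨M, hM, isCosyzygy_mkQ_range hI hf⟩⟩
    rwa [← add_assoc, add_right_comm]

end CosyzygyClass

/-- Every module in the class `B` is the quotient of a module of injective dimension at most `m`
by a submodule in `B`. -/
def HasInjDimPrecovers (B : ModuleCat.{u} A → Prop) (m : ℕ) : Prop :=
  ∀ G, B G → ∃ (N Y : ModuleCat.{u} A) (α : N →ₗ[A] Y) (β : Y →ₗ[A] G),
    B N ∧ HasInjectiveDimensionLE (ModuleCat.of A Y) m ∧ IsSES α β

namespace IsSES

variable {X' Y' Z' X'' Y'' Z'' : Type u} [AddCommGroup X'] [Module A X'] [AddCommGroup Y']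
  [Module A Y'] [AddCommGroup Z'] [Module A Z'] [AddCommGroup X''] [Module A X'']
  [AddCommGroup Y''] [Module A Y''] [AddCommGroup Z''] [Module A Z'']
  {f : X →ₗ[A] Y} {g : Y →ₗ[A] Z} {f' : X' →ₗ[A] Y'} {g' : Y' →ₗ[A] Z'}
  {a : X →ₗ[A] X'} {b : Y →ₗ[A] Y'} {c : Z →ₗ[A] Z'}
  {a' : X' →ₗ[A] X''} {b' : Y' →ₗ[A] Y''} {c' : Z' →ₗ[A] Z''}

theorem inl_snd : IsSES (LinearMap.inl A X Y) (LinearMap.snd A X Y) :=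
  ⟨LinearMap.inl_injective, LinearMap.snd_surjective, .inl_snd⟩

theorem injective_of_comm (h : IsSES f g) (ha : Injective a) (hc : Injective c)
    (hf' : Injective f') (hab : b ∘ₗ f = f' ∘ₗ a) (hbc : g' ∘ₗ b = c ∘ₗ g) : Injective b := by
  refine (injective_iff_map_eq_zero b).2 fun y hy => ?_
  have hgy : c (g y) = 0 := by
    rw [← LinearMap.comp_apply, ← hbc, LinearMap.comp_apply, hy, map_zero]
  obtain ⟨x, rfl⟩ := (h.exact y).1 ((map_eq_zero_iff c hc).1 hgy)
  have hx : f' (a x) = 0 := (LinearMap.congr_fun hab x).symm.trans hy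
  rw [(map_eq_zero_iff a ha).1 ((map_eq_zero_iff f' hf').1 hx), map_zero]

/-- The nine lemma. -/
theorem exists_isSES_coker (h : IsSES f g) (h' : IsSES f' g') (ha : IsSES a a') (hb : IsSES b b')
    (hc : IsSES c c') (hab : b ∘ₗ f = f' ∘ₗ a) (hbc : g' ∘ₗ b = c ∘ₗ g) :
    ∃ (f'' : X'' →ₗ[A] Y'') (g'' : Y'' →ₗ[A] Z''), IsSES f'' g'' := by
  obtain ⟨f'', hf''⟩ := exists_comp_eq_of_surjective ha.surj (f := b' ∘ₗ f') fun x' hx' => by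
    obtain ⟨x, rfl⟩ := (ha.exact x').1 hx'
    exact (congrArg b' (LinearMap.congr_fun hab x).symm).trans (hb.exact.apply_apply_eq_zero _)
  obtain ⟨g'', hg''⟩ := exists_comp_eq_of_surjective hb.surj (f := c' ∘ₗ g') fun y' hy' => by
    obtain ⟨y, rfl⟩ := (hb.exact y').1 hy'
    exact (congrArg c' (LinearMap.congr_fun hbc y)).trans (hc.exact.apply_apply_eq_zero _)
  replace hf'' : ∀ x', f'' (a' x') = b' (f' x') := LinearMap.congr_fun hf''
  replace hg'' : ∀ y', g'' (b' y') = c' (g' y') := LinearMap.congr_fun hg''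
  replace hab : ∀ x, b (f x) = f' (a x) := LinearMap.congr_fun hab
  replace hbc : ∀ y, g' (b y) = c (g y) := LinearMap.congr_fun hbc
  refine ⟨f'', g'', (injective_iff_map_eq_zero f'').2 fun x'' hx'' => ?_, ?_, fun y'' => ?_⟩
  · obtain ⟨x', rfl⟩ := ha.surj x''
    obtain ⟨y, hy⟩ := (hb.exact _).1 ((hf'' x').symm.trans hx'')
    have hgy : c (g y) = 0 := by rw [← hbc, hy, h'.exact.apply_apply_eq_zero]
    obtain ⟨x, rfl⟩ := (h.exact y).1 ((map_eq_zero_iff c hc.inj).1 hgy)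
    exact (ha.exact x').2 ⟨x, h'.inj ((hab x).symm.trans hy)⟩
  · exact .of_comp (g := b') ((funext hg'' : g'' ∘ b' = c' ∘ g') ▸ hc.surj.comp h'.surj)
  · obtain ⟨y', rfl⟩ := hb.surj y''
    constructor
    · intro hy'
      obtain ⟨z, hz⟩ := (hc.exact _).1 ((hg'' y').symm.trans hy')
      obtain ⟨y, rfl⟩ := h.surj z
      obtain ⟨x', hx'⟩ := (h'.exact (y' - b y)).1 (by rw [map_sub, hbc, hz, sub_self])
      exact ⟨a' x', by rw [hf'', hx', map_sub, hb.exact.apply_apply_eq_zero, sub_zero]⟩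
    · rintro ⟨x'', hx''⟩
      obtain ⟨x', rfl⟩ := ha.surj x''
      rw [← hx'', hf'', hg'', h'.exact.apply_apply_eq_zero, map_zero]

end IsSES

theorem HasInjDimPrecovers.cosyzygyClass_succ {B : ModuleCat.{u} A → Prop} {k m : ℕ}
    (h : HasInjDimPrecovers (CosyzygyClass A B k) (m + 1)) :
    HasInjDimPrecovers (CosyzygyClass A B (k + 1)) m := by
  rintro G ⟨G', hG', I, γ, δ, hI, hs⟩
  obtain ⟨N, Y, α, β, hN, hY, ht⟩ := h G' hG'
  obtain ⟨J, ι, hJ, hι⟩ := exists_injective_embedding A N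
  obtain ⟨ε, hε⟩ := Module.Injective.extension_property A _ _ _ α ht.inj ι
  let b : Y →ₗ[A] J × I := ε.prod (γ ∘ₗ β)
  have hab : b ∘ₗ α = LinearMap.inl A J I ∘ₗ ι := LinearMap.ext fun x =>
    Prod.ext (LinearMap.congr_fun hε x)
      ((congrArg γ (ht.exact.apply_apply_eq_zero x)).trans (map_zero γ))
  have hb : Injective b :=
    ht.injective_of_comm hι hs.inj LinearMap.inl_injective hab (LinearMap.snd_prod _ _)
  obtain ⟨α', β', h'⟩ := ht.exists_isSES_coker .inl_snd (isSES_mkQ_range hι) (isSES_mkQ_range hb)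
    hs hab (LinearMap.snd_prod _ _)
  have := Module.injective_object_of_injective_module A (J × I) (inj := injective_prod)
  exact ⟨ModuleCat.of A (J ⧸ LinearMap.range ι), ModuleCat.of A ((J × I) ⧸ LinearMap.range b),
    α', β', ⟨N, hN, isCosyzygy_mkQ_range hJ hι⟩,
    (isSES_mkQ_range hb).shortExact.hasInjectiveDimensionLT_X₃ (m + 1) inferInstance hY, h'⟩

theorem HasInjDimPrecovers.cosyzygyClass {B : ModuleCat.{u} A → Prop} {k m : ℕ}
    (h : HasInjDimPrecovers B (k + m)) : HasInjDimPrecovers (CosyzygyClass A B k) m := by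
  induction k generalizing m with
  | zero => rwa [zero_add] at h
  | succ k ih => exact (ih (by rwa [← add_assoc, add_right_comm])).cosyzygyClass_succ

end Cosyzygies

section Splicing

theorem exists_int_seq {α : Type*} {r : α → α → Prop} (hl : ∀ a, ∃ b, r b a)
    (hr : ∀ a, ∃ b, r a b) (a : α) : ∃ z : ℤ → α, z 0 = a ∧ ∀ i, r (z i) (z (i + 1)) := by
  choose prev hprev using hl
  choose next hnext using hr
  let z : ℤ → α
    | Int.ofNat n => next^[n] a
    | Int.negSucc n => prev^[n + 1] a
  refine ⟨z, rfl, ?_⟩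
  rintro (n | _ | n)
  · have hz : z (Int.ofNat n + 1) = next (z (Int.ofNat n)) := iterate_succ_apply' next n a
    exact hz ▸ hnext _
  · exact hprev a
  · have hz : z (Int.negSucc (n + 1)) = prev (z (Int.negSucc n)) :=
      iterate_succ_apply' prev (n + 1) a
    exact hz ▸ hprev _

namespace ZComplex

variable {A : Type u} [Ring A] {Z P : ℤ → ModuleCat.{u} A} {φ : ∀ i, Z i →ₗ[A] P i}
  {ψ : ∀ i, P i →ₗ[A] Z (i + 1)}

/-- The complex with differentials `P i → Z (i + 1) → P (i + 1)`. -/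
def splice (φ : ∀ i, Z i →ₗ[A] P i) (ψ : ∀ i, P i →ₗ[A] Z (i + 1)) : ZComplex A where
  P i := P i
  d i := φ (i + 1) ∘ₗ ψ i

variable (h : ∀ i, IsSES (φ i) (ψ i))
include h

theorem exact_splice_d (i : ℤ) : Exact (φ i) ((splice φ ψ).d i) :=
  (h i).exact.comp_injective _ (h (i + 1)).inj (map_zero (φ (i + 1)))

theorem isExact_splice : (splice φ ψ).IsExact := fun i x =>
  (exact_splice_d h (i + 1) x).trans ((h i).surj.exists)

theorem nonempty_linearEquiv_ker_splice (i : ℤ) :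
    Nonempty (Z i ≃ₗ[A] LinearMap.ker ((splice φ ψ).d i)) :=
  ⟨(LinearEquiv.ofInjective _ (h i).inj).trans
    (LinearEquiv.ofEq _ _ (LinearMap.exact_iff.1 (exact_splice_d h i)).symm)⟩

end ZComplex

theorem exists_zComplex_of_isCosyzygy {A : Type u} [Ring A] {G : ModuleCat.{u} A → Prop}
    (hprev : ∀ M, G M → ∃ N, G N ∧ IsCosyzygy A N M)
    (hnext : ∀ M, G M → ∃ N, G N ∧ IsCosyzygy A M N) {M : ModuleCat.{u} A} (hM : G M) :
    ∃ E : ZComplex A, (∀ i, Module.Injective A (E.P i)) ∧ E.IsExact ∧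
      (∀ i, ∃ N : ModuleCat.{u} A, G N ∧ Nonempty (N ≃ₗ[A] LinearMap.ker (E.d i))) ∧
      Nonempty (M ≃ₗ[A] LinearMap.ker (E.d 0)) := by
  obtain ⟨Z, hZ, hZ'⟩ := exists_int_seq (α := Subtype G) (r := fun N N' => IsCosyzygy A N N')
    (fun N => (hprev N N.2).elim fun N' h => ⟨⟨N', h.1⟩, h.2⟩)
    (fun N => (hnext N N.2).elim fun N' h => ⟨⟨N', h.1⟩, h.2⟩) ⟨M, hM⟩
  choose P φ ψ hP hφψ using hZ'
  have hker := ZComplex.nonempty_linearEquiv_ker_splice hφψ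
  obtain rfl : (Z 0).1 = M := congrArg Subtype.val hZ
  exact ⟨.splice φ ψ, hP, ZComplex.isExact_splice hφψ, fun i => ⟨Z i, (Z i).2, hker i⟩, hker 0⟩

end Splicing

/-! ## Modules in the Bass class have finite Gorenstein injective dimension -/

section FiniteGidOfBass

section Criterion

variable {A : Type u} [Ring A] {C : Type u} [AddCommGroup C] [Module A C] [Module.Finite A C]

theorem ZComplex.isGorensteinInjective {E : ZComplex A} (hE : ∀ i, Module.Injective A (E.P i))
    (hex : E.IsExact) (hpre : HasFinitePowerPreenvelopes A C) (hcog : ProdResolvesCogenerator A C)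
    (hC : ∀ i, ExtZero A C (LinearMap.ker (E.d i)) 1) {M : Type u} [AddCommGroup M] [Module A M]
    (e : M ≃ₗ[A] LinearMap.ker (E.d 0)) : IsGorensteinInjective A M := by
  have hfin : ∀ k : ℕ, E.OrthogonalToCycles (Fin k → C) := fun _ i n =>
    ((orthogonalToCycles_iff_extZero_one hE hex).2 hC i n).pi_left
  have hpi : ∀ ι : Type u, E.OrthogonalToCycles (ι → C) := fun ι =>
    (orthogonalToCycles_iff_liftsOn hE hex).2 <| liftsOn_of_factorsThroughFinitePowers hE hex
      (fun k => (orthogonalToCycles_iff_liftsOn hE hex).1 (hfin k)) (hpre.factorsThrough_pi ι)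
  exact ⟨E, hE, hex, fun I _ _ _ => (orthogonalToCycles_iff_exact hE hex).1
    (hcog.orthogonalToCycles hE hex hpi), ⟨e⟩⟩

theorem CosyzygyClass.isGorensteinInjective {B : ModuleCat.{u} A → Prop} {n : ℕ}
    (hpre : HasFinitePowerPreenvelopes A C) (hcog : ProdResolvesCogenerator A C)
    (hB : ∀ M N, B M → IsCosyzygy A M N → B N) (hBC : ∀ M, B M → ExtZero A C M 1)
    (hcover : HasInjDimPrecovers B n) {M : ModuleCat.{u} A} (hM : CosyzygyClass A B n M) :
    IsGorensteinInjective A M := by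
  have hprev : ∀ N, CosyzygyClass A B n N → ∃ N', CosyzygyClass A B n N' ∧ IsCosyzygy A N' N := by
    intro N hN
    obtain ⟨N', Y, α, β, hN', hY, hs⟩ := hcover.cosyzygyClass (m := 0) N hN
    exact ⟨N', hN', Y, α, β, hasInjectiveDimensionLE_zero_iff.1 hY, hs⟩
  have hnext : ∀ N, CosyzygyClass A B n N → ∃ N', CosyzygyClass A B n N' ∧ IsCosyzygy A N N' := by
    intro N hN
    obtain ⟨I, f, hI, hf⟩ := exists_injective_embedding A N
    have hcosyzygy := isCosyzygy_mkQ_range hI hf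
    exact ⟨_, of_succ hB ⟨N, hN, hcosyzygy⟩, hcosyzygy⟩
  obtain ⟨E, hE, hex, hcycles, ⟨e⟩⟩ := exists_zComplex_of_isCosyzygy hprev hnext hM
  refine E.isGorensteinInjective hE hex hpre hcog (fun i => ?_) e
  obtain ⟨N, hN, ⟨e'⟩⟩ := hcycles i
  exact (hBC N (hN.mem hB)).congr_right e'

end Criterion

variable {R S : Type u} [Ring R] [Ring S]
  {C : Type u} [AddCommGroup C] [Module Rᵐᵒᵖ C] [Module S C] [SMulCommClass S Rᵐᵒᵖ C]

theorem exists_surjective_finsupp_of_nuFun {M : Type u} [AddCommGroup M] [Module Rᵐᵒᵖ M]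
    (hM : Surjective (MTensor.nuFun S R C M)) :
    ∃ p : ((C →ₗ[Rᵐᵒᵖ] M) →₀ C) →ₗ[Rᵐᵒᵖ] M, Surjective p ∧
      ∀ f : C →ₗ[Rᵐᵒᵖ] M, p ∘ₗ Finsupp.lsingle f = f := by
  let p : ((C →ₗ[Rᵐᵒᵖ] M) →₀ C) →ₗ[Rᵐᵒᵖ] M := Finsupp.lsum ℕ id
  have hp : ∀ f : C →ₗ[Rᵐᵒᵖ] M, p ∘ₗ Finsupp.lsingle f = f := fun f =>
    LinearMap.ext fun c => Finsupp.lsum_single ℕ (id : (C →ₗ[Rᵐᵒᵖ] M) → C →ₗ[Rᵐᵒᵖ] M) f c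
  refine ⟨p, LinearMap.range_eq_top.1 (eq_top_iff.2 fun x _ => ?_), hp⟩
  obtain ⟨z, rfl⟩ := hM x
  induction z using MTensor.induction_on with
  | zero => exact map_zero (MTensor.nuFun S R C M) ▸ zero_mem _
  | mk f c => exact ⟨Finsupp.single f c, LinearMap.congr_fun (hp f) c⟩
  | add y z hy hz =>
    rw [map_add]
    exact add_mem (hy trivial) (hz trivial)

namespace FinCoresolution

theorem finite {A C : Type u} [Ring A] [AddCommGroup C] [Module A C] [Module.Finite A C]
    (K : FinCoresolution A C) : ∀ j, Module.Finite A (K.X j)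
  | 0 => .equiv K.unit
  | j + 1 => .of_surjective (K.π j) (K.ses j).surj

variable (K : FinCoresolution Rᵐᵒᵖ C) (hEnd : Bijective (leftHomothety S R C))
include K hEnd

theorem inBassClass_of_isCosyzygy {M N : ModuleCat.{u} Rᵐᵒᵖ} (hM : InBassClass S R C M)
    (h : IsCosyzygy Rᵐᵒᵖ M N) : InBassClass S R C N := by
  obtain ⟨I, f, g, _, hs⟩ := h
  obtain ⟨hC, hX⟩ := (K.inBassClass_iff hEnd).1 hM
  exact (K.inBassClass_iff hEnd).2 ⟨fun n => hs.covariant₃ .of_injective (hC (n + 1)),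
    fun j n => hs.covariant₃ .of_injective (hX j (n + 1))⟩

variable [IsNoetherianRing Rᵐᵒᵖ] [Module.Finite Rᵐᵒᵖ C]

theorem hasInjDimPrecovers_inBassClass (hC : ∀ n, ExtZero Rᵐᵒᵖ C C (n + 1)) {n : ℕ}
    (hn : InjDimLE Rᵐᵒᵖ C n) :
    HasInjDimPrecovers (fun M : ModuleCat.{u} Rᵐᵒᵖ => InBassClass S R C M) n := by
  intro M hM
  obtain ⟨p, hp, hlift⟩ := exists_surjective_finsupp_of_nuFun hM.nuBij.2
  have hsum : InBassClass S R C ((C →ₗ[Rᵐᵒᵖ] M) →₀ C) := by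
    have := K.finite
    exact (K.inBassClass_iff hEnd).2 ⟨fun n => (hC n).finsupp_right,
      fun j n => (K.perp j n).finsupp_right⟩
  have hs := isSES_subtype_ker hp
  exact ⟨ModuleCat.of _ (LinearMap.ker p), ModuleCat.of _ _, _, p,
    K.inBassClass_of_isSES_left hEnd hs (fun f => ⟨_, hlift f⟩) hsum hM,
    hn.hasInjectiveDimensionLE_finsupp _, hs⟩

theorem gidLE_of_inBassClass (hpre : HasFinitePowerPreenvelopes Rᵐᵒᵖ C)
    (hcog : ProdResolvesCogenerator Rᵐᵒᵖ C) (hC : ∀ n, ExtZero Rᵐᵒᵖ C C (n + 1)) {n : ℕ}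
    (hn : InjDimLE Rᵐᵒᵖ C n) {M : Type u} [AddCommGroup M] [Module Rᵐᵒᵖ M]
    (hM : InBassClass S R C M) : GidLE Rᵐᵒᵖ M n := by
  let B : ModuleCat.{u} Rᵐᵒᵖ → Prop := fun M => InBassClass S R C M
  have hinj : ∀ I : ModuleCat.{u} Rᵐᵒᵖ, Module.Injective Rᵐᵒᵖ I → B I := fun I _ =>
    (K.inBassClass_iff hEnd).2 ⟨fun _ => .of_injective, fun _ _ => .of_injective⟩
  refine CosyzygyClass.hasClassCoresolution (B := B) (k := 0) hinj (fun N hN => ?_) hM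
  rw [zero_add] at hN
  exact hN.isGorensteinInjective hpre hcog (fun _ _ => K.inBassClass_of_isCosyzygy hEnd)
    (fun _ hN => ((K.inBassClass_iff hEnd).1 hN).1 0) (K.hasInjDimPrecovers_inBassClass hEnd hC hn)

end FinCoresolution

end FiniteGidOfBass

theorem IsRightNoetherianRing.isNoetherianRing_op {R : Type u} [Ring R]
    (h : IsRightNoetherianRing R) : IsNoetherianRing Rᵐᵒᵖ :=
  have : IsNoetherian Rᵐᵒᵖ R := ⟨h⟩
  isNoetherian_of_linearEquiv
    ({ opAddEquiv with map_smul' := fun _ _ => rfl } : R ≃ₗ[Rᵐᵒᵖ] Rᵐᵒᵖ)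

theorem IsCotilting.extVanishAll_self {R : Type u} [Ring R] {C : Type u} [AddCommGroup C]
    [Module Rᵐᵒᵖ C] (h : IsCotilting R C) : ExtVanishAll Rᵐᵒᵖ C C :=
  extVanishAll_iff.2 fun n => (extVanishAll_iff.1 (h.extProdVanish PUnit) n).congr_left
    (LinearEquiv.funUnique PUnit Rᵐᵒᵖ C)

theorem cotilting_bass_iff_finite_Gid_general
    (R S : Type u) [Ring R] [Ring S]
    (C : Type u) [AddCommGroup C] [Module Rᵐᵒᵖ C] [Module S C] [SMulCommClass S Rᵐᵒᵖ C]
    (hEnd : Function.Bijective (leftHomothety S R C))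
    (hRnoeth : IsRightNoetherianRing R) (hScoh : IsLeftCoherentRing S)
    (hCfgR : Module.Finite Rᵐᵒᵖ C) (hCfgS : Module.Finite S C)
    (hCinj : ∃ n, InjDimLE Rᵐᵒᵖ C n) (hCext : ExtVanishAll Rᵐᵒᵖ C C)
    (hCcog : ProdResolvesCogenerator Rᵐᵒᵖ C) (htf : IsTensorlyFaithful S R C)
    (M : Type u) [AddCommGroup M] [Module Rᵐᵒᵖ M] :
    InBassClass S R C M ↔ ∃ n, GidLE Rᵐᵒᵖ M n := by
  have := hRnoeth.isNoetherianRing_op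
  have hExt := extVanishAll_iff.1 hCext
  have hpre : HasFinitePowerPreenvelopes Rᵐᵒᵖ C := hasFinitePowerPreenvelopes hEnd hScoh
    fun L _ _ => subsingleton_of_hom_eq_zero htf.1
  obtain ⟨K⟩ := nonempty_finCoresolution hpre hExt hCcog
  exact ⟨fun hM => hCinj.imp fun n hn => K.gidLE_of_inBassClass hEnd hpre hCcog hExt hn hM,
    fun ⟨_, hM⟩ => K.inBassClass_of_gidLE hEnd htf.2 hCinj hM⟩

/-- Let `R` be a right Noetherian ring, `C` a finitely generated tensorly
faithful cotilting right `R`-module and `S = End(C_R)`. Assume `S` is left coherent and `C`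
is finitely generated as a left `S`-module. Then for a right `R`-module `M` we have
`M ∈ ℬ_C(R)` iff `Gid(M) < ∞`. -/
theorem cotilting_bass_iff_finite_Gid
    (R S : Type u) [Ring R] [Ring S]
    (C : Type u) [AddCommGroup C] [Module Rᵐᵒᵖ C] [Module S C] [SMulCommClass S Rᵐᵒᵖ C]
    (hEnd : Function.Bijective (leftHomothety S R C))
    (hRnoeth : IsRightNoetherianRing R) (hScoh : IsLeftCoherentRing S)
    (hCfgR : Module.Finite Rᵐᵒᵖ C) (hCfgS : Module.Finite S C)
    (hcot : IsCotilting R C) (htf : IsTensorlyFaithful S R C)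
    (M : Type u) [AddCommGroup M] [Module Rᵐᵒᵖ M] :
    InBassClass S R C M ↔ ∃ n, GidLE Rᵐᵒᵖ M n := by
  exact cotilting_bass_iff_finite_Gid_general R S C hEnd hRnoeth hScoh hCfgR hCfgS hcot.finInjDim
    hcot.extVanishAll_self hcot.coresolution htf M
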